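/- Fix an integer p ≥ 2. Let η_{p,n} = max over σ ∈ {−1,1}^n of n^{−(p+1)/2} · Σ_{1 ≤ i₁ < i₂ < ⋯ < i_p ≤ n} J_{i₁,…,i_p}·σ_{i₁}·σ_{i₂}⋯σ_{i_p}, where the J_{i₁,…,i_p} are i.i.d. standard Gaussian random variables. Then there exists a constant η_{p,OPT} ∈ ℝ such that η_{p,n} converges to η_{p,OPT} in probability as n → ∞ (the Parisi formula identifies this constant as inf over Parisi functionals; in particular the ground-state value of the p-spin glass has a deterministic limit). -/

import Mathlib

open MeasureTheory ProbabilityTheory Filter Topology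

/-- The coupling tensor of the `p`-spin glass on `n` sites: one i.i.d. standard
Gaussian entry `J S` for each set `S` of `p` indices `1 ≤ i₁ < ⋯ < i_p ≤ n`. -/
noncomputable def pSpinMeasure (n p : ℕ) :
    Measure ({S : Finset (Fin n) // S.card = p} → ℝ) :=
  Measure.pi fun _ => gaussianReal 0 1

/-- The normalized `p`-spin Hamiltonian
`n^{-(p+1)/2} Σ_{i₁<⋯<i_p} J_{i₁…i_p} σ_{i₁} ⋯ σ_{i_p}`, where the spin
configuration is encoded by `σ : Fin n → Bool` (`true ↦ +1`, `false ↦ -1`). -/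
noncomputable def pSpinValue (n p : ℕ) (J : {S : Finset (Fin n) // S.card = p} → ℝ)
    (σ : Fin n → Bool) : ℝ :=
  (n : ℝ) ^ (-(((p : ℝ) + 1) / 2)) *
    ∑ S : {S : Finset (Fin n) // S.card = p},
      J S * ∏ i ∈ S.1, (if σ i then (1 : ℝ) else -1)

/-- The ground-state value `η_{p,n} = max_{σ ∈ {-1,1}^n}` of the normalized
`p`-spin Hamiltonian. -/
noncomputable def groundStateValue (n p : ℕ)
    (J : {S : Finset (Fin n) // S.card = p} → ℝ) : ℝ :=
  Finset.univ.sup' Finset.univ_nonempty (pSpinValue n p J)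

/-!
The mean ground state is almost superadditive. Guerra–Toninelli interpolation, at inverse
temperature `β`, between the whole system and independent blocks changes the free energy by the
average of a difference of covariances. Convexity of `x ^ p` on `[0, ∞)` gives that difference the
right sign up to a multiple of the negative parts of the block overlaps. A Gaussian perturbation of
each block, averaged over its parameters, forces approximate Ghirlanda–Guerra identities along the
whole interpolation, and these make the overlaps asymptotically nonnegative (Talagrand's positivity
principle). The entropy and the perturbation cost only `O(1 / β)` in the ground state, so the means
converge as the block size and then `β` grow. Tensorization of the variance bounds the fluctuations
by `1 / n`.
-/

namespace PSpin

/-! ### Product measures and the standard Gaussian vector -/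

section ProductMeasure

variable {ι κ X : Type*} [Fintype ι] [Fintype κ] [MeasurableSpace X]
  (μ : Measure X) [IsProbabilityMeasure μ]

theorem measurePreserving_pi_comp_of_injective {e : κ → ι} (he : Function.Injective e) :
    MeasurePreserving (fun (x : ι → X) k => x (e k)) (Measure.pi fun _ => μ)
      (Measure.pi fun _ => μ) where
  measurable := by fun_prop
  map_eq := by
    have hindep := (iIndepFun_pi (μ := fun _ : ι => μ) (X := fun _ x => x)
      fun _ => aemeasurable_id).precomp he
    rw [(iIndepFun_iff_map_fun_eq_pi_map fun k => (measurable_pi_apply (e k)).aemeasurable).1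
      hindep]
    exact congrArg Measure.pi
      (funext fun k => (measurePreserving_eval (fun _ : ι => μ) (e k)).map_eq)

theorem measurePreserving_piecewise (s : Set ι) [DecidablePred (· ∈ s)] :
    MeasurePreserving (fun q : (ι → X) × (ι → X) => s.piecewise q.1 q.2)
      ((Measure.pi fun _ => μ).prod (Measure.pi fun _ => μ)) (Measure.pi fun _ => μ) := by
  have he : Function.Injective fun i : ι => if i ∈ s then Sum.inl i else (Sum.inr i : ι ⊕ ι) := by
    intro i j h
    by_cases hi : i ∈ s <;> by_cases hj : j ∈ s <;> simp_all
  convert (measurePreserving_pi_comp_of_injective μ he).comp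
    (measurePreserving_sumPiEquivProdPi_symm fun _ : ι ⊕ ι => μ) using 1
  ext q i
  by_cases hi : i ∈ s <;> simp [hi, MeasurableEquiv.coe_sumPiEquivProdPi_symm]

theorem integral_eq_integral_integral_piecewise (s : Set ι) [DecidablePred (· ∈ s)]
    {F : (ι → X) → ℝ} (hF : Integrable F (Measure.pi fun _ => μ)) :
    ∫ x, F x ∂(Measure.pi fun _ => μ) =
      ∫ y, ∫ x, F (s.piecewise x y) ∂(Measure.pi fun _ => μ) ∂(Measure.pi fun _ => μ) := by
  have h := measurePreserving_piecewise (X := X) μ s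
  conv_lhs => rw [← h.map_eq]
  exact (integral_map h.measurable.aemeasurable (h.map_eq.symm ▸ hF.aestronglyMeasurable)).trans
    (integral_prod_symm _ (h.integrable_comp_of_integrable hF))

theorem integral_le_of_forall_integral_piecewise_le (s : Set ι) [DecidablePred (· ∈ s)]
    {F : (ι → X) → ℝ} (hF : Integrable F (Measure.pi fun _ => μ)) {C : ℝ}
    (h : ∀ y, ∫ x, F (s.piecewise x y) ∂(Measure.pi fun _ => μ) ≤ C) :
    ∫ x, F x ∂(Measure.pi fun _ => μ) ≤ C := by
  rw [integral_eq_integral_integral_piecewise μ s hF]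
  refine (integral_mono ?_ (integrable_const C) h).trans_eq (by simp)
  exact ((measurePreserving_piecewise μ s).integrable_comp_of_integrable hF).integral_prod_right

end ProductMeasure

/-- The law of a standard Gaussian vector indexed by `ι`. -/
noncomputable abbrev stdNormal (ι : Type*) [Fintype ι] : Measure (ι → ℝ) :=
  Measure.pi fun _ => gaussianReal 0 1

section Stein

theorem hasDerivAt_gaussianPDFReal_zero_one (x : ℝ) :
    HasDerivAt (gaussianPDFReal 0 1) (-x * gaussianPDFReal 0 1 x) x := by
  simp only [gaussianPDFReal_def]
  have hexponent : HasDerivAt (fun x : ℝ => -(x - 0) ^ 2 / (2 * ((1 : NNReal) : ℝ))) (-x) x :=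
    ((((hasDerivAt_id x).sub_const 0).pow 2).neg.div_const (2 * ((1 : NNReal) : ℝ))).congr_deriv
      (by simp; ring)
  exact (hexponent.exp.const_mul _).congr_deriv (by ring)

theorem integrable_mul_gaussianPDFReal_zero_one :
    Integrable fun x => x * gaussianPDFReal 0 1 x := by
  have h := (memLp_id_gaussianReal (μ := 0) (v := 1) 1).integrable (by simp)
  rw [gaussianReal_of_var_ne_zero _ one_ne_zero,
    integrable_withDensity_iff_integrable_smul₀' (by fun_prop) (by simp [gaussianPDF_lt_top])] at h
  exact h.congr (ae_of_all _ fun x => by simp [toReal_gaussianPDF, mul_comm])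

theorem integral_mul_gaussianReal {f f' : ℝ → ℝ} {C : ℝ} (hf : ∀ x, HasDerivAt f (f' x) x)
    (hf'm : Measurable f') (hC : ∀ x, |f x| ≤ C) (hC' : ∀ x, |f' x| ≤ C) :
    ∫ x, x * f x ∂(gaussianReal 0 1) = ∫ x, f' x ∂(gaussianReal 0 1) := by
  have hcont : Continuous f := continuous_iff_continuousAt.2 fun x => (hf x).continuousAt
  have hpdf : Integrable (gaussianPDFReal 0 1) := integrable_gaussianPDFReal 0 1
  have hparts := integral_mul_deriv_eq_deriv_mul_of_integrable
    (fun x _ => hf x) (fun x _ => hasDerivAt_gaussianPDFReal_zero_one x)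
    ((integrable_mul_gaussianPDFReal_zero_one.neg.congr
      (ae_of_all _ fun x => (neg_mul x _).symm)).bdd_mul hcont.aestronglyMeasurable
        (ae_of_all _ hC))
    (hpdf.bdd_mul hf'm.aestronglyMeasurable (ae_of_all _ hC'))
    (hpdf.bdd_mul hcont.aestronglyMeasurable (ae_of_all _ hC))
  rw [integral_gaussianReal_eq_integral_smul one_ne_zero,
    integral_gaussianReal_eq_integral_smul one_ne_zero]
  calc ∫ x, gaussianPDFReal 0 1 x • (x * f x)
      = -∫ x, f x * (-x * gaussianPDFReal 0 1 x) := by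
        rw [← integral_neg]
        exact integral_congr_ae (ae_of_all _ fun x => by simp only [smul_eq_mul]; ring)
    _ = ∫ x, f' x * gaussianPDFReal 0 1 x := by rw [hparts, neg_neg]
    _ = ∫ x, gaussianPDFReal 0 1 x • f' x := by simp only [smul_eq_mul, mul_comm]

variable {ι : Type*} [Fintype ι]

theorem memLp_coord (i : ι) : MemLp (fun g : ι → ℝ => g i) 2 (stdNormal ι) :=
  (memLp_id_gaussianReal (μ := 0) (v := 1) 2).comp_measurePreserving
    (measurePreserving_eval (fun _ : ι => gaussianReal 0 1) i)

theorem integrable_coord (i : ι) : Integrable (fun g : ι → ℝ => g i) (stdNormal ι) :=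
  (memLp_coord i).integrable one_le_two

theorem integral_coord (i : ι) : ∫ g : ι → ℝ, g i ∂(stdNormal ι) = 0 :=
  (integral_comp_eval (μ := fun _ : ι => gaussianReal 0 1) (i := i) (f := fun x : ℝ => x)
    (by fun_prop)).trans integral_id_gaussianReal

theorem integral_coord_mul [DecidableEq ι] (i : ι) {F F' : (ι → ℝ) → ℝ} {C : ℝ}
    (hF : ∀ g u, HasDerivAt (fun u => F (Function.update g i u)) (F' (Function.update g i u)) u)
    (hm : Measurable F) (hm' : Measurable F') (hC : ∀ x, |F x| ≤ C) (hC' : ∀ x, |F' x| ≤ C) :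
    ∫ g, g i * F g ∂(stdNormal ι) = ∫ g, F' g ∂(stdNormal ι) := by
  have hI : Integrable (fun g : ι → ℝ => g i * F g) (stdNormal ι) :=
    (integrable_coord i).mul_bdd (c := C) hm.aestronglyMeasurable (ae_of_all _ hC)
  have hI' : Integrable F' (stdNormal ι) :=
    Integrable.of_bound hm'.aestronglyMeasurable C (ae_of_all _ hC')
  rw [integral_eq_integral_integral_piecewise _ {i} hI,
    integral_eq_integral_integral_piecewise _ {i} hI']
  refine integral_congr_ae (ae_of_all _ fun h => ?_)
  simp only [Set.piecewise_singleton, Function.update_self]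
  have hupdate : Measurable (Function.update h i) := measurable_update h
  rw [integral_comp_eval (μ := fun _ : ι => gaussianReal 0 1) (i := i)
      (f := fun x : ℝ => x * F (Function.update h i x))
      (measurable_id.mul (hm.comp hupdate)).aestronglyMeasurable,
    integral_comp_eval (μ := fun _ : ι => gaussianReal 0 1) (i := i)
      (f := fun x : ℝ => F' (Function.update h i x)) (hm'.comp hupdate).aestronglyMeasurable]
  exact integral_mul_gaussianReal (hF h) (hm'.comp hupdate) (fun x => hC _) fun x => hC' _

end Stein

/-! ### Variance of Lipschitz functions of independent variables -/

section Variance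

theorem variance_prod_eq {α β : Type*} [MeasurableSpace α] [MeasurableSpace β] {μ : Measure α}
    {ν : Measure β} [IsProbabilityMeasure μ] [IsProbabilityMeasure ν] {F : α × β → ℝ}
    (hF : MemLp F 2 (μ.prod ν)) (hx : ∀ y, MemLp (fun x => F (x, y)) 2 μ)
    (hmean : MemLp (fun y => ∫ x, F (x, y) ∂μ) 2 ν) :
    Var[F; μ.prod ν] =
      ∫ y, Var[fun x => F (x, y); μ] ∂ν + Var[fun y => ∫ x, F (x, y) ∂μ; ν] := by
  have hsq := hF.integrable_sq
  rw [variance_eq_sub hF, variance_eq_sub hmean, integral_prod_symm _ (hF.integrable one_le_two)]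
  have hsec : ∫ y, Var[fun x => F (x, y); μ] ∂ν
      = ∫ y, ∫ x, F (x, y) ^ 2 ∂μ ∂ν - ∫ y, (∫ x, F (x, y) ∂μ) ^ 2 ∂ν := by
    rw [← integral_sub hsq.integral_prod_right hmean.integrable_sq]
    exact integral_congr_ae (ae_of_all _ fun y => variance_eq_sub (hx y))
  have htotal : ∫ q, (F ^ 2) q ∂(μ.prod ν) = ∫ y, ∫ x, F (x, y) ^ 2 ∂μ ∂ν :=
    integral_prod_symm _ hsq
  rw [hsec, htotal]
  simp only [Pi.pow_apply]
  ring

/-- `F` is Lipschitz in each coordinate, with constant `c i` in the `i`-th one, the increments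
being added up. -/
def CoordLipschitz {ι : Type*} [Fintype ι] (c : ι → ℝ) (F : (ι → ℝ) → ℝ) : Prop :=
  ∀ g g', |F g - F g'| ≤ ∑ i, c i * |g i - g' i|

variable {ι : Type*} [Fintype ι] {c : ι → ℝ} {F : (ι → ℝ) → ℝ}

theorem CoordLipschitz.continuous (h : CoordLipschitz c F) : Continuous F := by
  refine (LipschitzWith.of_dist_le_mul (K := ∑ i, ‖c i‖₊) fun g g' => ?_).continuous
  rw [Real.dist_eq, NNReal.coe_sum, Finset.sum_mul]
  refine (h g g').trans (Finset.sum_le_sum fun i _ => ?_)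
  exact mul_le_mul (Real.le_norm_self _) (dist_le_pi_dist g g' i) (abs_nonneg _) (norm_nonneg _)

theorem CoordLipschitz.abs_le (h : CoordLipschitz c F) (g : ι → ℝ) :
    |F g| ≤ |F 0| + ∑ i, c i * |g i| := by
  have := h g 0
  simp only [Pi.zero_apply, sub_zero] at this
  linarith [abs_sub_abs_le_abs_sub (F g) (F 0)]

theorem CoordLipschitz.memLp_pi (h : CoordLipschitz c F) {μ : ι → Measure ℝ}
    [∀ i, IsProbabilityMeasure (μ i)] (hμ : ∀ i, MemLp id 2 (μ i)) : MemLp F 2 (Measure.pi μ) := by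
  have hcoord (i : ι) : MemLp (fun g : ι → ℝ => c i * |g i|) 2 (Measure.pi μ) :=
    ((hμ i).comp_measurePreserving (measurePreserving_eval μ i)).norm.const_mul (c i)
  exact ((memLp_const |F 0|).add (memLp_finsetSum Finset.univ fun i _ => hcoord i)).mono'
    h.continuous.aestronglyMeasurable (ae_of_all _ h.abs_le)

theorem memLp_of_lipschitzWith {f : ℝ → ℝ} {K : NNReal} (hf : LipschitzWith K f)
    {μ : Measure ℝ} [IsFiniteMeasure μ] {p : ENNReal} (hμ : MemLp id p μ) : MemLp f p μ := by
  have hshift : LipschitzWith K fun x => f x - f 0 :=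
    LipschitzWith.of_dist_le_mul fun x y => by simpa [Real.dist_eq] using hf.dist_le_mul x y
  convert (hshift.comp_memLp (sub_self _) hμ).add (memLp_const (f 0)) using 1
  ext x
  simp

theorem variance_le_of_lipschitzWith {f : ℝ → ℝ} {K : NNReal} (hf : LipschitzWith K f)
    {μ : Measure ℝ} [IsProbabilityMeasure μ] (hμ : MemLp id 2 μ) :
    Var[f; μ] ≤ K ^ 2 * Var[id; μ] := by
  set m := ∫ x, x ∂μ
  have hsub : MemLp (fun x => x - m) 2 μ := hμ.sub (memLp_const m)
  have hbound (x : ℝ) : ‖f x - f m‖ ≤ ‖K * (x - m)‖ := by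
    simpa [Real.dist_eq, abs_mul] using hf.dist_le_mul x m
  have hfm : MemLp (fun x => f x - f m) 2 μ :=
    (memLp_of_lipschitzWith hf hμ).sub (memLp_const (f m))
  calc Var[f; μ] = Var[fun x => f x - f m; μ] :=
        (variance_sub_const hf.continuous.aestronglyMeasurable _).symm
    _ ≤ ∫ x, (f x - f m) ^ 2 ∂μ := variance_le_expectation_sq hfm.aestronglyMeasurable
    _ ≤ ∫ x, K ^ 2 * (x - m) ^ 2 ∂μ :=
        integral_mono hfm.integrable_sq (hsub.integrable_sq.const_mul _) fun x => by
          simpa only [mul_pow] using sq_le_sq.2 (hbound x)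
    _ = K ^ 2 * Var[id; μ] := by
        rw [integral_const_mul, variance_eq_integral hμ.aemeasurable]
        rfl

theorem CoordLipschitz.lipschitzWith_cons {n : ℕ} {c : Fin (n + 1) → ℝ}
    {F : (Fin (n + 1) → ℝ) → ℝ} (h : CoordLipschitz c F) (y : Fin n → ℝ) :
    LipschitzWith ‖c 0‖₊ fun x => F (Fin.cons x y) :=
  LipschitzWith.of_dist_le_mul fun x x' => by
    have := h (Fin.cons x y) (Fin.cons x' y)
    simp only [Fin.sum_univ_succ, Fin.cons_zero, Fin.cons_succ, sub_self, abs_zero, mul_zero,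
      Finset.sum_const_zero, add_zero] at this
    exact this.trans (mul_le_mul_of_nonneg_right (Real.le_norm_self _) (abs_nonneg _))

theorem CoordLipschitz.integral_cons {n : ℕ} {c : Fin (n + 1) → ℝ} {F : (Fin (n + 1) → ℝ) → ℝ}
    (h : CoordLipschitz c F) {μ : Measure ℝ} [IsProbabilityMeasure μ]
    (h_int : ∀ y, Integrable (fun x => F (Fin.cons x y)) μ) :
    CoordLipschitz (fun i => c i.succ) fun y => ∫ x, F (Fin.cons x y) ∂μ := by
  intro y y'
  have hbound (x : ℝ) : ‖F (Fin.cons x y) - F (Fin.cons x y')‖ ≤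
      ∑ i : Fin n, c i.succ * |y i - y' i| := by
    simpa [Fin.sum_univ_succ] using h (Fin.cons x y) (Fin.cons x y')
  rw [← integral_sub (h_int y) (h_int y')]
  exact (norm_integral_le_of_norm_le_const (ae_of_all μ hbound)).trans_eq
    (by rw [probReal_univ, mul_one])

theorem CoordLipschitz.variance_fin_le {μ : Measure ℝ} [IsProbabilityMeasure μ]
    (hμ : MemLp id 2 μ) {n : ℕ} {c : Fin n → ℝ} {F : (Fin n → ℝ) → ℝ}
    (h : CoordLipschitz c F) : Var[F; Measure.pi fun _ => μ] ≤ (∑ i, c i ^ 2) * Var[id; μ] := by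
  induction n with
  | zero =>
    have : F = fun _ => F 0 := funext fun g => congrArg F (Subsingleton.elim _ _)
    rw [this, variance_eq_integral aemeasurable_const]
    simp
  | succ n ih =>
    have hmp := (measurePreserving_piFinSuccAbove (fun _ : Fin (n + 1) => μ) 0).symm
    have hcons : (fun q : ℝ × (Fin n → ℝ) => F ((MeasurableEquiv.piFinSuccAbove
        (fun _ : Fin (n + 1) => ℝ) 0).symm q)) = fun q => F (Fin.cons q.1 q.2) :=
      funext fun q => congrArg F (Fin.insertNth_zero' _ _)
    have hprod : MemLp (fun q : ℝ × (Fin n → ℝ) => F (Fin.cons q.1 q.2)) 2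
        (μ.prod (Measure.pi fun _ => μ)) :=
      hcons ▸ (h.memLp_pi fun _ => hμ).comp_measurePreserving hmp
    have hsection (y : Fin n → ℝ) : MemLp (fun x => F (Fin.cons x y)) 2 μ :=
      memLp_of_lipschitzWith (h.lipschitzWith_cons y) hμ
    have hmean := h.integral_cons fun y => (hsection y).integrable one_le_two
    rw [← hmp.variance_fun_comp h.continuous.aemeasurable, hcons,
      variance_prod_eq hprod hsection (hmean.memLp_pi fun _ => hμ), Fin.sum_univ_succ, add_mul]
    refine add_le_add ?_ (ih hmean)
    refine (integral_mono_of_nonneg (ae_of_all _ fun y => variance_nonneg _ _)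
      (integrable_const _) (ae_of_all _ fun y =>
        variance_le_of_lipschitzWith (h.lipschitzWith_cons y) hμ)).trans_eq ?_
    simp

theorem CoordLipschitz.variance_le {μ : Measure ℝ} [IsProbabilityMeasure μ]
    (hμ : MemLp id 2 μ) (h : CoordLipschitz c F) :
    Var[F; Measure.pi fun _ => μ] ≤ (∑ i, c i ^ 2) * Var[id; μ] := by
  let e := Fintype.equivFin ι
  have hmp := measurePreserving_pi_comp_of_injective μ e.injective
  have hreindexed : CoordLipschitz (c ∘ e.symm) fun g => F (g ∘ e) := fun g g' => by
    simpa [← e.symm.sum_comp] using h (g ∘ e) (g' ∘ e)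
  calc Var[F; Measure.pi fun _ => μ] = Var[fun g => F (g ∘ e); Measure.pi fun _ => μ] :=
        (hmp.variance_fun_comp h.continuous.aemeasurable).symm
    _ ≤ (∑ i, (c ∘ e.symm) i ^ 2) * Var[id; μ] := hreindexed.variance_fin_le hμ
    _ = (∑ i, c i ^ 2) * Var[id; μ] := by simp [← e.symm.sum_comp]

theorem CoordLipschitz.memLp (h : CoordLipschitz c F) : MemLp F 2 (stdNormal ι) :=
  h.memLp_pi fun _ => memLp_id_gaussianReal (μ := 0) (v := 1) 2

theorem CoordLipschitz.integrable (h : CoordLipschitz c F) : Integrable F (stdNormal ι) :=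
  h.memLp.integrable one_le_two

theorem CoordLipschitz.variance_stdNormal_le (h : CoordLipschitz c F) :
    Var[F; stdNormal ι] ≤ ∑ i, c i ^ 2 := by
  simpa using h.variance_le (memLp_id_gaussianReal (μ := 0) (v := 1) 2)

theorem integral_abs_sub_integral_le_sqrt_variance {Ω : Type*} [MeasurableSpace Ω]
    {μ : Measure Ω} [IsProbabilityMeasure μ] {X : Ω → ℝ} (hX : MemLp X 2 μ) :
    ∫ ω, |X ω - ∫ ω', X ω' ∂μ| ∂μ ≤ √Var[X; μ] := by
  set Y : Ω → ℝ := fun ω => |X ω - ∫ ω', X ω' ∂μ|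
  have hY : MemLp Y 2 μ := (hX.sub (memLp_const _)).norm
  refine Real.le_sqrt_of_sq_le ?_
  have hvar := variance_nonneg Y μ
  rw [variance_eq_sub hY] at hvar
  rw [variance_eq_integral hX.aemeasurable]
  simpa only [Y, Pi.pow_apply, sq_abs, sub_nonneg] using hvar

theorem CoordLipschitz.integral_abs_sub_integral_le (h : CoordLipschitz c F) :
    ∫ g, |F g - ∫ g', F g' ∂(stdNormal ι)| ∂(stdNormal ι) ≤ √(∑ i, c i ^ 2) :=
  (integral_abs_sub_integral_le_sqrt_variance h.memLp).trans
    (Real.sqrt_le_sqrt h.variance_stdNormal_le)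

end Variance

/-! ### Finite Gibbs measures -/

section Gibbs

variable {S : Type*} [Fintype S]

/-- The free energy (log partition function) of the energy `E`. -/
noncomputable def freeEnergy (E : S → ℝ) : ℝ := Real.log (∑ σ, Real.exp (E σ))

/-- The Gibbs probability of `σ`, proportional to `exp (E σ)`. -/
noncomputable def gibbsWeight (E : S → ℝ) (σ : S) : ℝ := Real.exp (E σ - freeEnergy E)

/-- The Gibbs average of the observable `X`. -/
noncomputable def gibbsAvg (E X : S → ℝ) : ℝ := ∑ σ, gibbsWeight E σ * X σ

/-- The Gibbs average of `k` over two independent replicas. -/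
noncomputable def pairAvg (E : S → ℝ) (k : S → S → ℝ) : ℝ :=
  gibbsAvg E fun σ => gibbsAvg E (k σ)

theorem gibbsWeight_nonneg (E : S → ℝ) (σ : S) : 0 ≤ gibbsWeight E σ := (Real.exp_pos _).le

theorem gibbsAvg_add (E X Y : S → ℝ) :
    gibbsAvg E (fun σ => X σ + Y σ) = gibbsAvg E X + gibbsAvg E Y := by
  simp only [gibbsAvg, mul_add, Finset.sum_add_distrib]

theorem gibbsAvg_sub (E X Y : S → ℝ) :
    gibbsAvg E (fun σ => X σ - Y σ) = gibbsAvg E X - gibbsAvg E Y := by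
  simp only [gibbsAvg, mul_sub, Finset.sum_sub_distrib]

theorem gibbsAvg_const_mul (E : S → ℝ) (v : ℝ) (X : S → ℝ) :
    gibbsAvg E (fun σ => v * X σ) = v * gibbsAvg E X := by
  simp only [gibbsAvg, Finset.mul_sum, mul_left_comm]

theorem gibbsAvg_sum {κ : Type*} (s : Finset κ) (E : S → ℝ) (X : κ → S → ℝ) :
    gibbsAvg E (fun σ => ∑ j ∈ s, X j σ) = ∑ j ∈ s, gibbsAvg E (X j) := by
  simp only [gibbsAvg, Finset.mul_sum]
  exact Finset.sum_comm

theorem gibbsAvg_mono (E : S → ℝ) {X Y : S → ℝ} (h : ∀ σ, X σ ≤ Y σ) :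
    gibbsAvg E X ≤ gibbsAvg E Y :=
  Finset.sum_le_sum fun σ _ => mul_le_mul_of_nonneg_left (h σ) (gibbsWeight_nonneg E σ)

theorem abs_gibbsAvg_le_gibbsAvg_abs (E X : S → ℝ) :
    |gibbsAvg E X| ≤ gibbsAvg E fun σ => |X σ| := by
  refine (Finset.abs_sum_le_sum_abs _ _).trans_eq (Finset.sum_congr rfl fun σ _ => ?_)
  rw [abs_mul, abs_of_nonneg (gibbsWeight_nonneg E σ)]

variable [Nonempty S]

theorem sum_exp_pos (E : S → ℝ) : 0 < ∑ σ, Real.exp (E σ) :=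
  Finset.sum_pos (fun _ _ => Real.exp_pos _) Finset.univ_nonempty

theorem exp_freeEnergy (E : S → ℝ) : Real.exp (freeEnergy E) = ∑ σ, Real.exp (E σ) :=
  Real.exp_log (sum_exp_pos E)

theorem sum_gibbsWeight (E : S → ℝ) : ∑ σ, gibbsWeight E σ = 1 := by
  simp only [gibbsWeight, Real.exp_sub, exp_freeEnergy]
  rw [← Finset.sum_div, div_self (sum_exp_pos E).ne']

theorem gibbsAvg_const (E : S → ℝ) (v : ℝ) : gibbsAvg E (fun _ => v) = v := by
  rw [gibbsAvg, ← Finset.sum_mul, sum_gibbsWeight, one_mul]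

theorem gibbsWeight_le_one (E : S → ℝ) (σ : S) : gibbsWeight E σ ≤ 1 :=
  (Finset.single_le_sum (fun ρ _ => gibbsWeight_nonneg E ρ) (Finset.mem_univ σ)).trans_eq
    (sum_gibbsWeight E)

theorem abs_gibbsAvg_le (E : S → ℝ) {X : S → ℝ} {C : ℝ} (h : ∀ σ, |X σ| ≤ C) :
    |gibbsAvg E X| ≤ C :=
  (abs_gibbsAvg_le_gibbsAvg_abs E X).trans ((gibbsAvg_mono E h).trans_eq (gibbsAvg_const E C))

theorem le_freeEnergy (E : S → ℝ) (σ : S) : E σ ≤ freeEnergy E := by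
  simpa [gibbsWeight] using gibbsWeight_le_one E σ

theorem freeEnergy_le_add {E E' : S → ℝ} {δ : ℝ} (h : ∀ σ, E σ ≤ E' σ + δ) :
    freeEnergy E ≤ freeEnergy E' + δ := by
  rw [← Real.exp_le_exp, Real.exp_add, exp_freeEnergy, exp_freeEnergy, Finset.sum_mul]
  refine Finset.sum_le_sum fun σ _ => ?_
  rw [← Real.exp_add]
  exact Real.exp_le_exp.2 (h σ)

theorem abs_freeEnergy_sub_le {E E' : S → ℝ} {δ : ℝ} (h : ∀ σ, |E σ - E' σ| ≤ δ) :
    |freeEnergy E - freeEnergy E'| ≤ δ := by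
  have h₁ := freeEnergy_le_add (E := E) (E' := E') fun σ => by linarith [(abs_le.1 (h σ)).2]
  have h₂ := freeEnergy_le_add (E := E') (E' := E) fun σ => by linarith [(abs_le.1 (h σ)).1]
  exact abs_le.2 ⟨by linarith, by linarith⟩

theorem freeEnergy_add (E X : S → ℝ) :
    freeEnergy (fun σ => E σ + X σ) =
      freeEnergy E + Real.log (gibbsAvg E fun σ => Real.exp (X σ)) := by
  have hratio : gibbsAvg E (fun σ => Real.exp (X σ)) =
      (∑ σ, Real.exp (E σ + X σ)) / ∑ σ, Real.exp (E σ) := by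
    simp only [gibbsAvg, gibbsWeight, Real.exp_sub, Real.exp_add, exp_freeEnergy,
      Finset.sum_div, div_mul_eq_mul_div]
  rw [hratio, Real.log_div (sum_exp_pos fun σ => E σ + X σ).ne' (sum_exp_pos E).ne']
  simp only [freeEnergy]
  ring

theorem exp_gibbsAvg_le (E X : S → ℝ) :
    Real.exp (gibbsAvg E X) ≤ gibbsAvg E fun σ => Real.exp (X σ) :=
  convexOn_exp.map_sum_le (fun σ _ => gibbsWeight_nonneg E σ) (sum_gibbsWeight E)
    fun _ _ => Set.mem_univ _

theorem gibbsAvg_le_log (E X : S → ℝ) :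
    gibbsAvg E X ≤ Real.log (gibbsAvg E fun σ => Real.exp (X σ)) :=
  (Real.le_log_iff_exp_le ((Real.exp_pos _).trans_le (exp_gibbsAvg_le E X))).2
    (exp_gibbsAvg_le E X)

theorem freeEnergy_add_gibbsAvg_le (E X : S → ℝ) :
    freeEnergy E + gibbsAvg E X ≤ freeEnergy fun σ => E σ + X σ := by
  rw [freeEnergy_add]
  exact add_le_add_right (gibbsAvg_le_log E X) _

theorem hasDerivAt_freeEnergy {E : ℝ → S → ℝ} {a : S → ℝ} {u : ℝ}
    (h : ∀ σ, HasDerivAt (fun u => E u σ) (a σ) u) :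
    HasDerivAt (fun u => freeEnergy (E u)) (gibbsAvg (E u) a) u := by
  refine ((HasDerivAt.fun_sum fun σ (_ : σ ∈ Finset.univ) => (h σ).exp).log
    (sum_exp_pos (E u)).ne').congr_deriv ?_
  simp only [gibbsAvg, gibbsWeight, Real.exp_sub, exp_freeEnergy, Finset.sum_div,
    div_mul_eq_mul_div]

theorem hasDerivAt_gibbsAvg {E : ℝ → S → ℝ} {a : S → ℝ} {u : ℝ}
    (h : ∀ σ, HasDerivAt (fun u => E u σ) (a σ) u) (X : S → ℝ) :
    HasDerivAt (fun u => gibbsAvg (E u) X) (pairAvg (E u) fun σ ρ => X σ * (a σ - a ρ)) u := by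
  refine (HasDerivAt.fun_sum fun σ (_ : σ ∈ Finset.univ) =>
    ((h σ).sub (hasDerivAt_freeEnergy h)).exp.mul_const (X σ)).congr_deriv ?_
  refine Finset.sum_congr rfl fun σ _ => ?_
  simp only [gibbsAvg_const_mul, gibbsAvg_sub, gibbsAvg_const]
  simp only [gibbsWeight, Pi.sub_apply]
  ring

end Gibbs

/-! ### Replicas -/

section Replicas

variable {S : Type*} [Fintype S]

theorem sum_fin_succ_fun {M : Type*} [AddCommMonoid M] {n : ℕ} (F : (Fin (n + 1) → S) → M) :
    ∑ τ, F τ = ∑ ρ, ∑ τ : Fin n → S, F (Fin.cons ρ τ) := by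
  rw [← (Fin.consEquiv fun _ : Fin (n + 1) => S).sum_comp, Fintype.sum_prod_type]
  rfl

/-- The energy of `n` independent copies of a system; its Gibbs measure is the `n`-fold product
of the Gibbs measure of `E`. -/
def replicate (n : ℕ) (E : S → ℝ) (τ : Fin n → S) : ℝ := ∑ l, E (τ l)

theorem freeEnergy_replicate (n : ℕ) (E : S → ℝ) :
    freeEnergy (replicate n E) = n * freeEnergy E := by
  classical
  simp only [freeEnergy, replicate, Real.exp_sum]
  rw [← Fintype.prod_sum fun (_ : Fin n) σ => Real.exp (E σ), Finset.prod_const, Finset.card_univ,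
    Fintype.card_fin, Real.log_pow]

theorem gibbsWeight_replicate (n : ℕ) (E : S → ℝ) (τ : Fin n → S) :
    gibbsWeight (replicate n E) τ = ∏ l, gibbsWeight E (τ l) := by
  simp only [gibbsWeight]
  rw [← Real.exp_sum, Finset.sum_sub_distrib, freeEnergy_replicate]
  simp [replicate]

theorem gibbsWeight_replicate_cons (n : ℕ) (E : S → ℝ) (ρ : S) (τ : Fin n → S) :
    gibbsWeight (replicate (n + 1) E) (Fin.cons ρ τ : Fin (n + 1) → S) =
      gibbsWeight E ρ * gibbsWeight (replicate n E) τ := by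
  simp only [gibbsWeight_replicate, Fin.prod_univ_succ, Fin.cons_zero, Fin.cons_succ]

theorem gibbsAvg_replicate_succ (n : ℕ) (E : S → ℝ) (F : (Fin (n + 1) → S) → ℝ) :
    gibbsAvg (replicate (n + 1) E) F =
      gibbsAvg E fun ρ => gibbsAvg (replicate n E) fun τ => F (Fin.cons ρ τ) := by
  simp only [gibbsAvg, sum_fin_succ_fun, gibbsWeight_replicate_cons, Finset.mul_sum, mul_assoc]

variable [Nonempty S]

theorem gibbsAvg_replicate_apply {n : ℕ} (E : S → ℝ) (l : Fin n) (X : S → ℝ) :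
    gibbsAvg (replicate n E) (fun τ => X (τ l)) = gibbsAvg E X := by
  induction n with
  | zero => exact l.elim0
  | succ n ih =>
    rw [gibbsAvg_replicate_succ]
    cases l using Fin.cases with
    | zero => simp only [Fin.cons_zero, gibbsAvg_const]
    | succ l => simp only [Fin.cons_succ, ih l, gibbsAvg_const]

theorem gibbsAvg_replicate_two (E : S → ℝ) (k : S → S → ℝ) :
    gibbsAvg (replicate 2 E) (fun τ => k (τ 0) (τ 1)) = pairAvg E k := by
  rw [gibbsAvg_replicate_succ]
  exact congrArg (gibbsAvg E) (funext fun ρ => gibbsAvg_replicate_apply E (0 : Fin 1) (k ρ))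

end Replicas

/-! ### Gaussian energies -/

section GaussianEnergy

variable {S : Type*} {ι : Type*} [Fintype ι]

/-- The random energy with deterministic part `c` and Gaussian part `∑ i, a i σ * g i`. -/
noncomputable def gaussianEnergy (c : S → ℝ) (a : ι → S → ℝ) (g : ι → ℝ) (σ : S) : ℝ :=
  c σ + ∑ i, a i σ * g i

theorem continuous_gaussianEnergy (c : S → ℝ) (a : ι → S → ℝ) (σ : S) :
    Continuous fun g => gaussianEnergy c a g σ := by
  unfold gaussianEnergy
  fun_prop

theorem gaussianEnergy_add (c : S → ℝ) (a b : ι → S → ℝ) (g : ι → ℝ) (σ : S) :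
    gaussianEnergy c (fun i σ => a i σ + b i σ) g σ =
      gaussianEnergy c a g σ + ∑ i, b i σ * g i := by
  simp only [gaussianEnergy, add_mul, Finset.sum_add_distrib, add_assoc]

theorem replicate_gaussianEnergy (n : ℕ) (c : S → ℝ) (a : ι → S → ℝ) (g : ι → ℝ) :
    replicate n (gaussianEnergy c a g) =
      gaussianEnergy (replicate n c) (fun i => replicate n (a i)) g := by
  funext τ
  simp only [replicate, gaussianEnergy, Finset.sum_add_distrib, Finset.sum_mul]
  rw [Finset.sum_comm]

theorem hasDerivAt_gaussianEnergy_update [DecidableEq ι] (c : S → ℝ) (a : ι → S → ℝ) (g : ι → ℝ)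
    (i : ι) (u : ℝ) (σ : S) :
    HasDerivAt (fun u => gaussianEnergy c a (Function.update g i u) σ) (a i σ) u := by
  have hcoord (j : ι) : HasDerivAt (fun u => a j σ * Function.update g i u j)
      (a j σ * (Pi.single i 1 : ι → ℝ) j) u :=
    (hasDerivAt_pi.1 (hasDerivAt_update g i u) j).const_mul _
  refine ((HasDerivAt.fun_sum fun j (_ : j ∈ Finset.univ) => hcoord j).const_add
    (c σ)).congr_deriv ?_
  simp [Pi.single_apply]

theorem integrable_linear (b : ι → ℝ) :
    Integrable (fun g : ι → ℝ => ∑ i, b i * g i) (stdNormal ι) :=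
  integrable_finsetSum _ fun i _ => (integrable_coord i).const_mul _

variable [Fintype S]

/-- The expectation of the free energy of a Gaussian energy. -/
noncomputable def meanFreeEnergy (c : S → ℝ) (a : ι → S → ℝ) : ℝ :=
  ∫ g, freeEnergy (gaussianEnergy c a g) ∂(stdNormal ι)

/-- The disorder average of the two-replica Gibbs average of `k`. -/
noncomputable def quenchedPairAvg (c : S → ℝ) (a : ι → S → ℝ) (k : S → S → ℝ) : ℝ :=
  ∫ g, pairAvg (gaussianEnergy c a g) k ∂(stdNormal ι)

theorem quenchedPairAvg_const_mul (c : S → ℝ) (a : ι → S → ℝ) (v : ℝ) (k : S → S → ℝ) :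
    quenchedPairAvg c a (fun σ ρ => v * k σ ρ) = v * quenchedPairAvg c a k := by
  simp only [quenchedPairAvg, pairAvg, gibbsAvg_const_mul, integral_const_mul]

variable [Nonempty S]

theorem continuous_freeEnergy (c : S → ℝ) (a : ι → S → ℝ) :
    Continuous fun g => freeEnergy (gaussianEnergy c a g) :=
  (continuous_finsetSum _ fun σ _ => (continuous_gaussianEnergy c a σ).rexp).log
    fun _ => (sum_exp_pos _).ne'

theorem continuous_gibbsAvg (c : S → ℝ) (a : ι → S → ℝ) {X : (ι → ℝ) → S → ℝ}
    (hX : ∀ σ, Continuous fun g => X g σ) :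
    Continuous fun g => gibbsAvg (gaussianEnergy c a g) (X g) :=
  continuous_finsetSum _ fun σ _ =>
    ((continuous_gaussianEnergy c a σ).sub (continuous_freeEnergy c a)).rexp.mul (hX σ)

theorem continuous_pairAvg (c : S → ℝ) (a : ι → S → ℝ) (k : S → S → ℝ) :
    Continuous fun g => pairAvg (gaussianEnergy c a g) k :=
  continuous_gibbsAvg c a fun _ => continuous_gibbsAvg c a fun _ => continuous_const

theorem coordLipschitz_freeEnergy (c : S → ℝ) {a : ι → S → ℝ} {C : ι → ℝ}
    (h : ∀ i σ, |a i σ| ≤ C i) : CoordLipschitz C fun g => freeEnergy (gaussianEnergy c a g) := by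
  intro g g'
  refine abs_freeEnergy_sub_le fun σ => ?_
  have hdiff : gaussianEnergy c a g σ - gaussianEnergy c a g' σ
      = ∑ i, a i σ * (g i - g' i) := by
    simp only [gaussianEnergy, mul_sub, Finset.sum_sub_distrib]
    ring
  rw [hdiff]
  refine (Finset.abs_sum_le_sum_abs _ _).trans (Finset.sum_le_sum fun i _ => ?_)
  rw [abs_mul]
  exact mul_le_mul_of_nonneg_right (h i σ) (abs_nonneg _)

theorem integrable_freeEnergy (c : S → ℝ) (a : ι → S → ℝ) :
    Integrable (fun g => freeEnergy (gaussianEnergy c a g)) (stdNormal ι) :=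
  (coordLipschitz_freeEnergy c (C := fun i => ∑ σ, |a i σ|) fun i σ =>
    Finset.single_le_sum (f := fun σ => |a i σ|) (fun _ _ => abs_nonneg _)
      (Finset.mem_univ σ)).integrable

theorem integrable_gibbsAvg (c : S → ℝ) (a : ι → S → ℝ) {X : (ι → ℝ) → S → ℝ}
    (hX : ∀ σ, Integrable (fun g => X g σ) (stdNormal ι)) :
    Integrable (fun g => gibbsAvg (gaussianEnergy c a g) (X g)) (stdNormal ι) :=
  integrable_finsetSum _ fun σ _ => (hX σ).bdd_mul (c := 1)
    ((continuous_gaussianEnergy c a σ).sub (continuous_freeEnergy c a)).rexp.aestronglyMeasurable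
    (ae_of_all _ fun g => by
      rw [Real.norm_eq_abs]
      exact (abs_of_nonneg (gibbsWeight_nonneg (gaussianEnergy c a g) σ)).trans_le <|
        gibbsWeight_le_one (gaussianEnergy c a g) σ)

theorem integrable_pairAvg (c : S → ℝ) (a : ι → S → ℝ) (k : S → S → ℝ) :
    Integrable (fun g => pairAvg (gaussianEnergy c a g) k) (stdNormal ι) :=
  integrable_gibbsAvg c a fun _ => integrable_gibbsAvg c a fun _ => integrable_const _

theorem quenchedPairAvg_mono (c : S → ℝ) (a : ι → S → ℝ) {k k' : S → S → ℝ}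
    (h : ∀ σ ρ, k σ ρ ≤ k' σ ρ) : quenchedPairAvg c a k ≤ quenchedPairAvg c a k' :=
  integral_mono (integrable_pairAvg c a k) (integrable_pairAvg c a k') fun _ =>
    gibbsAvg_mono _ fun σ => gibbsAvg_mono _ (h σ)

theorem quenchedPairAvg_const (c : S → ℝ) (a : ι → S → ℝ) (v : ℝ) :
    quenchedPairAvg c a (fun _ _ => v) = v := by
  simp only [quenchedPairAvg, pairAvg, gibbsAvg_const, integral_const, probReal_univ, one_smul]

theorem quenchedPairAvg_add (c : S → ℝ) (a : ι → S → ℝ) (k k' : S → S → ℝ) :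
    quenchedPairAvg c a (fun σ ρ => k σ ρ + k' σ ρ) =
      quenchedPairAvg c a k + quenchedPairAvg c a k' := by
  simp only [quenchedPairAvg]
  rw [← integral_add (integrable_pairAvg c a k) (integrable_pairAvg c a k')]
  simp only [pairAvg, gibbsAvg_add]

theorem quenchedPairAvg_sum {κ : Type*} (s : Finset κ) (c : S → ℝ) (a : ι → S → ℝ)
    (k : κ → S → S → ℝ) :
    quenchedPairAvg c a (fun σ ρ => ∑ j ∈ s, k j σ ρ) = ∑ j ∈ s, quenchedPairAvg c a (k j) := by
  simp only [quenchedPairAvg, pairAvg, gibbsAvg_sum]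
  exact integral_finsetSum _ fun j _ => integrable_pairAvg c a (k j)

theorem integral_coord_mul_gibbsAvg (c : S → ℝ) (a : ι → S → ℝ) (X : S → ℝ) (i : ι) :
    ∫ g, g i * gibbsAvg (gaussianEnergy c a g) X ∂(stdNormal ι) =
      quenchedPairAvg c a fun σ ρ => X σ * (a i σ - a i ρ) := by
  classical
  obtain ⟨C, hC⟩ := (Set.finite_range fun σ => |X σ|).bddAbove
  obtain ⟨C', hC'⟩ := (Set.finite_range fun q : S × S => |X q.1 * (a i q.1 - a i q.2)|).bddAbove
  refine integral_coord_mul i (C := max C C')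
    (fun g u => hasDerivAt_gibbsAvg (hasDerivAt_gaussianEnergy_update c a g i u) X)
    (continuous_gibbsAvg c a (X := fun _ => X) fun _ => continuous_const).measurable
    (continuous_pairAvg c a _).measurable (fun g => ?_) fun g => ?_
  · exact abs_gibbsAvg_le _ fun σ => (hC (Set.mem_range_self σ)).trans (le_max_left _ _)
  · exact abs_gibbsAvg_le _ fun σ => abs_gibbsAvg_le _ fun ρ =>
      (hC' (Set.mem_range_self (σ, ρ))).trans (le_max_right _ _)

theorem integral_gibbsAvg_mul_linear (c : S → ℝ) (a b : ι → S → ℝ) (f : S → ℝ) :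
    ∫ g, gibbsAvg (gaussianEnergy c a g) (fun σ => f σ * ∑ i, b i σ * g i) ∂(stdNormal ι) =
      quenchedPairAvg c a fun σ ρ => f σ * ∑ i, b i σ * (a i σ - a i ρ) := by
  have hexpand (g : ι → ℝ) :
      gibbsAvg (gaussianEnergy c a g) (fun σ => f σ * ∑ i, b i σ * g i) =
        ∑ i, g i * gibbsAvg (gaussianEnergy c a g) fun σ => f σ * b i σ := by
    simp only [← gibbsAvg_const_mul, ← gibbsAvg_sum, Finset.mul_sum]
    exact congrArg _ (funext fun σ => Finset.sum_congr rfl fun i _ => by ring)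
  have h_int (i : ι) : Integrable (fun g : ι → ℝ =>
      g i * gibbsAvg (gaussianEnergy c a g) fun σ => f σ * b i σ) (stdNormal ι) := by
    simp only [← gibbsAvg_const_mul]
    exact integrable_gibbsAvg c a fun σ => (integrable_coord i).mul_const _
  simp only [hexpand]
  rw [integral_finsetSum _ fun i _ => h_int i]
  simp only [integral_coord_mul_gibbsAvg, ← quenchedPairAvg_sum, Finset.mul_sum, mul_assoc]

theorem integral_gibbsAvg_linear (c : S → ℝ) (a b : ι → S → ℝ) :
    ∫ g, gibbsAvg (gaussianEnergy c a g) (fun σ => ∑ i, b i σ * g i) ∂(stdNormal ι) =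
      quenchedPairAvg c a fun σ ρ => ∑ i, b i σ * (a i σ - a i ρ) := by
  simpa only [one_mul] using integral_gibbsAvg_mul_linear c a b fun _ => 1

theorem meanFreeEnergy_add_le (c : S → ℝ) (a b : ι → S → ℝ) :
    meanFreeEnergy c a +
        ∫ g, gibbsAvg (gaussianEnergy c a g) (fun σ => ∑ i, b i σ * g i) ∂(stdNormal ι) ≤
      meanFreeEnergy c fun i σ => a i σ + b i σ := by
  have h_int := integrable_gibbsAvg c a fun σ => integrable_linear fun i => b i σ
  unfold meanFreeEnergy
  rw [← integral_add (integrable_freeEnergy c a) h_int]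
  refine integral_mono ((integrable_freeEnergy c a).add h_int) (integrable_freeEnergy c _)
    fun g => ?_
  simp only [funext (gaussianEnergy_add c a b g)]
  exact freeEnergy_add_gibbsAvg_le _ _

end GaussianEnergy

/-! ### Interpolation and conditioning of mean free energies -/

section Interpolation

variable {S : Type*} {ι : Type*} [Fintype ι]

theorem integral_exp_mul_gaussianReal (t : ℝ) :
    ∫ x, Real.exp (t * x) ∂(gaussianReal 0 1) = Real.exp (t ^ 2 / 2) := by
  simpa [mgf] using congrFun (mgf_id_gaussianReal (μ := 0) (v := 1)) t

theorem integrable_exp_linear (b : ι → ℝ) :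
    Integrable (fun g : ι → ℝ => Real.exp (∑ i, b i * g i)) (stdNormal ι) := by
  simp only [Real.exp_sum]
  exact Integrable.fintype_prod (f := fun i x => Real.exp (b i * x))
    fun i => integrable_exp_mul_gaussianReal _

theorem integral_exp_linear (b : ι → ℝ) :
    ∫ g, Real.exp (∑ i, b i * g i) ∂(stdNormal ι) = Real.exp ((∑ i, b i ^ 2) / 2) := by
  simp only [Real.exp_sum, Finset.sum_div]
  rw [integral_fintype_prod_eq_prod fun i x => Real.exp (b i * x)]
  simp only [integral_exp_mul_gaussianReal]

theorem gaussianEnergy_piecewise {κ : Type*} [Fintype κ] {e : κ → ι} (he : Function.Injective e)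
    [DecidablePred (· ∈ Set.range e)] (c : S → ℝ) (a : ι → S → ℝ) (g h : ι → ℝ) :
    gaussianEnergy c a ((Set.range e).piecewise g h) =
      gaussianEnergy (fun σ => c σ + ∑ i with i ∉ Set.range e, a i σ * h i)
        (fun j => a (e j)) fun j => g (e j) := by
  classical
  funext σ
  have hrange : Finset.univ.filter (· ∈ Set.range e) = Finset.univ.image e := by
    ext i; simp
  have hin : ∑ i with i ∈ Set.range e, a i σ * (Set.range e).piecewise g h i =
      ∑ j, a (e j) σ * g (e j) := by
    rw [hrange, Finset.sum_image he.injOn]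
    exact Finset.sum_congr rfl fun j _ => by
      rw [Set.piecewise_eq_of_mem _ _ _ (Set.mem_range_self j)]
  have hout : ∑ i with i ∉ Set.range e, a i σ * (Set.range e).piecewise g h i =
      ∑ i with i ∉ Set.range e, a i σ * h i :=
    Finset.sum_congr rfl fun i hi => by
      rw [Set.piecewise_eq_of_notMem _ _ _ (Finset.mem_filter.1 hi).2]
  rw [gaussianEnergy, gaussianEnergy, ← hin, ← hout,
    ← Finset.sum_filter_add_sum_filter_not Finset.univ (· ∈ Set.range e)]
  ring

variable [Fintype S] [Nonempty S]

theorem sum_quenchedPairAvg_le_of_comp {X κ : Type*} [Fintype X] [Fintype κ] {e : κ → ι}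
    (he : Function.Injective e) {A : X → ι → S → ℝ}
    (hA : ∀ x x', ∀ i ∉ Set.range e, A x i = A x' i) {k : S → S → ℝ} {C : ℝ}
    (h : ∀ c, ∑ x, quenchedPairAvg c (fun j => A x (e j)) k ≤ C) (c : S → ℝ) :
    ∑ x, quenchedPairAvg c (A x) k ≤ C := by
  classical
  rcases isEmpty_or_nonempty X with hX | ⟨⟨x₀⟩⟩
  · simpa using h c
  unfold quenchedPairAvg
  rw [← integral_finsetSum _ fun x _ => integrable_pairAvg c (A x) k]
  refine integral_le_of_forall_integral_piecewise_le _ (Set.range e)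
    (integrable_finsetSum _ fun x _ => integrable_pairAvg c (A x) k) fun g' => ?_
  set c' : S → ℝ := fun σ => c σ + ∑ i with i ∉ Set.range e, A x₀ i σ * g' i
  have henergy (x : X) (g : ι → ℝ) : gaussianEnergy c (A x) ((Set.range e).piecewise g g') =
      gaussianEnergy c' (fun j => A x (e j)) fun j => g (e j) := by
    rw [gaussianEnergy_piecewise he]
    congr 1
    funext σ
    exact congrArg _ <| Finset.sum_congr rfl fun i hi => by
      rw [hA x x₀ i (Finset.mem_filter.1 hi).2]
  simp only [henergy]
  have hpres := measurePreserving_pi_comp_of_injective (gaussianReal 0 1) he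
  have hcont : Continuous fun g : κ → ℝ =>
      ∑ x, pairAvg (gaussianEnergy c' (fun j => A x (e j)) g) k :=
    continuous_finsetSum _ fun x _ => continuous_pairAvg _ _ _
  rw [← integral_map (φ := fun (g : ι → ℝ) j => g (e j)) hpres.measurable.aemeasurable
    hcont.aestronglyMeasurable, hpres.map_eq,
    integral_finsetSum _ fun x _ => integrable_pairAvg c' _ k]
  exact h c'

theorem hasDerivAt_meanFreeEnergy (c : S → ℝ) {A A' : ℝ → ι → S → ℝ} {C : ι → ℝ}
    (hA : ∀ θ i σ, HasDerivAt (fun θ => A θ i σ) (A' θ i σ) θ) (hC : ∀ θ i σ, |A' θ i σ| ≤ C i)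
    (θ : ℝ) :
    HasDerivAt (fun θ => meanFreeEnergy c (A θ))
      (quenchedPairAvg c (A θ) fun σ ρ => ∑ i, A' θ i σ * (A θ i σ - A θ i ρ)) θ := by
  have hderiv (g : ι → ℝ) (θ : ℝ) : HasDerivAt (fun θ => freeEnergy (gaussianEnergy c (A θ) g))
      (gibbsAvg (gaussianEnergy c (A θ) g) fun σ => ∑ i, A' θ i σ * g i) θ :=
    hasDerivAt_freeEnergy fun σ =>
      (HasDerivAt.fun_sum fun i _ => (hA θ i σ).mul_const (g i)).const_add (c σ)
  have hbound (g : ι → ℝ) (θ : ℝ) :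
      ‖gibbsAvg (gaussianEnergy c (A θ) g) fun σ => ∑ i, A' θ i σ * g i‖ ≤ ∑ i, C i * |g i| :=
    abs_gibbsAvg_le _ fun σ => (Finset.abs_sum_le_sum_abs _ _).trans <|
      Finset.sum_le_sum fun i _ => by
        rw [abs_mul]
        exact mul_le_mul_of_nonneg_right (hC θ i σ) (abs_nonneg _)
  rw [← integral_gibbsAvg_linear]
  exact (hasDerivAt_integral_of_dominated_loc_of_deriv_le (bound := fun g => ∑ i, C i * |g i|)
    univ_mem (Eventually.of_forall fun θ => (continuous_freeEnergy c (A θ)).aestronglyMeasurable)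
    (integrable_freeEnergy c (A θ))
    (integrable_gibbsAvg c (A θ) fun σ => integrable_linear _).aestronglyMeasurable
    (ae_of_all _ fun g θ _ => hbound g θ)
    (integrable_finsetSum _ fun i _ => (integrable_coord i).norm.const_mul _)
    (ae_of_all _ fun g θ _ => hderiv g θ)).2

/-- The Gaussian coefficients interpolating from `b` (at `θ = 0`) to `a` (at `θ = π / 2`), with
`f` held fixed. -/
noncomputable def rotation (a b f : ι → S → ℝ) (θ : ℝ) (i : ι) (σ : S) : ℝ :=
  Real.sin θ * a i σ + Real.cos θ * b i σ + f i σ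

theorem hasDerivAt_meanFreeEnergy_rotation (c : S → ℝ) {a b f : ι → S → ℝ}
    (hab : ∀ i σ ρ, a i σ * b i ρ = 0) (haf : ∀ i σ ρ, a i σ * f i ρ = 0)
    (hbf : ∀ i σ ρ, b i σ * f i ρ = 0) (θ : ℝ) :
    HasDerivAt (fun θ => meanFreeEnergy c (rotation a b f θ))
      (Real.sin θ * Real.cos θ * quenchedPairAvg c (rotation a b f θ) fun σ ρ =>
        (∑ i, a i σ * a i σ - ∑ i, b i σ * b i σ) - (∑ i, a i σ * a i ρ - ∑ i, b i σ * b i ρ))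
      θ := by
  have hderiv (θ : ℝ) (i : ι) (σ : S) : HasDerivAt (fun θ => rotation a b f θ i σ)
      (Real.cos θ * a i σ - Real.sin θ * b i σ) θ :=
    ((((Real.hasDerivAt_sin θ).mul_const (a i σ)).add
      ((Real.hasDerivAt_cos θ).mul_const (b i σ))).add_const (f i σ)).congr_deriv (by ring)
  have hbound (θ : ℝ) (i : ι) (σ : S) :
      |Real.cos θ * a i σ - Real.sin θ * b i σ| ≤ ∑ σ, (|a i σ| + |b i σ|) := by
    refine le_trans ?_ (Finset.single_le_sum (f := fun σ => |a i σ| + |b i σ|)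
      (fun _ _ => by positivity) (Finset.mem_univ σ))
    refine (abs_sub _ _).trans (add_le_add ?_ ?_) <;> rw [abs_mul]
    · exact mul_le_of_le_one_left (abs_nonneg _) (Real.abs_cos_le_one _)
    · exact mul_le_of_le_one_left (abs_nonneg _) (Real.abs_sin_le_one _)
  refine (hasDerivAt_meanFreeEnergy c hderiv hbound θ).congr_deriv ?_
  rw [← quenchedPairAvg_const_mul]
  congr 1
  funext σ ρ
  simp only [← Finset.sum_sub_distrib, Finset.mul_sum, rotation]
  refine Finset.sum_congr rfl fun i _ => ?_
  linear_combination Real.cos θ ^ 2 * (hab i σ σ - hab i σ ρ) -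
    Real.sin θ ^ 2 * (hab i σ σ - hab i ρ σ) + Real.cos θ * (haf i σ σ - haf i σ ρ) -
    Real.sin θ * (hbf i σ σ - hbf i σ ρ)

theorem meanFreeEnergy_le_add_of_orthogonal (c : S → ℝ) {a f : ι → S → ℝ}
    (haf : ∀ i σ ρ, a i σ * f i ρ = 0) :
    meanFreeEnergy c a ≤ meanFreeEnergy c fun i σ => a i σ + f i σ := by
  have hzero (σ ρ : S) : ∑ i, f i σ * (a i σ - a i ρ) = 0 :=
    Finset.sum_eq_zero fun i _ => by linear_combination haf i σ σ - haf i ρ σ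
  have h := meanFreeEnergy_add_le c a f
  rwa [integral_gibbsAvg_linear, funext₂ hzero, quenchedPairAvg_const, add_zero] at h

theorem freeEnergy_le_sum_exp_div (E : S → ℝ) {y : ℝ} (hy : 0 < y) :
    freeEnergy E ≤ (∑ σ, Real.exp (E σ)) / y + (Real.log y - 1) := by
  have h := Real.log_le_sub_one_of_pos (div_pos (sum_exp_pos E) hy)
  rw [Real.log_div (sum_exp_pos E).ne' hy.ne'] at h
  rw [freeEnergy]
  linarith

theorem meanFreeEnergy_zero_le {f : ι → S → ℝ} {v : ℝ} (hv : ∀ σ, ∑ i, f i σ ^ 2 ≤ v) :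
    meanFreeEnergy (fun _ => 0) f ≤ Real.log (Fintype.card S) + v / 2 := by
  have hcard : (0 : ℝ) < Fintype.card S := by exact_mod_cast Fintype.card_pos
  set y : ℝ := Fintype.card S * Real.exp (v / 2) with hy
  have hy0 : 0 < y := mul_pos hcard (Real.exp_pos _)
  have h_int : Integrable (fun g => (∑ σ, Real.exp (∑ i, f i σ * g i)) / y) (stdNormal ι) :=
    (integrable_finsetSum _ fun σ _ => integrable_exp_linear fun i => f i σ).div_const y
  calc meanFreeEnergy (fun _ => 0) f
      ≤ ∫ g, ((∑ σ, Real.exp (∑ i, f i σ * g i)) / y + (Real.log y - 1)) ∂(stdNormal ι) :=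
        integral_mono (integrable_freeEnergy _ _) (h_int.add (integrable_const _)) fun g => by
          simpa [gaussianEnergy] using
            freeEnergy_le_sum_exp_div (gaussianEnergy (fun _ => 0) f g) hy0
    _ = (∑ σ, Real.exp ((∑ i, f i σ ^ 2) / 2)) / y + (Real.log y - 1) := by
        rw [integral_add h_int (integrable_const _), integral_div,
          integral_finsetSum _ fun σ _ => integrable_exp_linear _, integral_const, probReal_univ,
          one_smul]
        simp only [integral_exp_linear]
    _ ≤ (∑ _σ : S, Real.exp (v / 2)) / y + (Real.log y - 1) := by
        gcongr with σ
        exact hv σ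
    _ = Real.log (Fintype.card S) + v / 2 := by
        rw [Finset.sum_const, Finset.card_univ, nsmul_eq_mul, ← hy, div_self hy0.ne', hy,
          Real.log_mul hcard.ne' (Real.exp_pos _).ne', Real.log_exp]
        ring

theorem meanFreeEnergy_add_le_integral_add {a f : ι → S → ℝ} {m : (ι → ℝ) → ℝ}
    (hm : Integrable m (stdNormal ι)) (h : ∀ g σ, ∑ i, a i σ * g i ≤ m g) (c : S → ℝ) :
    meanFreeEnergy c (fun i σ => a i σ + f i σ) ≤
      ∫ g, m g ∂(stdNormal ι) + meanFreeEnergy c f := by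
  unfold meanFreeEnergy
  rw [← integral_add hm (integrable_freeEnergy _ _)]
  refine integral_mono (integrable_freeEnergy _ _) (hm.add (integrable_freeEnergy _ _)) fun g => ?_
  simp only [add_comm (m g)]
  refine freeEnergy_le_add fun σ => ?_
  simp only [gaussianEnergy, add_mul, Finset.sum_add_distrib]
  linarith [h g σ]

theorem integral_le_meanFreeEnergy_zero {a : ι → S → ℝ} {m : (ι → ℝ) → ℝ}
    (hm : Integrable m (stdNormal ι)) (h : ∀ g, ∃ σ, m g ≤ ∑ i, a i σ * g i) :
    ∫ g, m g ∂(stdNormal ι) ≤ meanFreeEnergy (fun _ => 0) a := by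
  refine integral_mono hm (integrable_freeEnergy _ _) fun g => ?_
  obtain ⟨σ, hσ⟩ := h g
  simpa [gaussianEnergy] using
    hσ.trans_eq (zero_add _).symm |>.trans (le_freeEnergy (gaussianEnergy (fun _ => 0) a g) σ)

end Interpolation

/-! ### Ghirlanda–Guerra identities and positivity of overlaps -/

section Positivity

universe u

variable {S : Type u}

/-- An overlap kernel: a symmetric kernel with values in `[-1, 1]`, equal to `1` on the diagonal,
whose Gram sums are nonnegative. -/
structure IsOverlapKernel (R : S → S → ℝ) : Prop where
  abs_le_one : ∀ σ ρ, |R σ ρ| ≤ 1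
  self : ∀ σ, R σ σ = 1
  symm : ∀ σ ρ, R σ ρ = R ρ σ
  sum_nonneg : ∀ (n : ℕ) (τ : Fin n → S), 0 ≤ ∑ l, ∑ l', R (τ l) (τ l')

/-- The indicator that any two distinct replicas in `τ` have overlap at most `y`. -/
noncomputable def overlapsLE (R : S → S → ℝ) (y : ℝ) {n : ℕ} (τ : Fin n → S) : ℝ :=
  open Classical in if ∀ l l', l ≠ l' → R (τ l) (τ l') ≤ y then 1 else 0

theorem overlapsLE_nonneg (R : S → S → ℝ) (y : ℝ) {n : ℕ} (τ : Fin n → S) :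
    0 ≤ overlapsLE R y τ := by
  unfold overlapsLE
  split_ifs <;> norm_num

theorem overlapsLE_le_one (R : S → S → ℝ) (y : ℝ) {n : ℕ} (τ : Fin n → S) :
    overlapsLE R y τ ≤ 1 := by
  unfold overlapsLE
  split_ifs <;> norm_num

theorem abs_overlapsLE_le_one (R : S → S → ℝ) (y : ℝ) {n : ℕ} (τ : Fin n → S) :
    |overlapsLE R y τ| ≤ 1 :=
  abs_le.2 ⟨by linarith [overlapsLE_nonneg R y τ], overlapsLE_le_one R y τ⟩

theorem overlapsLE_of_subsingleton (R : S → S → ℝ) (y : ℝ) (τ : Fin 1 → S) :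
    overlapsLE R y τ = 1 :=
  if_pos fun l l' h => absurd (Subsingleton.elim l l') h

theorem IsOverlapKernel.overlapsLE_two {R : S → S → ℝ} (hR : IsOverlapKernel R) (y : ℝ)
    (τ : Fin 2 → S) [Decidable (R (τ 0) (τ 1) ≤ y)] :
    overlapsLE R y τ = if R (τ 0) (τ 1) ≤ y then 1 else 0 := by
  have hiff : (∀ l l', l ≠ l' → R (τ l) (τ l') ≤ y) ↔ R (τ 0) (τ 1) ≤ y := by
    simp [Fin.forall_fin_two, hR.symm (τ 1) (τ 0)]
  simp only [overlapsLE, hiff]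

/-- Gram positivity forbids more than `1 / ε` replicas with pairwise overlaps at most `-ε`. -/
theorem IsOverlapKernel.overlapsLE_neg_eq_zero {R : S → S → ℝ} (hR : IsOverlapKernel R) {m : ℕ}
    {ε : ℝ} (hm : 1 < m * ε) (τ : Fin (m + 1) → S) : overlapsLE R (-ε) τ = 0 := by
  classical
  refine if_neg fun hle => ?_
  have hrow (l : Fin (m + 1)) : ∑ l', R (τ l) (τ l') ≤ 1 - m * ε := by
    rw [← Finset.add_sum_erase _ _ (Finset.mem_univ l), hR.self, sub_eq_add_neg]
    refine add_le_add le_rfl ((Finset.sum_le_card_nsmul _ _ (-ε) fun l' hl' =>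
      hle l l' (Finset.ne_of_mem_erase hl').symm).trans_eq ?_)
    simp
  have hneg : ∑ l, ∑ l', R (τ l) (τ l') < 0 :=
    Finset.sum_neg (fun l _ => (hrow l).trans_lt (by linarith)) Finset.univ_nonempty
  exact (hR.sum_nonneg _ τ).not_gt hneg

/-- The piecewise linear function that is `0` below `u`, `1` above `v`, and affine in between. -/
noncomputable def ramp (u v x : ℝ) : ℝ := max 0 (min 1 ((x - u) / (v - u)))

theorem ramp_nonneg (u v x : ℝ) : 0 ≤ ramp u v x := le_max_left _ _

theorem ramp_le_one (u v x : ℝ) : ramp u v x ≤ 1 := max_le zero_le_one (min_le_left _ _)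

theorem ramp_of_le {u v x : ℝ} (h : u < v) (hx : x ≤ u) : ramp u v x = 0 :=
  max_eq_left ((min_le_right _ _).trans
    (div_nonpos_of_nonpos_of_nonneg (sub_nonpos.2 hx) (sub_nonneg.2 h.le)))

theorem ramp_of_ge {u v x : ℝ} (h : u < v) (hx : v ≤ x) : ramp u v x = 1 := by
  have hdiv : 1 ≤ (x - u) / (v - u) := (one_le_div (sub_pos.2 h)).2 (sub_le_sub_right hx u)
  rw [ramp, min_eq_left hdiv, max_eq_right zero_le_one]

theorem continuous_ramp (u v : ℝ) : Continuous (ramp u v) := by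
  unfold ramp
  fun_prop

/-- If the overlaps within `τ` are at most `u` and the overlaps of `ρ` with `τ` are at most `v`,
then all overlaps are at most `v`; the sum of ramps detects the failure of the second event. -/
theorem IsOverlapKernel.overlapsLE_mul_one_sub_le {R : S → S → ℝ} (hR : IsOverlapKernel R)
    {u v : ℝ} (huv : u < v) {n : ℕ} (τ : Fin (n + 1) → S) :
    overlapsLE R u (Fin.tail τ) * (1 - ∑ l : Fin n, ramp u v (R (τ l.succ) (τ 0))) ≤
      overlapsLE R v τ := by
  by_cases hall : ∀ l l', l ≠ l' → R (τ l) (τ l') ≤ v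
  · rw [show overlapsLE R v τ = 1 from if_pos hall]
    have hsum : 0 ≤ ∑ l : Fin n, ramp u v (R (τ l.succ) (τ 0)) :=
      Finset.sum_nonneg fun _ _ => ramp_nonneg _ _ _
    exact (mul_le_of_le_one_right (overlapsLE_nonneg _ _ _) (by linarith)).trans
      (overlapsLE_le_one _ _ _)
  rw [show overlapsLE R v τ = 0 from if_neg hall]
  by_cases hold : ∀ l l', l ≠ l' → R (Fin.tail τ l) (Fin.tail τ l') ≤ u
  · obtain ⟨l, hl⟩ : ∃ l : Fin n, v < R (τ l.succ) (τ 0) := by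
      by_contra! hnew
      refine hall fun l l' => ?_
      cases l using Fin.cases <;> cases l' using Fin.cases
      case zero.zero => exact fun h => absurd rfl h
      case zero.succ l' => exact fun _ => (hR.symm _ _).trans_le (hnew l')
      case succ.zero l => exact fun _ => hnew l
      case succ.succ l l' => exact fun h => (hold l l' (ne_of_apply_ne _ h)).trans huv.le
    have hsum : 1 ≤ ∑ l : Fin n, ramp u v (R (τ l.succ) (τ 0)) :=
      (ramp_of_ge huv hl.le).symm.trans_le <| Finset.single_le_sum
        (f := fun l : Fin n => ramp u v (R (τ l.succ) (τ 0))) (fun _ _ => ramp_nonneg _ _ _)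
        (Finset.mem_univ l)
    exact mul_nonpos_of_nonneg_of_nonpos (overlapsLE_nonneg _ _ _) (by linarith)
  · rw [show overlapsLE R u (Fin.tail τ) = 0 from if_neg hold, zero_mul]

variable [Fintype S]

/-- A consistent family of laws of `n` replicas. -/
structure IsReplicaLaw (q : (n : ℕ) → (Fin n → S) → ℝ) : Prop where
  nonneg : ∀ n τ, 0 ≤ q n τ
  sum_eq_one : ∀ n, ∑ τ, q n τ = 1
  sum_cons : ∀ n τ, ∑ ρ, q (n + 1) (Fin.cons ρ τ : Fin (n + 1) → S) = q n τ

/-- The average of a function of `n` replicas. -/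
def replicaAvg (q : (n : ℕ) → (Fin n → S) → ℝ) {n : ℕ} (f : (Fin n → S) → ℝ) : ℝ :=
  ∑ τ, q n τ * f τ

section Average

variable {q : (n : ℕ) → (Fin n → S) → ℝ} {n : ℕ}

theorem replicaAvg_add (f g : (Fin n → S) → ℝ) :
    replicaAvg q (fun τ => f τ + g τ) = replicaAvg q f + replicaAvg q g := by
  simp only [replicaAvg, mul_add, Finset.sum_add_distrib]

theorem replicaAvg_sub (f g : (Fin n → S) → ℝ) :
    replicaAvg q (fun τ => f τ - g τ) = replicaAvg q f - replicaAvg q g := by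
  simp only [replicaAvg, mul_sub, Finset.sum_sub_distrib]

theorem replicaAvg_const_mul (v : ℝ) (f : (Fin n → S) → ℝ) :
    replicaAvg q (fun τ => v * f τ) = v * replicaAvg q f := by
  simp only [replicaAvg, Finset.mul_sum, mul_left_comm]

theorem replicaAvg_sum {κ : Type*} (s : Finset κ) (f : κ → (Fin n → S) → ℝ) :
    replicaAvg q (fun τ => ∑ j ∈ s, f j τ) = ∑ j ∈ s, replicaAvg q (f j) := by
  simp only [replicaAvg, Finset.mul_sum]
  exact Finset.sum_comm

variable (hq : IsReplicaLaw q)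
include hq

theorem IsReplicaLaw.replicaAvg_const (n : ℕ) (v : ℝ) :
    replicaAvg q (fun _ : Fin n → S => v) = v := by
  rw [replicaAvg, ← Finset.sum_mul, hq.sum_eq_one, one_mul]

theorem IsReplicaLaw.replicaAvg_mono {f g : (Fin n → S) → ℝ} (h : ∀ τ, f τ ≤ g τ) :
    replicaAvg q f ≤ replicaAvg q g :=
  Finset.sum_le_sum fun τ _ => mul_le_mul_of_nonneg_left (h τ) (hq.nonneg n τ)

theorem IsReplicaLaw.abs_replicaAvg_le {f : (Fin n → S) → ℝ} {C : ℝ} (h : ∀ τ, |f τ| ≤ C) :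
    |replicaAvg q f| ≤ C := by
  refine abs_le.2 ⟨?_, ?_⟩
  · exact (hq.replicaAvg_const n (-C)).symm.trans_le
      (hq.replicaAvg_mono fun τ => (abs_le.1 (h τ)).1)
  · exact (hq.replicaAvg_mono fun τ => (abs_le.1 (h τ)).2).trans_eq (hq.replicaAvg_const n C)

theorem IsReplicaLaw.replicaAvg_tail (f : (Fin n → S) → ℝ) :
    replicaAvg q (fun τ : Fin (n + 1) → S => f (Fin.tail τ)) = replicaAvg q f := by
  simp only [replicaAvg, sum_fin_succ_fun, Fin.tail_cons]
  rw [Finset.sum_comm]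
  simp only [← Finset.sum_mul, hq.sum_cons]

end Average

/-- The defect of the Ghirlanda–Guerra identity for `f` and the kernel `φ ∘ R`, as a linear
function of `φ`. The new replica is placed at index `0`, in front of the old ones. -/
noncomputable def ggDefect (R : S → S → ℝ) (q : (n : ℕ) → (Fin n → S) → ℝ) {n : ℕ} (l : Fin n)
    (f : (Fin n → S) → ℝ) : (ℝ → ℝ) →ₗ[ℝ] ℝ where
  toFun φ := replicaAvg q (fun τ => f τ * ∑ l', φ (R (τ l) (τ l')))
    - n * replicaAvg q (fun τ : Fin (n + 1) → S => f (Fin.tail τ) * φ (R (τ l.succ) (τ 0)))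
    - replicaAvg q f * (φ 1 - replicaAvg q fun τ : Fin 2 → S => φ (R (τ 0) (τ 1)))
  map_add' φ ψ := by
    simp only [Pi.add_apply, Finset.sum_add_distrib, mul_add, replicaAvg_add]
    ring
  map_smul' v φ := by
    simp only [Pi.smul_apply, smul_eq_mul, ← Finset.mul_sum, mul_left_comm _ v,
      replicaAvg_const_mul, RingHom.id_apply]
    ring

theorem ggDefect_apply (R : S → S → ℝ) (q : (n : ℕ) → (Fin n → S) → ℝ) {n : ℕ} (l : Fin n)
    (f : (Fin n → S) → ℝ) (φ : ℝ → ℝ) :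
    ggDefect R q l f φ = replicaAvg q (fun τ => f τ * ∑ l', φ (R (τ l) (τ l')))
      - n * replicaAvg q (fun τ : Fin (n + 1) → S => f (Fin.tail τ) * φ (R (τ l.succ) (τ 0)))
      - replicaAvg q f * (φ 1 - replicaAvg q fun τ : Fin 2 → S => φ (R (τ 0) (τ 1))) :=
  rfl

/-- The moments `x ^ (d + 1)`, `d < D`, satisfy the Ghirlanda–Guerra identities up to `Δ d`,
uniformly over the number of replicas and over test functions bounded by `1`. -/
def GGDefectLE (R : S → S → ℝ) (q : (n : ℕ) → (Fin n → S) → ℝ) (D : ℕ) (Δ : ℕ → ℝ) : Prop :=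
  ∀ d < D, ∀ (n : ℕ) (l : Fin n) (f : (Fin n → S) → ℝ), (∀ τ, |f τ| ≤ 1) →
    |ggDefect R q l f fun x => x ^ (d + 1)| ≤ Δ d

variable {R : S → S → ℝ} {q : (n : ℕ) → (Fin n → S) → ℝ}

theorem GGDefectLE.nonneg {D : ℕ} {Δ : ℕ → ℝ} (h : GGDefectLE R q D Δ) {d : ℕ} (hd : d < D) :
    0 ≤ Δ d :=
  (abs_nonneg _).trans (h d hd 1 0 (fun _ => 0) (by simp))

theorem GGDefectLE.mono {D D' : ℕ} {Δ : ℕ → ℝ} (h : GGDefectLE R q D Δ) (hD : D' ≤ D) :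
    GGDefectLE R q D' Δ :=
  fun d hd => h d (hd.trans_le hD)

theorem ggDefect_const (hq : IsReplicaLaw q) {n : ℕ} (l : Fin n) (f : (Fin n → S) → ℝ) (v : ℝ) :
    ggDefect R q l f (fun _ => v) = 0 := by
  have hold : (replicaAvg q fun τ => f τ * (n * v)) = n * v * replicaAvg q f := by
    simp only [mul_comm (f _), replicaAvg_const_mul]
  have hnew : (replicaAvg q fun τ : Fin (n + 1) → S => f (Fin.tail τ) * v)
      = v * replicaAvg q f := by
    simp only [mul_comm (f _), replicaAvg_const_mul, hq.replicaAvg_tail]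
  simp only [ggDefect_apply, Finset.sum_const, Finset.card_univ, Fintype.card_fin, nsmul_eq_mul,
    hold, hnew, hq.replicaAvg_const]
  ring

theorem abs_ggDefect_le (hR : IsOverlapKernel R) (hq : IsReplicaLaw q) {n : ℕ} (l : Fin n)
    {f : (Fin n → S) → ℝ} (hf : ∀ τ, |f τ| ≤ 1) {φ : ℝ → ℝ} {t : ℝ}
    (hφ : ∀ x, |x| ≤ 1 → |φ x| ≤ t) :
    |ggDefect R q l f φ| ≤ (2 * n + 2) * t := by
  have hφR (σ ρ : S) : |φ (R σ ρ)| ≤ t := hφ _ (hR.abs_le_one σ ρ)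
  have hmul {a b c : ℝ} (ha : |a| ≤ 1) (hb : |b| ≤ c) : |a * b| ≤ c := by
    rw [abs_mul]
    exact (mul_le_of_le_one_left (abs_nonneg b) ha).trans hb
  have hold : |replicaAvg q fun τ => f τ * ∑ l', φ (R (τ l) (τ l'))| ≤ n * t :=
    hq.abs_replicaAvg_le fun τ => hmul (hf τ) <| (Finset.abs_sum_le_sum_abs _ _).trans <|
      (Finset.sum_le_card_nsmul _ _ t fun l' _ => hφR _ _).trans_eq (by simp)
  have hnew : |replicaAvg q fun τ : Fin (n + 1) → S => f (Fin.tail τ) * φ (R (τ l.succ) (τ 0))|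
      ≤ t :=
    hq.abs_replicaAvg_le fun τ => hmul (hf _) (hφR _ _)
  have hpair : |φ 1 - replicaAvg q fun τ : Fin 2 → S => φ (R (τ 0) (τ 1))| ≤ t + t :=
    (abs_sub _ _).trans (add_le_add (hφ 1 (by simp)) (hq.abs_replicaAvg_le fun τ => hφR _ _))
  have hprod := hmul (hq.abs_replicaAvg_le hf) hpair
  have hnnew := mul_le_mul_of_nonneg_left hnew (Nat.cast_nonneg (α := ℝ) n)
  rw [← Nat.abs_cast, ← abs_mul, Nat.abs_cast] at hnnew
  rw [ggDefect_apply]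
  refine (abs_sub _ _).trans ((add_le_add (abs_sub _ _) le_rfl).trans ?_)
  linarith

theorem GGDefectLE.abs_ggDefect_eval_le {D : ℕ} {Δ : ℕ → ℝ} (h : GGDefectLE R q D Δ)
    (hq : IsReplicaLaw q) {n : ℕ} (l : Fin n) {f : (Fin n → S) → ℝ} (hf : ∀ τ, |f τ| ≤ 1)
    {P : Polynomial ℝ} (hP : P.natDegree ≤ D) :
    |ggDefect R q l f fun x => P.eval x| ≤
      (∑ d ∈ Finset.range D, |P.coeff (d + 1)|) * ∑ d ∈ Finset.range D, Δ d := by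
  have heval : (fun x => P.eval x) = (∑ d ∈ Finset.range D,
      P.coeff (d + 1) • fun x : ℝ => x ^ (d + 1)) + fun _ => P.coeff 0 := by
    funext x
    rw [Polynomial.eval_eq_sum_range' (Nat.lt_succ_of_le hP), Finset.sum_range_succ']
    simp
  rw [heval, map_add, ggDefect_const hq, add_zero, map_sum, Finset.sum_mul]
  refine (Finset.abs_sum_le_sum_abs _ _).trans (Finset.sum_le_sum fun d hd => ?_)
  rw [map_smul, smul_eq_mul, abs_mul]
  refine mul_le_mul_of_nonneg_left ?_ (abs_nonneg _)
  exact (h d (Finset.mem_range.1 hd) n l f hf).trans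
    (Finset.single_le_sum (fun i hi => h.nonneg (Finset.mem_range.1 hi)) hd)

theorem exists_abs_ggDefect_le {ψ : ℝ → ℝ} (hψ : Continuous ψ) {t : ℝ} (ht : 0 < t) :
    ∃ D : ℕ, ∃ C : ℝ, 0 ≤ C ∧ ∀ (S : Type u) [Fintype S] (R : S → S → ℝ)
      (q : (n : ℕ) → (Fin n → S) → ℝ) (Δ : ℕ → ℝ),
      IsOverlapKernel R → IsReplicaLaw q → ∀ D' ≥ D, GGDefectLE R q D' Δ →
      ∀ (n : ℕ) (l : Fin n) (f : (Fin n → S) → ℝ), (∀ τ, |f τ| ≤ 1) →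
        |ggDefect R q l f ψ| ≤ (2 * n + 2) * t + C * ∑ d ∈ Finset.range D', Δ d := by
  obtain ⟨P, hP⟩ := exists_polynomial_near_of_continuousOn (-1) 1 ψ hψ.continuousOn t ht
  refine ⟨P.natDegree, ∑ d ∈ Finset.range P.natDegree, |P.coeff (d + 1)|,
    Finset.sum_nonneg fun _ _ => abs_nonneg _, ?_⟩
  intro S _ R q Δ hR hq D' hD' h n l f hf
  have hsplit : ψ = (fun x => ψ x - P.eval x) + fun x => P.eval x := by
    funext x; simp
  have hnear (x : ℝ) (hx : |x| ≤ 1) : |ψ x - P.eval x| ≤ t := by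
    rw [abs_sub_comm]
    exact (hP x (abs_le.1 hx)).le
  have hsum : ∑ d ∈ Finset.range P.natDegree, Δ d ≤ ∑ d ∈ Finset.range D', Δ d :=
    Finset.sum_le_sum_of_subset_of_nonneg (Finset.range_mono hD') fun d hd _ =>
      h.nonneg (Finset.mem_range.1 hd)
  rw [hsplit, map_add]
  refine (abs_add_le _ _).trans (add_le_add (abs_ggDefect_le hR hq l hf hnear) ?_)
  exact ((h.mono hD').abs_ggDefect_eval_le hq l hf le_rfl).trans
    (mul_le_mul_of_nonneg_left hsum (Finset.sum_nonneg fun _ _ => abs_nonneg _))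

theorem mul_replicaAvg_overlapsLE_sub_le (hR : IsOverlapKernel R) (hq : IsReplicaLaw q) {n : ℕ}
    (hn : 0 < n) {u v e a : ℝ} (huv : u < v) (hv : v ≤ 1)
    (he : ∀ l : Fin n, |ggDefect R q l (overlapsLE R u) (ramp u v)| ≤ e)
    (ha : a ≤ 1 - replicaAvg q fun τ : Fin 2 → S => ramp u v (R (τ 0) (τ 1))) :
    a * replicaAvg q (fun τ : Fin n → S => overlapsLE R u τ) - e ≤
      replicaAvg q fun τ : Fin (n + 1) → S => overlapsLE R v τ := by
  set T := replicaAvg q fun τ : Fin n → S => overlapsLE R u τ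
  set w := replicaAvg q fun τ : Fin 2 → S => ramp u v (R (τ 0) (τ 1))
  have hT0 : 0 ≤ T := (hq.replicaAvg_const n 0).symm.trans_le
    (hq.replicaAvg_mono fun τ => overlapsLE_nonneg R u τ)
  have hdiag (l : Fin n) (τ : Fin n → S) :
      overlapsLE R u τ * ∑ l', ramp u v (R (τ l) (τ l')) = overlapsLE R u τ := by
    by_cases hle : ∀ l l', l ≠ l' → R (τ l) (τ l') ≤ u
    · rw [Finset.sum_eq_single l (fun l' _ hl' => ramp_of_le huv (hle l l' hl'.symm)) (by simp),
        hR.self, ramp_of_ge huv hv, mul_one]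
    · rw [show overlapsLE R u τ = 0 from if_neg hle, zero_mul]
  set N : Fin n → ℝ := fun l => replicaAvg q fun τ : Fin (n + 1) → S =>
    overlapsLE R u (Fin.tail τ) * ramp u v (R (τ l.succ) (τ 0))
  have hnew (l : Fin n) : n * N l ≤ T * w + e := by
    have h := (abs_le.1 (he l)).1
    rw [ggDefect_apply, ramp_of_ge huv hv] at h
    simp only [hdiag] at h
    linarith
  have hsum : ∑ l, N l ≤ T * w + e := by
    have h := Finset.sum_le_card_nsmul Finset.univ _ _ fun l _ => hnew l
    rw [← Finset.mul_sum, Finset.card_univ, Fintype.card_fin, nsmul_eq_mul] at h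
    exact le_of_mul_le_mul_left h (Nat.cast_pos.2 hn)
  calc a * T - e ≤ T - (T * w + e) := by nlinarith
    _ ≤ T - ∑ l, N l := by gcongr
    _ = replicaAvg q fun τ : Fin (n + 1) → S =>
          overlapsLE R u (Fin.tail τ) * (1 - ∑ l : Fin n, ramp u v (R (τ l.succ) (τ 0))) := by
        simp only [mul_sub, mul_one, Finset.mul_sum, replicaAvg_sub, replicaAvg_sum]
        rw [hq.replicaAvg_tail (overlapsLE R u)]
    _ ≤ _ := hq.replicaAvg_mono fun τ => hR.overlapsLE_mul_one_sub_le huv τ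

/-- Iterating the one-step inequality along increasing levels `y`. -/
theorem pow_sub_le_replicaAvg_overlapsLE (hR : IsOverlapKernel R) (hq : IsReplicaLaw q) {m : ℕ}
    {y : ℕ → ℝ} (hy : StrictMono y) (hy1 : y (m + 1) ≤ 1) {e : ℝ} (he0 : 0 ≤ e)
    (he : ∀ n ≤ m, ∀ l : Fin n,
      |ggDefect R q l (overlapsLE R (y n)) (ramp (y n) (y (n + 1)))| ≤ e)
    {n : ℕ} (hn : n ≤ m) :
    replicaAvg q (fun τ : Fin 2 → S => overlapsLE R (y 1) τ) ^ n - n * e ≤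
      replicaAvg q fun τ : Fin (n + 1) → S => overlapsLE R (y (n + 1)) τ := by
  classical
  set a := replicaAvg q fun τ : Fin 2 → S => overlapsLE R (y 1) τ
  have ha0 : 0 ≤ a := (hq.replicaAvg_const 2 0).symm.trans_le
    (hq.replicaAvg_mono fun τ => overlapsLE_nonneg R _ τ)
  have ha1 : a ≤ 1 := (hq.replicaAvg_mono fun τ => overlapsLE_le_one R _ τ).trans_eq
    (hq.replicaAvg_const 2 1)
  have haw {n : ℕ} (hn : 1 ≤ n) :
      a ≤ 1 - replicaAvg q fun τ : Fin 2 → S => ramp (y n) (y (n + 1)) (R (τ 0) (τ 1)) := by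
    rw [← hq.replicaAvg_const 2 1, ← replicaAvg_sub]
    refine hq.replicaAvg_mono fun τ => ?_
    rw [hR.overlapsLE_two]
    split_ifs with hle
    · rw [ramp_of_le (hy n.lt_succ_self) (hle.trans (hy.monotone hn)), sub_zero]
    · exact sub_nonneg.2 (ramp_le_one _ _ _)
  induction n with
  | zero => simp [overlapsLE_of_subsingleton, hq.replicaAvg_const]
  | succ n ih =>
    refine le_trans ?_ (mul_replicaAvg_overlapsLE_sub_le hR hq n.succ_pos
      (hy (n + 1).lt_succ_self) ((hy.monotone (Nat.succ_le_succ hn)).trans hy1) (he (n + 1) hn)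
      (haw n.succ_pos))
    have hprev := mul_le_mul_of_nonneg_left (ih (n.le_succ.trans hn)) ha0
    have hshrink := mul_le_of_le_one_left (mul_nonneg n.cast_nonneg he0) ha1
    push_cast
    rw [pow_succ']
    linarith

theorem le_add_div_pow_of_pow_succ_le {a b ε : ℝ} {m : ℕ} (ha : 0 ≤ a) (hε : 0 < ε)
    (h : a ^ (m + 1) ≤ b) : a ≤ ε + b / ε ^ m := by
  have hb : 0 ≤ b := (pow_nonneg ha _).trans h
  rcases le_total a ε with haε | haε
  · exact haε.trans (le_add_of_nonneg_right (by positivity))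
  · have hmul : a * ε ^ m ≤ b :=
      (mul_le_mul_of_nonneg_left (pow_le_pow_left₀ hε.le haε m) ha).trans
        ((pow_succ' a m).symm.trans_le h)
    exact ((le_div_iff₀ (by positivity)).2 hmul).trans (le_add_of_nonneg_left hε.le)

theorem replicaAvg_max_neg_le (hR : IsOverlapKernel R) (hq : IsReplicaLaw q) {δ y : ℝ}
    (hδ : 0 ≤ δ) (hy : -δ ≤ y) :
    replicaAvg q (fun τ : Fin 2 → S => max (-R (τ 0) (τ 1)) 0) ≤
      δ + replicaAvg q fun τ : Fin 2 → S => overlapsLE R y τ := by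
  classical
  rw [← hq.replicaAvg_const 2 δ, ← replicaAvg_add]
  refine hq.replicaAvg_mono fun τ => ?_
  rw [hR.overlapsLE_two]
  have hlow := (abs_le.1 (hR.abs_le_one (τ 0) (τ 1))).1
  split_ifs with hle <;> exact max_le (by linarith) (by linarith)

theorem exists_abs_ggDefect_le_of_finite {ψ : ℕ → ℝ → ℝ} (hψ : ∀ n, Continuous (ψ n)) (m : ℕ)
    {t : ℝ} (ht : 0 < t) :
    ∃ D : ℕ, ∃ C : ℝ, 0 ≤ C ∧ ∀ (S : Type u) [Fintype S] (R : S → S → ℝ)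
      (q : (n : ℕ) → (Fin n → S) → ℝ) (Δ : ℕ → ℝ),
      IsOverlapKernel R → IsReplicaLaw q → GGDefectLE R q D Δ →
      ∀ n ≤ m, ∀ (l : Fin n) (f : (Fin n → S) → ℝ), (∀ τ, |f τ| ≤ 1) →
        |ggDefect R q l f (ψ n)| ≤ (2 * m + 2) * t + C * ∑ d ∈ Finset.range D, Δ d := by
  choose D C hC h using fun n => exists_abs_ggDefect_le.{u} (hψ n) ht
  refine ⟨(Finset.range (m + 1)).sup D, ∑ n ∈ Finset.range (m + 1), C n,
    Finset.sum_nonneg fun n _ => hC n, ?_⟩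
  intro S _ R q Δ hR hq hΔ n hn l f hf
  have hmem : n ∈ Finset.range (m + 1) := Finset.mem_range.2 (Nat.lt_succ_of_le hn)
  refine (h n S R q Δ hR hq _ (Finset.le_sup hmem) hΔ n l f hf).trans ?_
  gcongr
  · exact Finset.sum_nonneg fun d hd => hΔ.nonneg (Finset.mem_range.1 hd)
  · exact Finset.single_le_sum (fun i _ => hC i) hmem

/-- Talagrand's positivity principle, in quantitative form. -/
theorem exists_replicaAvg_max_neg_le {ε : ℝ} (hε : 0 < ε) : ∃ D : ℕ, ∃ C : ℝ, 0 ≤ C ∧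
    ∀ (S : Type u) [Fintype S] (R : S → S → ℝ) (q : (n : ℕ) → (Fin n → S) → ℝ) (Δ : ℕ → ℝ),
      IsOverlapKernel R → IsReplicaLaw q → GGDefectLE R q D Δ →
      replicaAvg q (fun τ : Fin 2 → S => max (-R (τ 0) (τ 1)) 0) ≤
        4 * ε + C * ∑ d ∈ Finset.range D, Δ d := by
  obtain ⟨k, hk⟩ := exists_nat_gt (1 / ε)
  set m := k + 1
  have hm : 1 < m * ε := (div_lt_iff₀ hε).1 (hk.trans (by simp [m]))
  set y : ℕ → ℝ := fun n => -2 * ε + ε / (m + 1) * n with hy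
  have hymono : StrictMono y := fun i j hij => by
    have : (i : ℝ) < j := by exact_mod_cast hij
    simp only [hy]
    gcongr
  have hytop : y (m + 1) = -ε := by
    simp only [hy]
    push_cast
    field_simp
    ring
  set t : ℝ := ε ^ m / (m * (2 * m + 2)) with ht
  obtain ⟨D, C, hC, hDC⟩ := exists_abs_ggDefect_le_of_finite.{u}
    (fun n => continuous_ramp (y n) (y (n + 1))) m (t := t) (by positivity)
  refine ⟨D, m / ε ^ k * C, by positivity, fun S _ R q Δ hR hq hΔ => ?_⟩
  set s := ∑ d ∈ Finset.range D, Δ d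
  have hs : 0 ≤ s := Finset.sum_nonneg fun d hd => hΔ.nonneg (Finset.mem_range.1 hd)
  set a := replicaAvg q fun τ : Fin 2 → S => overlapsLE R (y 1) τ
  have ha : 0 ≤ a := (hq.replicaAvg_const 2 0).symm.trans_le
    (hq.replicaAvg_mono fun τ => overlapsLE_nonneg R _ τ)
  have hpow : a ^ (k + 1) ≤ m * ((2 * m + 2) * t + C * s) := by
    have h := pow_sub_le_replicaAvg_overlapsLE hR hq hymono (by linarith) (by positivity)
      (fun n hn l => hDC S R q Δ hR hq hΔ n hn l _ (abs_overlapsLE_le_one R _)) le_rfl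
    simpa only [hytop, hR.overlapsLE_neg_eq_zero hm, hq.replicaAvg_const, sub_nonpos] using h
  have hbound : m * ((2 * m + 2) * t + C * s) / ε ^ k = ε + m / ε ^ k * C * s := by
    have hm0 : (m : ℝ) ≠ 0 := by positivity
    rw [ht, show ε ^ m = ε ^ k * ε from pow_succ ε k]
    field_simp
  have ha' := le_add_div_pow_of_pow_succ_le ha hε hpow
  have hneg := replicaAvg_max_neg_le hR hq (y := y 1) (δ := 2 * ε) (by positivity) (by
    simp only [hy]
    linarith [show 0 ≤ ε / (m + 1) * ((1 : ℕ) : ℝ) by positivity])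
  linarith

end Positivity

/-! ### Energy fluctuations and the Ghirlanda–Guerra identities -/

section QuenchedLaw

variable {S ι : Type*} [Fintype S] [Fintype ι] {n : ℕ}

/-- The law of `n` replicas: the disorder average of the `n`-fold product of the Gibbs measure. -/
noncomputable def quenchedLaw (c : S → ℝ) (a : ι → S → ℝ) (n : ℕ) (τ : Fin n → S) : ℝ :=
  ∫ g, gibbsWeight (replicate n (gaussianEnergy c a g)) τ ∂(stdNormal ι)

variable [Nonempty S]

theorem integrable_gibbsWeight (c : S → ℝ) (a : ι → S → ℝ) (σ : S) :
    Integrable (fun g => gibbsWeight (gaussianEnergy c a g) σ) (stdNormal ι) := by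
  classical
  simpa [gibbsAvg, Pi.single_apply] using
    integrable_gibbsAvg c a (X := fun _ => Pi.single σ (1 : ℝ)) fun _ => integrable_const _

theorem integrable_gibbsWeight_replicate (c : S → ℝ) (a : ι → S → ℝ) (τ : Fin n → S) :
    Integrable (fun g => gibbsWeight (replicate n (gaussianEnergy c a g)) τ) (stdNormal ι) := by
  simp only [replicate_gaussianEnergy]
  exact integrable_gibbsWeight _ _ τ

theorem integrable_gibbsAvg_replicate (c : S → ℝ) (a : ι → S → ℝ)
    {X : (ι → ℝ) → (Fin n → S) → ℝ} (hX : ∀ τ, Integrable (fun g => X g τ) (stdNormal ι)) :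
    Integrable (fun g => gibbsAvg (replicate n (gaussianEnergy c a g)) (X g)) (stdNormal ι) := by
  simp only [replicate_gaussianEnergy]
  exact integrable_gibbsAvg _ _ hX

theorem integrable_gibbsAvg_replicate_const (c : S → ℝ) (a : ι → S → ℝ) (F : (Fin n → S) → ℝ) :
    Integrable (fun g => gibbsAvg (replicate n (gaussianEnergy c a g)) F) (stdNormal ι) :=
  integrable_gibbsAvg_replicate c a fun _ => integrable_const _

theorem replicaAvg_quenchedLaw (c : S → ℝ) (a : ι → S → ℝ) (F : (Fin n → S) → ℝ) :
    replicaAvg (quenchedLaw c a) F =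
      ∫ g, gibbsAvg (replicate n (gaussianEnergy c a g)) F ∂(stdNormal ι) := by
  simp only [replicaAvg, quenchedLaw, gibbsAvg, ← integral_mul_const]
  exact (integral_finsetSum _ fun τ _ =>
    (integrable_gibbsWeight_replicate c a τ).mul_const _).symm

theorem replicaAvg_quenchedLaw_two (c : S → ℝ) (a : ι → S → ℝ) (k : S → S → ℝ) :
    replicaAvg (quenchedLaw c a) (fun τ : Fin 2 → S => k (τ 0) (τ 1)) = quenchedPairAvg c a k := by
  simp only [replicaAvg_quenchedLaw, gibbsAvg_replicate_two]
  rfl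

theorem isReplicaLaw_quenchedLaw (c : S → ℝ) (a : ι → S → ℝ) :
    IsReplicaLaw (quenchedLaw c a) where
  nonneg n τ := integral_nonneg fun g => gibbsWeight_nonneg _ τ
  sum_eq_one n := by
    simpa [replicaAvg, gibbsAvg_const] using replicaAvg_quenchedLaw c a fun _ : Fin n → S => 1
  sum_cons n τ := by
    simp only [quenchedLaw]
    rw [← integral_finsetSum _ fun ρ _ => integrable_gibbsWeight_replicate c a _]
    simp only [gibbsWeight_replicate_cons, ← Finset.sum_mul, sum_gibbsWeight, one_mul]

omit [Nonempty S] in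
theorem gibbsAvg_comm {S' : Type*} [Fintype S'] (E : S → ℝ) (E' : S' → ℝ) (F : S → S' → ℝ) :
    gibbsAvg E (fun σ => gibbsAvg E' (F σ)) = gibbsAvg E' fun ρ => gibbsAvg E fun σ => F σ ρ := by
  simp only [gibbsAvg, Finset.mul_sum, mul_left_comm (gibbsWeight E _)]
  exact Finset.sum_comm

theorem pairAvg_replicate_mul_sub (E : S → ℝ) (l : Fin n) (f : (Fin n → S) → ℝ)
    (k : S → S → ℝ) :
    pairAvg (replicate n E) (fun τ τ' => f τ * (∑ l', k (τ l) (τ l') - ∑ l', k (τ l) (τ' l'))) =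
      gibbsAvg (replicate n E) (fun τ => f τ * ∑ l', k (τ l) (τ l')) -
        n * gibbsAvg (replicate (n + 1) E) fun τ => f (Fin.tail τ) * k (τ l.succ) (τ 0) := by
  have hinner (τ : Fin n → S) : gibbsAvg (replicate n E)
      (fun τ' => f τ * (∑ l', k (τ l) (τ l') - ∑ l', k (τ l) (τ' l'))) =
        f τ * ∑ l', k (τ l) (τ l') - n * gibbsAvg E fun ρ => f τ * k (τ l) ρ := by
    simp only [gibbsAvg_const_mul, gibbsAvg_sub, gibbsAvg_const, gibbsAvg_sum,
      gibbsAvg_replicate_apply, Finset.sum_const, Finset.card_univ, Fintype.card_fin, nsmul_eq_mul]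
    ring
  simp only [pairAvg, hinner, gibbsAvg_sub, gibbsAvg_const_mul, gibbsAvg_replicate_succ,
    Fin.tail_cons, Fin.cons_succ, Fin.cons_zero, gibbsAvg_comm E (replicate n E)]

theorem integral_gibbsAvg_replicate_mul_linear (c : S → ℝ) (a b : ι → S → ℝ) (l : Fin n)
    (f : (Fin n → S) → ℝ) :
    ∫ g, gibbsAvg (replicate n (gaussianEnergy c a g))
        (fun τ => f τ * ∑ i, b i (τ l) * g i) ∂(stdNormal ι) =
      replicaAvg (quenchedLaw c a) (fun τ => f τ * ∑ l', ∑ i, b i (τ l) * a i (τ l')) -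
        n * replicaAvg (quenchedLaw c a)
          fun τ : Fin (n + 1) → S => f (Fin.tail τ) * ∑ i, b i (τ l.succ) * a i (τ 0) := by
  have hexpand (τ τ' : Fin n → S) :
      ∑ i, b i (τ l) * (replicate n (a i) τ - replicate n (a i) τ') =
        ∑ l', ∑ i, b i (τ l) * a i (τ l') - ∑ l', ∑ i, b i (τ l) * a i (τ' l') := by
    rw [Finset.sum_comm, Finset.sum_comm (s := .univ (α := Fin n)), ← Finset.sum_sub_distrib]
    simp only [replicate, mul_sub, Finset.mul_sum]
  simp only [replicaAvg_quenchedLaw, ← integral_const_mul]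
  rw [← integral_sub (integrable_gibbsAvg_replicate_const c a _)
    ((integrable_gibbsAvg_replicate_const c a _).const_mul _)]
  simp only [← pairAvg_replicate_mul_sub _ l f fun σ ρ => ∑ i, b i σ * a i ρ]
  simp only [replicate_gaussianEnergy, ← hexpand]
  exact integral_gibbsAvg_mul_linear _ _ (fun i τ => b i (τ l)) f

end QuenchedLaw

section EnergyDeviation

variable {S ι : Type*} [Fintype S] [Fintype ι]

/-- The quenched Gibbs average of the Gaussian energy with coefficients `b`. -/
noncomputable def meanEnergy (c : S → ℝ) (a b : ι → S → ℝ) : ℝ :=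
  ∫ g, gibbsAvg (gaussianEnergy c a g) (fun σ => ∑ i, b i σ * g i) ∂(stdNormal ι)

/-- The quenched mean absolute deviation of the Gaussian energy with coefficients `b`. -/
noncomputable def energyDeviation (c : S → ℝ) (a b : ι → S → ℝ) : ℝ :=
  ∫ g, gibbsAvg (gaussianEnergy c a g)
    (fun σ => |∑ i, b i σ * g i - meanEnergy c a b|) ∂(stdNormal ι)

/-- The distance of the free energy to its mean. -/
noncomputable def freeEnergyDeviation (c : S → ℝ) (a : ι → S → ℝ) (g : ι → ℝ) : ℝ :=
  |freeEnergy (gaussianEnergy c a g) - meanFreeEnergy c a|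

variable [Nonempty S]

theorem meanFreeEnergy_add_mul_meanEnergy_le (c : S → ℝ) (a b : ι → S → ℝ) (z : ℝ) :
    meanFreeEnergy c a + z * meanEnergy c a b ≤ meanFreeEnergy c fun i σ => a i σ + z * b i σ := by
  refine le_trans (le_of_eq ?_) (meanFreeEnergy_add_le c a fun i σ => z * b i σ)
  simp only [meanEnergy, mul_assoc, ← Finset.mul_sum, gibbsAvg_const_mul, integral_const_mul]

theorem mul_gibbsAvg_abs_sub_le (E X : S → ℝ) {m y t : ℝ}
    (hpos : freeEnergy (fun σ => E σ + y * X σ) - freeEnergy E - y * m ≤ t)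
    (hneg : freeEnergy (fun σ => E σ + -y * X σ) - freeEnergy E - -y * m ≤ t) :
    y * gibbsAvg E (fun σ => |X σ - m|) ≤ Real.log 2 + t := by
  have hexp {z : ℝ} (h : freeEnergy (fun σ => E σ + z * X σ) - freeEnergy E - z * m ≤ t) :
      gibbsAvg E (fun σ => Real.exp (z * (X σ - m))) ≤ Real.exp t := by
    have hlog : freeEnergy (fun σ => E σ + z * (X σ - m)) - freeEnergy E ≤ t := by
      refine le_trans ?_ h
      have := freeEnergy_le_add (E := fun σ => E σ + z * (X σ - m))
        (E' := fun σ => E σ + z * X σ) (δ := -(z * m)) fun σ => by linarith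
      linarith
    rw [freeEnergy_add, add_sub_cancel_left] at hlog
    exact (Real.log_le_iff_le_exp ((Real.exp_pos _).trans_le (exp_gibbsAvg_le _ _))).1 hlog
  have habs (σ : S) : Real.exp (y * |X σ - m|) ≤
      Real.exp (y * (X σ - m)) + Real.exp (-y * (X σ - m)) := by
    rcases abs_choice (X σ - m) with h | h <;> rw [h]
    · exact le_add_of_nonneg_right (Real.exp_pos _).le
    · rw [mul_neg, ← neg_mul]
      exact le_add_of_nonneg_left (Real.exp_pos _).le
  rw [← gibbsAvg_const_mul, ← Real.exp_le_exp, Real.exp_add, Real.exp_log two_pos]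
  calc Real.exp (gibbsAvg E fun σ => y * |X σ - m|)
      ≤ gibbsAvg E fun σ => Real.exp (y * |X σ - m|) := exp_gibbsAvg_le _ _
    _ ≤ gibbsAvg E (fun σ => Real.exp (y * (X σ - m))) +
          gibbsAvg E fun σ => Real.exp (-y * (X σ - m)) :=
        (gibbsAvg_mono E habs).trans_eq (gibbsAvg_add E _ _)
    _ ≤ 2 * Real.exp t := by linarith [hexp hpos, hexp hneg]

theorem integrable_freeEnergyDeviation (c : S → ℝ) (a : ι → S → ℝ) :
    Integrable (freeEnergyDeviation c a) (stdNormal ι) :=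
  ((integrable_freeEnergy c a).sub (integrable_const _)).abs

theorem integral_freeEnergyDeviation_le (c : S → ℝ) {a : ι → S → ℝ} {C : ι → ℝ} {V : ℝ}
    (h : ∀ i σ, |a i σ| ≤ C i) (hV : ∑ i, C i ^ 2 ≤ V) :
    ∫ g, freeEnergyDeviation c a g ∂(stdNormal ι) ≤ √V :=
  (coordLipschitz_freeEnergy c h).integral_abs_sub_integral_le.trans (Real.sqrt_le_sqrt hV)

theorem mul_gibbsAvg_abs_sub_meanEnergy_le (c : S → ℝ) (a b : ι → S → ℝ) (y : ℝ) (g : ι → ℝ) :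
    y * gibbsAvg (gaussianEnergy c a g) (fun σ => |∑ i, b i σ * g i - meanEnergy c a b|) ≤
      Real.log 2 + ((meanFreeEnergy c fun i σ => a i σ + y * b i σ)
        + (meanFreeEnergy c fun i σ => a i σ + -y * b i σ) - 2 * meanFreeEnergy c a
        + (freeEnergyDeviation c (fun i σ => a i σ + y * b i σ) g
        + freeEnergyDeviation c (fun i σ => a i σ + -y * b i σ) g
        + 2 * freeEnergyDeviation c a g)) := by
  have hshift (z : ℝ) : (fun σ => gaussianEnergy c a g σ + z * ∑ i, b i σ * g i) =
      gaussianEnergy c (fun i σ => a i σ + z * b i σ) g := by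
    funext σ
    simp only [gaussianEnergy_add, mul_assoc, ← Finset.mul_sum]
  have hmean := meanFreeEnergy_add_mul_meanEnergy_le c a b
  have hdev (a' : ι → S → ℝ) : -freeEnergyDeviation c a' g ≤
      freeEnergy (gaussianEnergy c a' g) - meanFreeEnergy c a' ∧
        freeEnergy (gaussianEnergy c a' g) - meanFreeEnergy c a' ≤ freeEnergyDeviation c a' g :=
    abs_le.1 le_rfl
  obtain ⟨hpos, hpos'⟩ := hdev fun i σ => a i σ + y * b i σ
  obtain ⟨hneg, hneg'⟩ := hdev fun i σ => a i σ + -y * b i σ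
  refine mul_gibbsAvg_abs_sub_le _ _ ?_ ?_ <;>
  · rw [hshift]
    linarith [hmean y, hmean (-y), (hdev a).1, (hdev a).2]

/-- The deviation of the energy is controlled by the second difference of the free energy, which
is convex in `y`, and by the concentration of the free energy. -/
theorem mul_energyDeviation_le (c : S → ℝ) (a b : ι → S → ℝ) {C : ι → ℝ} {V y : ℝ}
    (ha : ∀ i σ, |a i σ| ≤ C i) (hpos : ∀ i σ, |a i σ + y * b i σ| ≤ C i)
    (hneg : ∀ i σ, |a i σ + -y * b i σ| ≤ C i) (hV : ∑ i, C i ^ 2 ≤ V) :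
    y * energyDeviation c a b ≤ Real.log 2 + 4 * √V
      + (meanFreeEnergy c fun i σ => a i σ + y * b i σ)
      + (meanFreeEnergy c fun i σ => a i σ + -y * b i σ) - 2 * meanFreeEnergy c a := by
  set a₁ : ι → S → ℝ := fun i σ => a i σ + y * b i σ
  set a₂ : ι → S → ℝ := fun i σ => a i σ + -y * b i σ
  set t := meanFreeEnergy c a₁ + meanFreeEnergy c a₂ - 2 * meanFreeEnergy c a
  have h_int := integrable_freeEnergyDeviation c (S := S) (ι := ι)
  have hpair : Integrable (fun g => freeEnergyDeviation c a₁ g + freeEnergyDeviation c a₂ g)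
      (stdNormal ι) := (h_int _).add (h_int _)
  have hsum : Integrable (fun g => freeEnergyDeviation c a₁ g + freeEnergyDeviation c a₂ g
      + 2 * freeEnergyDeviation c a g) (stdNormal ι) := hpair.add ((h_int a).const_mul 2)
  calc y * energyDeviation c a b
      ≤ ∫ g, (Real.log 2 + (t + (freeEnergyDeviation c a₁ g + freeEnergyDeviation c a₂ g
          + 2 * freeEnergyDeviation c a g))) ∂(stdNormal ι) := by
        rw [energyDeviation, ← integral_const_mul]
        exact integral_mono ((integrable_gibbsAvg c a fun σ =>
            ((integrable_linear fun i => b i σ).sub (integrable_const _)).abs).const_mul y)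
          ((integrable_const _).add ((integrable_const _).add hsum))
          (mul_gibbsAvg_abs_sub_meanEnergy_le c a b y)
    _ = Real.log 2 + t + ((∫ g, freeEnergyDeviation c a₁ g ∂(stdNormal ι))
          + (∫ g, freeEnergyDeviation c a₂ g ∂(stdNormal ι))
          + 2 * ∫ g, freeEnergyDeviation c a g ∂(stdNormal ι)) := by
        simp only [← add_assoc (Real.log 2) t]
        rw [integral_add (integrable_const _) hsum, integral_add hpair ((h_int a).const_mul 2),
          integral_add (h_int _) (h_int _), integral_const_mul, integral_const, probReal_univ,
          one_smul]
    _ ≤ _ := by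
        linarith [integral_freeEnergyDeviation_le c ha hV,
          integral_freeEnergyDeviation_le c hpos hV, integral_freeEnergyDeviation_le c hneg hV]

theorem mul_sum_energyDeviation_le (c : S → ℝ) (a b : ι → S → ℝ) {C : ι → ℝ} {V y : ℝ} {K : ℕ}
    (hC : ∀ k ≤ K + 1, ∀ i σ, |a i σ + k * y * b i σ| ≤ C i) (hV : ∑ i, C i ^ 2 ≤ V) :
    y * ∑ k ∈ Finset.range K, energyDeviation c (fun i σ => a i σ + (k + 1 : ℕ) * y * b i σ) b ≤
      K * (Real.log 2 + 4 * √V) + y * (meanEnergy c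
        (fun i σ => a i σ + (K + 1 : ℕ) * y * b i σ) b - meanEnergy c a b) := by
  set a' : ℕ → ι → S → ℝ := fun k i σ => a i σ + k * y * b i σ with ha'
  set Φ : ℕ → ℝ := fun k => meanFreeEnergy c (a' k)
  have hsucc (k : ℕ) : (fun i σ => a' k i σ + y * b i σ) = a' (k + 1) := by
    funext i σ
    simp only [ha']
    push_cast
    ring
  have hpred (k : ℕ) : (fun i σ => a' (k + 1) i σ + -y * b i σ) = a' k := by
    funext i σ
    simp only [ha']
    push_cast
    ring
  have hstep : ∀ k ∈ Finset.range K, y * energyDeviation c (a' (k + 1)) b ≤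
      (Real.log 2 + 4 * √V) + ((Φ (k + 1 + 1) - Φ (k + 1)) - (Φ (k + 1) - Φ k)) := by
    intro k hk
    have hkK := Finset.mem_range.1 hk
    have h := mul_energyDeviation_le c (a' (k + 1)) b (C := C) (y := y) (hC _ (by lia))
      (fun i σ => (congrArg abs (congrFun₂ (hsucc (k + 1)) i σ)).trans_le (hC _ (by lia) i σ))
      (fun i σ => (congrArg abs (congrFun₂ (hpred k) i σ)).trans_le (hC k (by lia) i σ)) hV
    rw [hsucc, hpred] at h
    linarith
  have hfirst : Φ 0 + y * meanEnergy c a b ≤ Φ 1 := by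
    have ha0 : a' 0 = a := by simp [ha']
    have h := meanFreeEnergy_add_mul_meanEnergy_le c (a' 0) b y
    rw [hsucc] at h
    exact ha0 ▸ h
  have hlast : Φ (K + 1) + -y * meanEnergy c (a' (K + 1)) b ≤ Φ K := by
    have h := meanFreeEnergy_add_mul_meanEnergy_le c (a' (K + 1)) b (-y)
    rwa [hpred] at h
  rw [Finset.mul_sum]
  calc _ ≤ _ := Finset.sum_le_sum hstep
    _ = K * (Real.log 2 + 4 * √V) + ((Φ (K + 1) - Φ K) - (Φ 1 - Φ 0)) := by
      rw [Finset.sum_add_distrib, Finset.sum_range_sub fun k => Φ (k + 1) - Φ k,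
        Finset.sum_const, Finset.card_range, nsmul_eq_mul]
    _ ≤ _ := by linarith

section GhirlandaGuerra

variable {R : S → S → ℝ} {φ : ℝ → ℝ} {v : ℝ} {a b : ι → S → ℝ}
  (hR : ∀ σ, R σ σ = 1) (hcov : ∀ σ ρ, ∑ i, b i σ * a i ρ = v * φ (R σ ρ)) (c : S → ℝ)
include hR hcov

theorem meanEnergy_eq_mul_sub : meanEnergy c a b =
    v * (φ 1 - replicaAvg (quenchedLaw c a) fun τ : Fin 2 → S => φ (R (τ 0) (τ 1))) := by
  have hrw : (fun σ ρ => ∑ i, b i σ * (a i σ - a i ρ)) =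
      fun σ ρ => v * φ 1 + -v * φ (R σ ρ) := by
    funext σ ρ
    simp only [mul_sub, Finset.sum_sub_distrib, hcov, hR]
    ring
  rw [meanEnergy, integral_gibbsAvg_linear, hrw, quenchedPairAvg_add, quenchedPairAvg_const,
    quenchedPairAvg_const_mul, ← replicaAvg_quenchedLaw_two c a fun σ ρ => φ (R σ ρ)]
  ring

theorem mul_ggDefect_quenchedLaw {n : ℕ} (l : Fin n) (f : (Fin n → S) → ℝ) :
    v * ggDefect R (quenchedLaw c a) l f φ =
      ∫ g, gibbsAvg (replicate n (gaussianEnergy c a g))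
        (fun τ => f τ * (∑ i, b i (τ l) * g i - meanEnergy c a b)) ∂(stdNormal ι) := by
  have hsplit : ∫ g, gibbsAvg (replicate n (gaussianEnergy c a g))
        (fun τ => f τ * (∑ i, b i (τ l) * g i - meanEnergy c a b)) ∂(stdNormal ι) =
      ∫ g, gibbsAvg (replicate n (gaussianEnergy c a g))
        (fun τ => f τ * ∑ i, b i (τ l) * g i) ∂(stdNormal ι) -
        meanEnergy c a b * replicaAvg (quenchedLaw c a) f := by
    rw [replicaAvg_quenchedLaw, ← integral_const_mul, ← integral_sub
      (integrable_gibbsAvg_replicate c a fun τ =>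
        (integrable_linear fun i => b i (τ l)).const_mul (f τ))
      ((integrable_gibbsAvg_replicate_const c a f).const_mul _)]
    simp only [mul_sub, mul_comm (f _) (meanEnergy c a b), gibbsAvg_sub, gibbsAvg_const_mul]
  rw [hsplit, integral_gibbsAvg_replicate_mul_linear, meanEnergy_eq_mul_sub hR hcov c]
  simp only [hcov, ← Finset.mul_sum, mul_left_comm _ v, replicaAvg_const_mul, ggDefect_apply]
  ring

theorem abs_mul_ggDefect_quenchedLaw_le {n : ℕ} (l : Fin n) {f : (Fin n → S) → ℝ}
    (hf : ∀ τ, |f τ| ≤ 1) :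
    |v * ggDefect R (quenchedLaw c a) l f φ| ≤ energyDeviation c a b := by
  have hdev (σ : S) :
      Integrable (fun g : ι → ℝ => ∑ i, b i σ * g i - meanEnergy c a b) (stdNormal ι) :=
    (integrable_linear fun i => b i σ).sub (integrable_const _)
  rw [mul_ggDefect_quenchedLaw hR hcov]
  refine abs_integral_le_integral_abs.trans (integral_mono
    (integrable_gibbsAvg_replicate c a fun τ => (hdev (τ l)).const_mul (f τ)).abs
    (integrable_gibbsAvg c a fun σ => (hdev σ).abs) fun g => ?_)
  refine (abs_gibbsAvg_le_gibbsAvg_abs _ _).trans (le_of_le_of_eq (gibbsAvg_mono _ fun τ => ?_)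
    (gibbsAvg_replicate_apply (gaussianEnergy c a g) l
      fun σ => |∑ i, b i σ * g i - meanEnergy c a b|))
  rw [abs_mul]
  exact mul_le_of_le_one_left (abs_nonneg _) (hf τ)

end GhirlandaGuerra

end EnergyDeviation

/-! ### Positivity of overlaps under a perturbation -/

section Perturbation

theorem sum_sum_update {α β : Type*} [Fintype α] [DecidableEq α] [Fintype β] (d : α)
    (G : (α → β) → ℝ) :
    ∑ x : α → β, ∑ k : β, G (Function.update x d k) = Fintype.card β * ∑ x, G x := by
  have hswap : Function.Involutive
      fun q : (α → β) × β => (Function.update q.1 d q.2, q.1 d) := by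
    rintro ⟨x, k⟩
    simp
  have hcomp : ∑ q : (α → β) × β, G (Function.update q.1 d q.2) = ∑ q : (α → β) × β, G q.1 :=
    Equiv.sum_comp hswap.toPerm fun q => G q.1
  rw [← Fintype.sum_prod_type' (f := fun x k => G (Function.update x d k)), hcomp,
    Fintype.sum_prod_type]
  simp [Finset.mul_sum]

variable {S ι : Type*} {D : ℕ} {A : ℝ} {R : S → S → ℝ} {b : ι → S → ℝ} {deg : ι → Fin D}
  {B : ι → ℝ}

/-- The coefficients obtained from `b` by multiplying its part of degree `d` by `x d`. -/
def scaleDegrees (b : ι → S → ℝ) (deg : ι → Fin D) (x : Fin D → ℝ) (i : ι) (σ : S) : ℝ :=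
  x (deg i) * b i σ

/-- The part of the coefficients `b` of degree `d`. -/
def degreePart (b : ι → S → ℝ) (deg : ι → Fin D) (d : Fin D) (i : ι) (σ : S) : ℝ :=
  if deg i = d then b i σ else 0

/-- Coefficients of a Gaussian energy whose part of degree `d` has covariance `A * R ^ (d + 1)`,
for an overlap kernel `R`. Adding this energy with generic weights on its parts enforces the
Ghirlanda–Guerra identities for `R`. -/
structure IsPerturbation [Fintype ι] (A : ℝ) (R : S → S → ℝ) (b : ι → S → ℝ)
    (deg : ι → Fin D) (B : ι → ℝ) : Prop where
  isOverlapKernel : IsOverlapKernel R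
  abs_coeff_le : ∀ i σ, |b i σ| ≤ B i
  sum_sq_le : ∑ i, B i ^ 2 ≤ D * A
  sum_degreePart_mul : ∀ d σ ρ, ∑ i, degreePart b deg d i σ * b i ρ = A * R σ ρ ^ (d + 1 : ℕ)

theorem scaleDegrees_update (x : Fin D → ℝ) (d : Fin D) (u v : ℝ) (i : ι) (σ : S) :
    scaleDegrees b deg (Function.update x d (u + v)) i σ =
      scaleDegrees b deg (Function.update x d u) i σ + v * degreePart b deg d i σ := by
  by_cases h : deg i = d
  · simp [scaleDegrees, degreePart, h, add_mul]
  · simp [scaleDegrees, degreePart, h]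

/-- The points `1 + j / (K + 1)`, `1 ≤ j ≤ K`, in each coordinate. -/
noncomputable def gridPoint {K : ℕ} (x : Fin D → Fin K) (d : Fin D) : ℝ :=
  1 + (x d + 1 : ℕ) * (1 / (K + 1))

theorem one_le_gridPoint {K : ℕ} (x : Fin D → Fin K) (d : Fin D) : 1 ≤ gridPoint x d :=
  le_add_of_nonneg_right (by positivity)

theorem one_add_mul_one_div_le_two {k K : ℕ} (hk : k ≤ K + 1) :
    1 + (k : ℝ) * (1 / (K + 1)) ≤ 2 := by
  have : (k : ℝ) ≤ K + 1 := by exact_mod_cast hk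
  rw [mul_one_div]
  linarith [div_le_one_of_le₀ this (by positivity)]

theorem gridPoint_le_two {K : ℕ} (x : Fin D → Fin K) (d : Fin D) : gridPoint x d ≤ 2 :=
  one_add_mul_one_div_le_two (by have := (x d).isLt; lia)

theorem gridPoint_update {K : ℕ} (x : Fin D → Fin K) (d : Fin D) (k : Fin K) :
    gridPoint (Function.update x d k) =
      Function.update (gridPoint x) d (1 + (k + 1 : ℕ) * (1 / (K + 1))) := by
  funext d'
  rcases eq_or_ne d' d with rfl | h
  · simp [gridPoint]
  · simp [gridPoint, h]

variable [Fintype S] [Fintype ι]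

/-- The deviation of the part of degree `d` of a perturbation with weights `x`. -/
noncomputable def degreeDeviation (c : S → ℝ) (b : ι → S → ℝ) (deg : ι → Fin D)
    (x : Fin D → ℝ) (d : Fin D) : ℝ :=
  energyDeviation c (scaleDegrees b deg x) (degreePart b deg d)

namespace IsPerturbation

variable (h : IsPerturbation A R b deg B)
include h

omit [Fintype S] in
theorem sum_degreePart_mul_scaleDegrees (x : Fin D → ℝ) (d : Fin D) (σ ρ : S) :
    ∑ i, degreePart b deg d i σ * scaleDegrees b deg x i ρ = x d * A * R σ ρ ^ (d + 1 : ℕ) := by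
  rw [mul_assoc, ← h.sum_degreePart_mul, Finset.mul_sum]
  refine Finset.sum_congr rfl fun i _ => ?_
  by_cases hi : deg i = d
  · simp only [scaleDegrees, hi]
    ring
  · simp [degreePart, hi]

omit [Fintype S] in
theorem abs_scaleDegrees_le {x : Fin D → ℝ} (hx₀ : ∀ d, 0 ≤ x d) (hx₂ : ∀ d, x d ≤ 2) (i : ι)
    (σ : S) : |scaleDegrees b deg x i σ| ≤ 2 * B i := by
  rw [scaleDegrees, abs_mul, abs_of_nonneg (hx₀ _)]
  exact mul_le_mul (hx₂ _) (h.abs_coeff_le i σ) (abs_nonneg _) zero_le_two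

variable [Nonempty S]

theorem abs_ggDefect_le (hA : 0 < A) (c : S → ℝ) {x : Fin D → ℝ} (d : Fin D) (hx : 1 ≤ x d)
    {n : ℕ} (l : Fin n) {f : (Fin n → S) → ℝ} (hf : ∀ τ, |f τ| ≤ 1) :
    |ggDefect R (quenchedLaw c (scaleDegrees b deg x)) l f fun z => z ^ (d + 1 : ℕ)| ≤
      degreeDeviation c b deg x d / A := by
  have hdefect := abs_mul_ggDefect_quenchedLaw_le (φ := fun z => z ^ (d + 1 : ℕ))
    h.isOverlapKernel.self (h.sum_degreePart_mul_scaleDegrees x d) c l hf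
  rw [abs_mul, abs_of_pos (by positivity)] at hdefect
  rw [le_div_iff₀' hA]
  refine le_trans ?_ hdefect
  gcongr
  exact le_mul_of_one_le_left hA.le hx

theorem meanEnergy_mem_Icc (hA : 0 ≤ A) (c : S → ℝ) {x : Fin D → ℝ} (d : Fin D)
    (hx₀ : 0 ≤ x d) (hx₂ : x d ≤ 2) :
    meanEnergy c (scaleDegrees b deg x) (degreePart b deg d) ∈ Set.Icc 0 (4 * A) := by
  have havg := abs_le.1 ((isReplicaLaw_quenchedLaw c (scaleDegrees b deg x)).abs_replicaAvg_le
    (f := fun τ : Fin 2 → S => R (τ 0) (τ 1) ^ (d + 1 : ℕ)) (C := 1) fun τ => by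
      rw [abs_pow]
      exact pow_le_one₀ (abs_nonneg _) (h.isOverlapKernel.abs_le_one _ _))
  rw [meanEnergy_eq_mul_sub (φ := fun z => z ^ (d + 1 : ℕ)) h.isOverlapKernel.self
    (h.sum_degreePart_mul_scaleDegrees x d), one_pow]
  refine ⟨mul_nonneg (by positivity) (by linarith), ?_⟩
  calc _ ≤ 2 * A * 2 := by
        gcongr
        · linarith
        · linarith
    _ = 4 * A := by ring

theorem sum_degreeDeviation_update_le (hA : 0 ≤ A) (c : S → ℝ) {x : Fin D → ℝ} (d : Fin D)
    (hx₀ : ∀ d, 0 ≤ x d) (hx₂ : ∀ d, x d ≤ 2) (K : ℕ) :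
    ∑ k ∈ Finset.range K,
        degreeDeviation c b deg (Function.update x d (1 + (k + 1 : ℕ) * (1 / (K + 1)))) d ≤
      (K + 1) * K * (Real.log 2 + 4 * √(4 * D * A)) + 4 * A := by
  set y : ℝ := 1 / (K + 1)
  set X : ℕ → Fin D → ℝ := fun k => Function.update x d (1 + k * y) with hX
  have hX₀ (k : ℕ) (d' : Fin D) : 0 ≤ X k d' := by
    rcases eq_or_ne d' d with rfl | hd
    · simp only [hX, Function.update_self]
      positivity
    · simpa only [hX, Function.update_of_ne hd] using hx₀ d'
  have hX₂ {k : ℕ} (hk : k ≤ K + 1) (d' : Fin D) : X k d' ≤ 2 := by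
    rcases eq_or_ne d' d with rfl | hd
    · simpa only [hX, Function.update_self] using one_add_mul_one_div_le_two hk
    · simpa only [hX, Function.update_of_ne hd] using hx₂ d'
  have hline (k : ℕ) : (fun i σ => scaleDegrees b deg (Function.update x d 1) i σ +
      k * y * degreePart b deg d i σ) = scaleDegrees b deg (X k) := by
    funext i σ
    exact (scaleDegrees_update x d 1 _ i σ).symm
  have hX0 : Function.update x d 1 = X 0 := by simp [hX]
  have hV : ∑ i, (2 * B i) ^ 2 ≤ 4 * D * A := by
    simp only [mul_pow, ← Finset.mul_sum]
    linarith [h.sum_sq_le]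
  have htel := mul_sum_energyDeviation_le c (scaleDegrees b deg (Function.update x d 1))
    (degreePart b deg d) (C := fun i => 2 * B i) (y := y) (K := K)
    (fun k hk i σ => (congrArg abs (congrFun₂ (hline k) i σ)).trans_le
      (h.abs_scaleDegrees_le (hX₀ k) (hX₂ hk) i σ)) hV
  simp only [hline] at htel
  have hfirst := (h.meanEnergy_mem_Icc hA c d (hX₀ 0 d) (hX₂ (by lia) d)).1
  have hlast := (h.meanEnergy_mem_Icc hA c d (hX₀ (K + 1) d) (hX₂ le_rfl d)).2
  rw [← hX0] at hfirst
  have hy0 : 0 < y := by positivity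
  have hKy : (K + 1) * y = 1 := mul_one_div_cancel (by positivity)
  refine le_of_mul_le_mul_left (htel.trans ?_) hy0
  calc _ ≤ K * (Real.log 2 + 4 * √(4 * D * A)) + y * (4 * A) := by
        gcongr
        linarith
    _ = _ := by linear_combination -K * (Real.log 2 + 4 * √(4 * D * A)) * hKy

theorem sum_degreeDeviation_gridPoint_le (hA : 0 ≤ A) (c : S → ℝ) (d : Fin D) {K : ℕ}
    (hK : 0 < K) :
    ∑ x : Fin D → Fin K, degreeDeviation c b deg (gridPoint x) d ≤
      Fintype.card (Fin D → Fin K) *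
        ((K + 1) * (Real.log 2 + 4 * √(4 * D * A)) + 4 * A / K) := by
  have hline (x : Fin D → Fin K) :
      ∑ k : Fin K, degreeDeviation c b deg (gridPoint (Function.update x d k)) d ≤
        (K + 1) * K * (Real.log 2 + 4 * √(4 * D * A)) + 4 * A := by
    simpa only [gridPoint_update, Finset.sum_range] using h.sum_degreeDeviation_update_le hA c d
      (fun d => zero_le_one.trans (one_le_gridPoint x d)) (gridPoint_le_two x) K
  have hsum := Finset.sum_le_sum fun x (_ : x ∈ Finset.univ) => hline x
  rw [sum_sum_update d fun x : Fin D → Fin K => degreeDeviation c b deg (gridPoint x) d,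
    Finset.sum_const, Finset.card_univ, nsmul_eq_mul, Fintype.card_fin] at hsum
  have hK' : (0 : ℝ) < K := by exact_mod_cast hK
  refine le_of_mul_le_mul_left (hsum.trans_eq ?_) hK'
  field_simp

end IsPerturbation

universe u v

theorem exists_quenchedPairAvg_max_neg_le {ε : ℝ} (hε : 0 < ε) : ∃ (D : ℕ) (C : ℝ), 0 ≤ C ∧
    ∀ (S : Type u) [Fintype S] [Nonempty S] (ι : Type v) [Fintype ι] (A : ℝ) (R : S → S → ℝ)
      (b : ι → S → ℝ) (deg : ι → Fin D) (B : ι → ℝ), 0 < A → IsPerturbation A R b deg B →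
      ∀ (c : S → ℝ) (x : Fin D → ℝ), (∀ d, 1 ≤ x d) →
      quenchedPairAvg c (scaleDegrees b deg x) (fun σ ρ => max (-R σ ρ) 0) ≤
        ε + C * ∑ d, degreeDeviation c b deg x d / A := by
  obtain ⟨D, C, hC, hpos⟩ := exists_replicaAvg_max_neg_le.{u} (ε := ε / 4) (by positivity)
  refine ⟨D, C, hC, fun S _ _ ι _ A R b deg B hA h c x hx => ?_⟩
  have hGG : GGDefectLE R (quenchedLaw c (scaleDegrees b deg x)) D
      fun d => if hd : d < D then degreeDeviation c b deg x ⟨d, hd⟩ / A else 0 := by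
    intro d hd n l f hf
    simp only [dif_pos hd]
    exact h.abs_ggDefect_le hA c ⟨d, hd⟩ (hx _) l hf
  have hneg := hpos S R _ _ h.isOverlapKernel (isReplicaLaw_quenchedLaw c _) hGG
  rw [replicaAvg_quenchedLaw_two c _ fun σ ρ => max (-R σ ρ) 0, Finset.sum_range] at hneg
  simpa only [Fin.is_lt, dite_true, Fin.eta, mul_div_cancel₀ ε (four_ne_zero' ℝ)] using hneg

theorem tendsto_const_add_mul_sqrt_div_atTop (u v w : ℝ) :
    Tendsto (fun A : ℝ => (u + v * √(w * A)) / A) atTop (𝓝 0) := by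
  have hsqrt : Tendsto (fun A : ℝ => √A / A) atTop (𝓝 0) := by
    simpa only [Real.sqrt_div_self'] using tendsto_const_nhds.div_atTop Real.tendsto_sqrt_atTop
  have hconst : Tendsto (fun A : ℝ => u / A) atTop (𝓝 0) := tendsto_const_nhds.div_atTop tendsto_id
  have hsum := hconst.add (hsqrt.const_mul (v * √w))
  rw [mul_zero, add_zero] at hsum
  refine hsum.congr' ((eventually_ge_atTop 0).mono fun A hA => ?_)
  simp only [Real.sqrt_mul' w hA]
  ring

theorem exists_sum_quenchedPairAvg_max_neg_le {ε : ℝ} (hε : 0 < ε) :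
    ∃ D K : ℕ, 0 < K ∧ ∀ᶠ A : ℝ in atTop,
      ∀ (S : Type u) [Fintype S] [Nonempty S] (ι : Type v) [Fintype ι] (R : S → S → ℝ)
        (b : ι → S → ℝ) (deg : ι → Fin D) (B : ι → ℝ), IsPerturbation A R b deg B →
      ∀ c : S → ℝ, ∑ x : Fin D → Fin K,
        quenchedPairAvg c (scaleDegrees b deg (gridPoint x)) (fun σ ρ => max (-R σ ρ) 0) ≤
          Fintype.card (Fin D → Fin K) * ε := by
  obtain ⟨D, C, hC, hpos⟩ := exists_quenchedPairAvg_max_neg_le.{u, v} (ε := ε / 2) (by positivity)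
  obtain ⟨K, hK⟩ := exists_nat_gt (C * D * 16 / ε)
  have hK' : (0 : ℝ) < K := hK.trans_le' (by positivity)
  have hfluct := ((tendsto_const_add_mul_sqrt_div_atTop (Real.log 2) 4 (4 * D)).const_mul
    (C * D * (K + 1))).eventually_le_const
      (show C * D * (K + 1) * 0 < ε / 4 by rw [mul_zero]; positivity)
  refine ⟨D, K, by exact_mod_cast hK', ?_⟩
  filter_upwards [hfluct, eventually_gt_atTop 0] with A hA hA0 S _ _ ι _ R b deg B h c
  set N : ℝ := ((Fintype.card (Fin D → Fin K) : ℕ) : ℝ)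
  have hgrid : C * D * 4 / K ≤ ε / 4 := by
    rw [div_le_iff₀ hK']
    rw [div_lt_iff₀ hε] at hK
    linarith
  calc _ ≤ ∑ x : Fin D → Fin K,
          (ε / 2 + C * ∑ d, degreeDeviation c b deg (gridPoint x) d / A) :=
        Finset.sum_le_sum fun x _ =>
          hpos S ι A R b deg B hA0 h c (gridPoint x) (one_le_gridPoint x)
    _ = N * (ε / 2) +
          C * ∑ d, (∑ x : Fin D → Fin K, degreeDeviation c b deg (gridPoint x) d) / A := by
        rw [Finset.sum_add_distrib, Finset.sum_const, Finset.card_univ, nsmul_eq_mul,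
          ← Finset.mul_sum, Finset.sum_comm]
        simp only [Finset.sum_div]
        rfl
    _ ≤ N * (ε / 2) + C * ∑ d : Fin D,
          (N * ((K + 1) * (Real.log 2 + 4 * √(4 * D * A)) + 4 * A / K)) / A := by
        gcongr with d
        exact h.sum_degreeDeviation_gridPoint_le hA0.le c d (by exact_mod_cast hK')
    _ = N * (ε / 2 + C * D * (K + 1) * ((Real.log 2 + 4 * √(4 * D * A)) / A)
          + C * D * 4 / K) := by
        rw [Finset.sum_const, Finset.card_univ, Fintype.card_fin, nsmul_eq_mul]
        field_simp
        ring
    _ ≤ N * ε := by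
        gcongr
        linarith

end Perturbation

/-! ### Elementary symmetric sums and powers of averages -/

section SymmetricSums

variable {V : Type*} [Fintype V]

theorem add_one_mul_sum_powersetCard_prod [DecidableEq V] (p : ℕ) (z : V → ℝ) :
    (p + 1) * ∑ T ∈ Finset.univ.powersetCard (p + 1), ∏ v ∈ T, z v =
      ∑ T ∈ Finset.univ.powersetCard p, ∑ v ∈ Tᶜ, z v * ∏ w ∈ T, z w := by
  have hcard : (p + 1) * ∑ T ∈ Finset.univ.powersetCard (p + 1), ∏ v ∈ T, z v =
      ∑ T ∈ Finset.univ.powersetCard (p + 1), ∑ _v ∈ T, ∏ w ∈ T, z w := by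
    rw [Finset.mul_sum]
    refine Finset.sum_congr rfl fun T hT => ?_
    rw [Finset.sum_const, (Finset.mem_powersetCard.1 hT).2, nsmul_eq_mul, Nat.cast_add_one]
  rw [hcard, Finset.sum_sigma', Finset.sum_sigma']
  refine Finset.sum_bij' (fun q _ => ⟨q.1.erase q.2, q.2⟩) (fun q _ => ⟨insert q.2 q.1, q.2⟩)
    ?_ ?_ ?_ ?_ ?_ <;>
    simp +contextual only [Finset.mem_sigma, Finset.mem_powersetCard,
      Finset.subset_univ, true_and, Finset.mem_compl, Finset.card_erase_of_mem,
      Finset.card_insert_of_notMem, Finset.insert_erase, Finset.erase_insert, Finset.mul_prod_erase,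
      Finset.notMem_erase, Finset.mem_insert_self, add_tsub_cancel_right, not_false_eq_true,
      and_self, implies_true]

variable {z : V → ℝ} (hz : ∀ v, |z v| ≤ 1)
include hz

omit [Fintype V] in
theorem abs_sum_le_card (T : Finset V) : |∑ v ∈ T, z v| ≤ T.card :=
  (Finset.abs_sum_le_sum_abs _ _).trans <|
    (Finset.sum_le_card_nsmul T _ 1 fun v _ => hz v).trans_eq (by simp)

theorem abs_add_one_mul_sum_powersetCard_prod_sub_le (p : ℕ) :
    |(p + 1) * ∑ T ∈ Finset.univ.powersetCard (p + 1), ∏ v ∈ T, z v -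
        (∑ v, z v) * ∑ T ∈ Finset.univ.powersetCard p, ∏ v ∈ T, z v| ≤
      p * (Fintype.card V : ℝ) ^ p := by
  classical
  have hprod (T : Finset V) : |∏ v ∈ T, z v| ≤ 1 := by
    rw [Finset.abs_prod]
    exact Finset.prod_le_one (fun _ _ => abs_nonneg _) fun v _ => hz v
  have hterm : ∀ T ∈ (Finset.univ : Finset V).powersetCard p,
      |∑ v ∈ Tᶜ, z v * ∏ w ∈ T, z w - (∑ v, z v) * ∏ w ∈ T, z w| ≤ p := by
    intro T hT
    rw [← Finset.sum_mul, ← sub_mul, ← Finset.sum_add_sum_compl T, sub_add_cancel_right, neg_mul,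
      abs_neg, abs_mul, ← (Finset.mem_powersetCard.1 hT).2]
    exact (mul_le_of_le_one_right (abs_nonneg _) (hprod T)).trans (abs_sum_le_card hz T)
  rw [add_one_mul_sum_powersetCard_prod, Finset.mul_sum, ← Finset.sum_sub_distrib]
  calc _ ≤ ∑ _T ∈ (Finset.univ : Finset V).powersetCard p, (p : ℝ) :=
        (Finset.abs_sum_le_sum_abs _ _).trans (Finset.sum_le_sum hterm)
    _ = p * ((Fintype.card V).choose p : ℕ) := by
        rw [Finset.sum_const, Finset.card_powersetCard, Finset.card_univ, nsmul_eq_mul, mul_comm]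
    _ ≤ p * (Fintype.card V : ℝ) ^ p := by
        gcongr
        exact_mod_cast Nat.choose_le_pow _ p

theorem abs_factorial_mul_sum_powersetCard_prod_sub_le (p : ℕ) :
    |(p + 1).factorial * ∑ T ∈ Finset.univ.powersetCard (p + 1), ∏ v ∈ T, z v -
        (∑ v, z v) ^ (p + 1)| ≤ (p + 1).factorial * (Fintype.card V : ℝ) ^ p := by
  induction p with
  | zero => simp [Finset.powersetCard_one]
  | succ p ih =>
    have hstep := abs_add_one_mul_sum_powersetCard_prod_sub_le hz (p + 1)
    have hsum := abs_sum_le_card hz Finset.univ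
    set n : ℝ := ((Fintype.card V : ℕ) : ℝ)
    set E : ℕ → ℝ := fun m => ∑ T ∈ Finset.univ.powersetCard m, ∏ v ∈ T, z v
    calc |((p + 1 + 1).factorial : ℝ) * E (p + 1 + 1) - (∑ v, z v) ^ (p + 1 + 1)|
        = |(p + 1).factorial * (((p + 1 : ℕ) + 1) * E (p + 1 + 1) - (∑ v, z v) * E (p + 1)) +
            (∑ v, z v) * ((p + 1).factorial * E (p + 1) - (∑ v, z v) ^ (p + 1))| := by
          rw [Nat.factorial_succ (p + 1)]
          push_cast
          ring_nf
      _ ≤ (p + 1).factorial * ((p + 1 : ℕ) * n ^ (p + 1)) +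
            n * ((p + 1).factorial * n ^ p) := by
          refine (abs_add_le _ _).trans ?_
          rw [abs_mul, abs_mul, Nat.abs_cast]
          gcongr
          exact hsum
      _ = (p + 1 + 1).factorial * n ^ (p + 1) := by
          rw [Nat.factorial_succ (p + 1)]
          push_cast
          ring

end SymmetricSums

section PowerMean

variable {J : Type*} [Fintype J] {w x : J → ℝ}

theorem max_zero_pow_le {u : ℝ} (hu : |u| ≤ 1) {p : ℕ} (hp : p ≠ 0) :
    max u 0 ^ p ≤ u ^ p + max (-u) 0 := by
  rcases le_total 0 u with h | h
  · simp [h]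
  · have hpow : -u ^ p ≤ -u := by
      calc -u ^ p ≤ |u| ^ p := (neg_le_abs _).trans_eq (abs_pow u p)
        _ ≤ |u| := pow_le_of_le_one (abs_nonneg _) hu hp
        _ = -u := abs_of_nonpos h
    rw [max_eq_right h, max_eq_left (neg_nonneg.2 h), zero_pow hp]
    linarith

theorem pow_sum_mul_le_sum_mul_pow_add (hw : ∀ j, 0 ≤ w j) (hw1 : ∑ j, w j = 1)
    (hx : ∀ j, |x j| ≤ 1) {p : ℕ} (hp : p ≠ 0) :
    (∑ j, w j * x j) ^ p ≤ ∑ j, w j * x j ^ p + (p + 1) * ∑ j, w j * max (-x j) 0 := by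
  set S : ℝ := ∑ j, w j * x j
  set P : ℝ := ∑ j, w j * max (x j) 0 with hP
  set Q : ℝ := ∑ j, w j * max (-x j) 0 with hQ
  have hPQ : S = P - Q := by
    rw [hP, hQ, ← Finset.sum_sub_distrib]
    exact Finset.sum_congr rfl fun j _ => by rw [← mul_sub, max_zero_sub_max_neg_zero_eq_self]
  have hQ0 : 0 ≤ Q := Finset.sum_nonneg fun j _ => mul_nonneg (hw j) (le_max_right _ _)
  have habs {u : J → ℝ} (hu : ∀ j, |u j| ≤ 1) : |∑ j, w j * u j| ≤ 1 := by
    calc |∑ j, w j * u j| ≤ ∑ j, w j * 1 := by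
          refine (Finset.abs_sum_le_sum_abs _ _).trans (Finset.sum_le_sum fun j _ => ?_)
          rw [abs_mul, abs_of_nonneg (hw j)]
          exact mul_le_mul_of_nonneg_left (hu j) (hw j)
      _ = 1 := by simp [hw1]
  have hPabs : |P| ≤ 1 := habs fun j => by
    rw [abs_of_nonneg (le_max_right _ _)]
    exact max_le ((le_abs_self _).trans (hx j)) zero_le_one
  calc S ^ p ≤ P ^ p + |S - P| * p * max |S| |P| ^ (p - 1) := by
        linarith [le_abs_self (S ^ p - P ^ p), abs_pow_sub_pow_le S P p]
    _ ≤ P ^ p + Q * p * 1 := by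
        rw [show S - P = -Q by linarith, abs_neg, abs_of_nonneg hQ0]
        gcongr
        exact pow_le_one₀ (abs_nonneg S |>.trans (le_max_left _ _)) (max_le (habs hx) hPabs)
    _ ≤ ∑ j, w j * (x j ^ p + max (-x j) 0) + Q * p * 1 := by
        gcongr
        refine (Real.pow_arith_mean_le_arith_mean_pow _ _ _ (fun j _ => hw j) hw1
          (fun j _ => le_max_right _ _) p).trans (Finset.sum_le_sum fun j _ => ?_)
        exact mul_le_mul_of_nonneg_left (max_zero_pow_le (hx j) hp) (hw j)
    _ = ∑ j, w j * x j ^ p + (p + 1) * Q := by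
        simp only [mul_add, Finset.sum_add_distrib]
        ring

theorem mul_pow_le_sum_mul_pow_add (hw : ∀ j, 0 ≤ w j) (hw0 : 0 < ∑ j, w j)
    (hx : ∀ j, |x j| ≤ 1) {p : ℕ} (hp : p ≠ 0) {y : ℝ}
    (hy : (∑ j, w j) * y = ∑ j, w j * x j) :
    (∑ j, w j) * y ^ p ≤ ∑ j, w j * x j ^ p + (p + 1) * ∑ j, w j * max (-x j) 0 := by
  set W : ℝ := ∑ j, w j with hW
  have hnorm (u : J → ℝ) : ∑ j, w j / W * u j = (∑ j, w j * u j) / W := by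
    rw [Finset.sum_div]
    exact Finset.sum_congr rfl fun j _ => div_mul_eq_mul_div _ _ _
  have h := pow_sum_mul_le_sum_mul_pow_add (fun j => div_nonneg (hw j) hw0.le)
    (by rw [← Finset.sum_div, ← hW, div_self hw0.ne']) hx hp
  rw [hnorm, hnorm, hnorm, ← hy, mul_div_cancel_left₀ y hw0.ne', mul_div, ← add_div] at h
  exact (le_div_iff₀' hw0).1 h

end PowerMean

/-! ### Interpolation between independent Gaussian energies -/

section BlockInterpolation

variable {S κ ι X : Type*} [Fintype S] [Nonempty S] [Fintype κ] [Fintype ι] [Fintype X]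

omit [Fintype S] [Nonempty S] [Fintype κ] [Fintype ι] in
theorem rotation_sumElim (a b : κ → S → ℝ) (f : ι → S → ℝ) (θ : ℝ) :
    rotation (Sum.elim a 0) (Sum.elim b 0) (Sum.elim 0 f) θ =
      Sum.elim (fun i σ => Real.sin θ * a i σ + Real.cos θ * b i σ) f := by
  ext (i | i) σ <;> simp [rotation]

theorem hasDerivAt_meanFreeEnergy_sumElim (c : S → ℝ) {a b : κ → S → ℝ}
    (hab : ∀ i σ ρ, a i σ * b i ρ = 0) (f : ι → S → ℝ) (θ : ℝ) :
    HasDerivAt (fun θ => meanFreeEnergy c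
        (Sum.elim (fun i σ => Real.sin θ * a i σ + Real.cos θ * b i σ) f))
      (Real.sin θ * Real.cos θ * quenchedPairAvg c
        (Sum.elim (fun i σ => Real.sin θ * a i σ + Real.cos θ * b i σ) f) fun σ ρ =>
          (∑ i, a i σ * a i σ - ∑ i, b i σ * b i σ) - (∑ i, a i σ * a i ρ - ∑ i, b i σ * b i ρ))
      θ := by
  have h := hasDerivAt_meanFreeEnergy_rotation c (a := Sum.elim a 0) (b := Sum.elim b 0)
    (f := Sum.elim 0 f) (by rintro (i | i) σ ρ <;> simp [hab])
    (by rintro (i | i) σ ρ <;> simp) (by rintro (i | i) σ ρ <;> simp) θ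
  simpa only [rotation_sumElim, Fintype.sum_sum_type, Sum.elim_inl, Sum.elim_inr, Pi.zero_apply,
    mul_zero, Finset.sum_const_zero, add_zero] using h

theorem sum_meanFreeEnergy_sumElim_le (c : S → ℝ) {a b : κ → S → ℝ} {f : X → ι → S → ℝ}
    (hab : ∀ i σ ρ, a i σ * b i ρ = 0) {k : S → S → ℝ} {C : ℝ} (hC : 0 ≤ C)
    (hk : ∀ σ ρ, -k σ ρ ≤
      (∑ i, a i σ * a i σ - ∑ i, b i σ * b i σ) - (∑ i, a i σ * a i ρ - ∑ i, b i σ * b i ρ))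
    (h : ∀ a' : κ → S → ℝ, ∑ x, quenchedPairAvg c (Sum.elim a' (f x)) k ≤ C) :
    ∑ x, meanFreeEnergy c (Sum.elim b (f x)) ≤
      ∑ x, meanFreeEnergy c (Sum.elim a (f x)) + 2 * C := by
  set path : ℝ → κ → S → ℝ := fun θ i σ => Real.sin θ * a i σ + Real.cos θ * b i σ with hpath
  set gap : S → S → ℝ := fun σ ρ =>
    (∑ i, a i σ * a i σ - ∑ i, b i σ * b i σ) - (∑ i, a i σ * a i ρ - ∑ i, b i σ * b i ρ)
  have hderiv (θ : ℝ) : HasDerivAt (fun θ => ∑ x, meanFreeEnergy c (Sum.elim (path θ) (f x)))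
      (∑ x, Real.sin θ * Real.cos θ * quenchedPairAvg c (Sum.elim (path θ) (f x)) gap) θ :=
    HasDerivAt.fun_sum fun x _ => hasDerivAt_meanFreeEnergy_sumElim c hab (f x) θ
  obtain ⟨θ, ⟨hθ0, hθ1⟩, hslope⟩ := exists_hasDerivAt_eq_slope _ _ (half_pos Real.pi_pos)
    (fun θ _ => (hderiv θ).continuousAt.continuousWithinAt) fun θ _ => hderiv θ
  have hgap : -C ≤ ∑ x, quenchedPairAvg c (Sum.elim (path θ) (f x)) gap := by
    have hmono := Finset.sum_le_sum fun x (_ : x ∈ Finset.univ) =>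
      quenchedPairAvg_mono c (Sum.elim (path θ) (f x)) fun σ ρ =>
        (neg_one_mul (k σ ρ)).trans_le (hk σ ρ)
    simp only [quenchedPairAvg_const_mul, ← Finset.mul_sum] at hmono
    linarith [h (path θ)]
  have hsin : 0 ≤ Real.sin θ := Real.sin_nonneg_of_nonneg_of_le_pi hθ0.le (by linarith)
  have hcos : 0 ≤ Real.cos θ := Real.cos_nonneg_of_neg_pi_div_two_le_of_le (by linarith) hθ1.le
  have hsc : Real.sin θ * Real.cos θ ≤ 1 :=
    mul_le_one₀ (Real.sin_le_one θ) hcos (Real.cos_le_one θ)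
  have hbound : -C ≤ Real.sin θ * Real.cos θ *
      ∑ x, quenchedPairAvg c (Sum.elim (path θ) (f x)) gap := by
    nlinarith [mul_nonneg hsin hcos]
  rw [Finset.mul_sum, hslope, le_div_iff₀ (by linarith [Real.pi_pos])] at hbound
  simp only [hpath, Real.sin_zero, Real.cos_zero, Real.sin_pi_div_two, Real.cos_pi_div_two,
    zero_mul, one_mul, zero_add, add_zero] at hbound
  nlinarith [mul_le_mul_of_nonneg_left Real.pi_le_four hC]

theorem sum_quenchedPairAvg_blocks_le {J : Type*} [Fintype J] [DecidableEq J] [Nonempty X]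
    (B : J → X → ι → S → ℝ) (j : J) {k : S → S → ℝ} {C : ℝ}
    (h : ∀ c, ∑ y, quenchedPairAvg c (B j y) k ≤ Fintype.card X * C) (a : κ → S → ℝ)
    (c : S → ℝ) :
    ∑ x : J → X, quenchedPairAvg c (Sum.elim a fun i : J × ι => B i.1 (x i.1) i.2) k ≤
      Fintype.card (J → X) * C := by
  have hcond (x : J → X) : ∑ y, quenchedPairAvg c
      (Sum.elim a fun i : J × ι => B i.1 (Function.update x j y i.1) i.2) k ≤
        Fintype.card X * C := by
    refine sum_quenchedPairAvg_le_of_comp (e := fun i : ι => (Sum.inr (j, i) : κ ⊕ J × ι))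
      (Sum.inr_injective.comp (Prod.mk_right_injective j)) ?_ ?_ c
    · rintro y y' (i | ⟨j', i⟩) hi
      · rfl
      · have hj : j' ≠ j := fun h => hi ⟨i, by rw [h]⟩
        simp only [Sum.elim_inr, Function.update_of_ne hj]
    · simpa using h
  have hsum := Finset.sum_le_sum fun x (_ : x ∈ Finset.univ) => hcond x
  rw [sum_sum_update j fun x => quenchedPairAvg c
      (Sum.elim a fun i : J × ι => B i.1 (x i.1) i.2) k,
    Finset.sum_const, nsmul_eq_mul, Finset.card_univ, mul_left_comm] at hsum
  exact le_of_mul_le_mul_left hsum (Nat.cast_pos.2 Fintype.card_pos)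

end BlockInterpolation

/-! ### The `p`-spin Hamiltonian -/

section Hamiltonian

variable {n p : ℕ}

/-- The value `±1` of a spin encoded by a Boolean. -/
def spin (b : Bool) : ℝ := if b then 1 else -1

theorem spin_mul_self (b : Bool) : spin b * spin b = 1 := by
  cases b <;> simp [spin]

theorem abs_spin (b : Bool) : |spin b| = 1 := by
  cases b <;> simp [spin]

/-- The overlap `n⁻¹ ∑ᵢ σᵢ ρᵢ` of two spin configurations. -/
noncomputable def overlap (σ ρ : Fin n → Bool) : ℝ := (∑ i, spin (σ i) * spin (ρ i)) / n

theorem natCast_mul_overlap (σ ρ : Fin n → Bool) :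
    n * overlap σ ρ = ∑ i, spin (σ i) * spin (ρ i) := by
  rcases n.eq_zero_or_pos with rfl | hn
  · simp
  · exact mul_div_cancel₀ _ (by positivity)

theorem overlap_self (hn : n ≠ 0) (σ : Fin n → Bool) : overlap σ σ = 1 := by
  simp [overlap, spin_mul_self, hn]

theorem abs_overlap_le_one (σ ρ : Fin n → Bool) : |overlap σ ρ| ≤ 1 := by
  rw [overlap, abs_div, Nat.abs_cast]
  refine div_le_one_of_le₀ ((Finset.abs_sum_le_sum_abs _ _).trans_eq ?_) n.cast_nonneg
  simp [abs_mul, abs_spin]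

theorem isOverlapKernel_overlap (hn : n ≠ 0) : IsOverlapKernel (overlap (n := n)) where
  abs_le_one := abs_overlap_le_one
  self := overlap_self hn
  symm σ ρ := by simp only [overlap, mul_comm]
  sum_nonneg m τ := by
    have hsq : ∑ l, ∑ l', overlap (τ l) (τ l') = (∑ i, (∑ l, spin (τ l i)) ^ 2) / n := by
      simp only [overlap, ← Finset.sum_div, sq, Finset.sum_mul_sum]
      rw [Finset.sum_comm (s := (Finset.univ : Finset (Fin n)))]
      exact congrArg (· / (n : ℝ)) (Finset.sum_congr rfl fun l _ => Finset.sum_comm)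
    rw [hsq]
    positivity

/-- The index type of the coupling tensor of the `p`-spin glass on `n` sites. -/
abbrev Couplings (n p : ℕ) : Type := {T : Finset (Fin n) // T.card = p}

theorem card_couplings_le (n p : ℕ) : (Fintype.card (Couplings n p) : ℝ) ≤ (n : ℝ) ^ p := by
  rw [Fintype.card_finset_len, Fintype.card_fin]
  exact_mod_cast Nat.choose_le_pow n p

theorem sq_rpow_neg_half (n p : ℕ) :
    ((n : ℝ) ^ (-(((p : ℝ) + 1) / 2))) ^ 2 = ((n : ℝ) ^ (p + 1))⁻¹ := by
  rw [← Real.rpow_natCast, ← Real.rpow_mul n.cast_nonneg, ← Real.rpow_natCast,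
    ← Real.rpow_neg n.cast_nonneg]
  congr 1
  push_cast
  ring

theorem sum_sq_rpow_neg_half_le (n p : ℕ) :
    ∑ _T : Couplings n p, ((n : ℝ) ^ (-(((p : ℝ) + 1) / 2))) ^ 2 ≤ 1 / n := by
  rw [Finset.sum_const, Finset.card_univ, nsmul_eq_mul, sq_rpow_neg_half, ← div_eq_mul_inv]
  rcases n.eq_zero_or_pos with rfl | hn
  · simp
  · rw [div_le_div_iff₀ (by positivity) (by positivity), pow_succ, one_mul]
    gcongr
    exact card_couplings_le n p

/-- The coefficients of `n` times the normalized `p`-spin Hamiltonian. -/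
noncomputable def hamiltonianCoeff (n p : ℕ) (T : Couplings n p) (σ : Fin n → Bool) : ℝ :=
  n * (n : ℝ) ^ (-(((p : ℝ) + 1) / 2)) * ∏ i ∈ T.1, spin (σ i)

theorem sum_hamiltonianCoeff_mul (J : Couplings n p → ℝ) (σ : Fin n → Bool) :
    ∑ T, hamiltonianCoeff n p T σ * J T = n * pSpinValue n p J σ := by
  simp only [hamiltonianCoeff, pSpinValue, spin, Finset.mul_sum]
  exact Finset.sum_congr rfl fun T _ => by ring

theorem sum_hamiltonianCoeff_mul_le (J : Couplings n p → ℝ) (σ : Fin n → Bool) :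
    ∑ T, hamiltonianCoeff n p T σ * J T ≤ n * groundStateValue n p J := by
  rw [sum_hamiltonianCoeff_mul]
  gcongr
  exact Finset.le_sup' _ (Finset.mem_univ σ)

theorem exists_sum_hamiltonianCoeff_mul_eq (J : Couplings n p → ℝ) :
    ∃ σ, ∑ T, hamiltonianCoeff n p T σ * J T = n * groundStateValue n p J := by
  obtain ⟨σ, -, hσ⟩ := Finset.exists_mem_eq_sup' Finset.univ_nonempty (pSpinValue n p J)
  exact ⟨σ, by rw [sum_hamiltonianCoeff_mul, groundStateValue, hσ]⟩

theorem sum_hamiltonianCoeff_sq_le (σ : Fin n → Bool) :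
    ∑ T, hamiltonianCoeff n p T σ ^ 2 ≤ n := by
  have hprod (T : Finset (Fin n)) : (∏ i ∈ T, spin (σ i)) ^ 2 = 1 := by
    rw [← Finset.prod_pow]
    exact Finset.prod_eq_one fun i _ => by rw [sq, spin_mul_self]
  simp only [hamiltonianCoeff, mul_pow, hprod, mul_one, ← Finset.mul_sum]
  refine (mul_le_mul_of_nonneg_left (sum_sq_rpow_neg_half_le n p) (by positivity)).trans_eq ?_
  rw [sq, mul_assoc, mul_one_div]
  rcases eq_or_ne (n : ℝ) 0 with h | h
  · simp [h]
  · rw [div_self h, mul_one]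

/-- The covariance of `n` times the normalized `p`-spin Hamiltonian. -/
noncomputable def hamiltonianCov (n p : ℕ) (σ ρ : Fin n → Bool) : ℝ :=
  ∑ T, hamiltonianCoeff n p T σ * hamiltonianCoeff n p T ρ

theorem hamiltonianCov_eq (σ ρ : Fin n → Bool) :
    hamiltonianCov n p σ ρ = (n : ℝ) ^ 2 / (n : ℝ) ^ (p + 1) *
      ∑ T ∈ Finset.univ.powersetCard p, ∏ i ∈ T, spin (σ i) * spin (ρ i) := by
  rw [Finset.sum_subtype _ (p := fun T : Finset (Fin n) => T.card = p)
    (by simp [Finset.mem_powersetCard]), div_eq_mul_inv, ← sq_rpow_neg_half, hamiltonianCov,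
    Finset.mul_sum]
  refine Finset.sum_congr rfl fun T _ => ?_
  rw [hamiltonianCoeff, hamiltonianCoeff, Finset.prod_mul_distrib]
  ring

theorem abs_hamiltonianCov_sub_le (hn : n ≠ 0) (q : ℕ) (σ ρ : Fin n → Bool) :
    |hamiltonianCov n (q + 1) σ ρ - n * overlap σ ρ ^ (q + 1) / (q + 1).factorial| ≤ 1 := by
  have h := abs_factorial_mul_sum_powersetCard_prod_sub_le
    (z := fun i => spin (σ i) * spin (ρ i)) (by simp [abs_mul, abs_spin]) q
  rw [← natCast_mul_overlap, Fintype.card_fin] at h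
  rw [hamiltonianCov_eq]
  set E : ℝ := ∑ T ∈ Finset.univ.powersetCard (q + 1), ∏ i ∈ T, spin (σ i) * spin (ρ i)
  have hscale : (n : ℝ) ^ 2 / (n : ℝ) ^ (q + 1 + 1) * E -
      n * overlap σ ρ ^ (q + 1) / (q + 1).factorial =
        ((q + 1).factorial * E - (n * overlap σ ρ) ^ (q + 1)) /
          ((q + 1).factorial * (n : ℝ) ^ q) := by
    field_simp
    ring
  rw [hscale, abs_div, abs_of_pos (by positivity : (0 : ℝ) < (q + 1).factorial * (n : ℝ) ^ q)]
  exact div_le_one_of_le₀ h (by positivity)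

theorem coordLipschitz_groundStateValue (n p : ℕ) :
    CoordLipschitz (fun _ => (n : ℝ) ^ (-(((p : ℝ) + 1) / 2))) (groundStateValue n p) := by
  have hle (g g' : Couplings n p → ℝ) : groundStateValue n p g ≤
      groundStateValue n p g' + ∑ T, (n : ℝ) ^ (-(((p : ℝ) + 1) / 2)) * |g T - g' T| := by
    refine Finset.sup'_le _ _ fun σ _ => ?_
    refine le_trans ?_ (add_le_add_left (Finset.le_sup' (pSpinValue n p g') (Finset.mem_univ σ)) _)
    rw [pSpinValue, pSpinValue, ← Finset.mul_sum, ← mul_add, ← Finset.sum_add_distrib]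
    gcongr with T
    have hprod : |∏ i ∈ T.1, spin (σ i)| = 1 := by
      rw [Finset.abs_prod]
      exact Finset.prod_eq_one fun i _ => abs_spin (σ i)
    have habs := le_abs_self ((g T - g' T) * ∏ i ∈ T.1, spin (σ i))
    rw [abs_mul, hprod, mul_one, sub_mul] at habs
    exact sub_le_iff_le_add'.1 habs
  intro g g'
  have h := hle g' g
  simp only [abs_sub_comm (g' _)] at h
  exact abs_sub_le_iff.2 ⟨sub_le_iff_le_add'.2 (hle g g'), sub_le_iff_le_add'.2 h⟩

theorem integrable_groundStateValue (n p : ℕ) :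
    Integrable (groundStateValue n p) (stdNormal (Couplings n p)) :=
  (coordLipschitz_groundStateValue n p).integrable

/-- The expectation of the ground-state value. -/
noncomputable def meanGroundState (n p : ℕ) : ℝ :=
  ∫ J, groundStateValue n p J ∂(stdNormal (Couplings n p))

theorem meanGroundState_nonneg (hn : n ≠ 0) : 0 ≤ meanGroundState n p := by
  have hzero : ∫ J, ∑ T, hamiltonianCoeff n p T (fun _ => true) * J T
      ∂(stdNormal (Couplings n p)) = 0 := by
    rw [integral_finsetSum _ fun T _ => (integrable_coord T).const_mul _]
    simp only [integral_const_mul, integral_coord, mul_zero, Finset.sum_const_zero]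
  refine nonneg_of_mul_nonneg_right (a := (n : ℝ)) ?_ (by positivity)
  rw [← hzero, meanGroundState, ← integral_const_mul]
  exact integral_mono (integrable_linear _) ((integrable_groundStateValue n p).const_mul _)
    fun J => sum_hamiltonianCoeff_mul_le J _

theorem meanGroundState_le_two (hn : n ≠ 0) : meanGroundState n p ≤ 2 := by
  have hlower := integral_le_meanFreeEnergy_zero
    ((integrable_groundStateValue n p).const_mul (n : ℝ)) fun J =>
      (exists_sum_hamiltonianCoeff_mul_eq J).imp fun _ h => h.ge
  have hupper := meanFreeEnergy_zero_le (sum_hamiltonianCoeff_sq_le (n := n) (p := p))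
  rw [integral_const_mul] at hlower
  have hlog : Real.log (Fintype.card (Fin n → Bool)) = n * Real.log 2 := by simp
  refine le_of_mul_le_mul_left (a := (n : ℝ)) ?_ (by positivity)
  calc (n : ℝ) * meanGroundState n p ≤ n * Real.log 2 + n / 2 := by
        rw [← hlog]
        exact hlower.trans hupper
    _ ≤ n * 1 + n := by
        gcongr
        · linarith [Real.log_two_lt_d9]
        · exact half_le_self n.cast_nonneg
    _ = n * 2 := by ring

end Hamiltonian

/-! ### Comparison of a large system with independent blocks -/

section Comp

variable {S T ι : Type*} {R : S → S → ℝ}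

theorem IsOverlapKernel.comp (h : IsOverlapKernel R) (π : T → S) :
    IsOverlapKernel fun σ ρ => R (π σ) (π ρ) where
  abs_le_one σ ρ := h.abs_le_one (π σ) (π ρ)
  self σ := h.self (π σ)
  symm σ ρ := h.symm (π σ) (π ρ)
  sum_nonneg n τ := h.sum_nonneg n (π ∘ τ)

theorem IsPerturbation.comp [Fintype ι] {D : ℕ} {A : ℝ} {b : ι → S → ℝ} {deg : ι → Fin D}
    {B : ι → ℝ} (h : IsPerturbation A R b deg B) (π : T → S) :
    IsPerturbation A (fun σ ρ => R (π σ) (π ρ)) (fun i σ => b i (π σ)) deg B where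
  isOverlapKernel := h.isOverlapKernel.comp π
  abs_coeff_le i σ := h.abs_coeff_le i (π σ)
  sum_sq_le := h.sum_sq_le
  sum_degreePart_mul d σ ρ := h.sum_degreePart_mul d (π σ) (π ρ)

end Comp

section SpinPerturbation

variable {D N : ℕ} {A : ℝ}

/-- The index type of the monomials `σ_{i₀} ⋯ σ_{i_d}`, `d < D`, in `N` spins. -/
abbrev MonomialIndex (D N : ℕ) : Type := Σ d : Fin D, Fin (d + 1) → Fin N

/-- The coefficients of a Gaussian polynomial in `N` spins whose part of degree `d + 1` has
covariance `A * overlap ^ (d + 1)`. -/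
noncomputable def monomialCoeff (A : ℝ) (i : MonomialIndex D N) (σ : Fin N → Bool) : ℝ :=
  √A * (1 / √N) ^ (i.1 + 1 : ℕ) * ∏ k, spin (σ (i.2 k))

theorem sq_sqrt_mul_pow (hA : 0 ≤ A) (N m : ℕ) :
    (√A * (1 / √N) ^ m) ^ 2 = A / (N : ℝ) ^ m := by
  rw [mul_pow, Real.sq_sqrt hA, ← pow_mul, mul_comm m, pow_mul, div_pow, Real.sq_sqrt N.cast_nonneg,
    one_pow, one_div, inv_pow, div_eq_mul_inv]

theorem isPerturbation_monomialCoeff (hA : 0 ≤ A) (hN : N ≠ 0) (D : ℕ) :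
    IsPerturbation A overlap (monomialCoeff A) (fun i : MonomialIndex D N => i.1)
      fun i => √A * (1 / √N) ^ (i.1 + 1 : ℕ) where
  isOverlapKernel := isOverlapKernel_overlap hN
  abs_coeff_le i σ := by
    rw [monomialCoeff, abs_mul, Finset.abs_prod, Finset.prod_eq_one fun _ _ => abs_spin _, mul_one,
      abs_of_nonneg (by positivity)]
  sum_sq_le := by
    simp only [sq_sqrt_mul_pow hA, Fintype.sum_sigma, Finset.sum_const, Finset.card_univ,
      Fintype.card_fun, Fintype.card_fin, nsmul_eq_mul, Nat.cast_pow]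
    refine le_of_eq (Finset.sum_congr rfl fun d _ =>
      mul_div_cancel₀ A (by positivity)) |>.trans ?_
    simp
  sum_degreePart_mul d σ ρ := by
    rw [Fintype.sum_sigma, Finset.sum_eq_single d ?_ (by simp)]
    · have hterm (I : Fin (d + 1) → Fin N) :
          degreePart (monomialCoeff A) (fun i : MonomialIndex D N => i.1) d ⟨d, I⟩ σ *
            monomialCoeff A ⟨d, I⟩ ρ =
              A / (N : ℝ) ^ (d + 1 : ℕ) * ∏ k, spin (σ (I k)) * spin (ρ (I k)) := by
        rw [degreePart, if_pos rfl, ← sq_sqrt_mul_pow hA, Finset.prod_mul_distrib]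
        simp only [monomialCoeff]
        ring
      rw [Finset.sum_congr rfl fun I _ => hterm I, ← Finset.mul_sum,
        ← Fintype.sum_pow fun i => spin (σ i) * spin (ρ i), overlap, div_pow, div_mul_eq_mul_div,
        mul_div_assoc]
    · intro d' _ hd
      exact Finset.sum_eq_zero fun I _ => by rw [degreePart, if_neg hd, zero_mul]

end SpinPerturbation

section Blocks

variable {k N r : ℕ}

/-- The restriction of a configuration of `k * N + r` spins to the `j`-th block of `N` spins. -/
def block (σ : Fin (k * N + r) → Bool) (j : Fin k) (i : Fin N) : Bool :=
  σ (Fin.castAdd r (finProdFinEquiv (j, i)))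

/-- The restriction of a configuration of `k * N + r` spins to the last `r` spins. -/
def remainder (σ : Fin (k * N + r) → Bool) (i : Fin r) : Bool :=
  σ (Fin.natAdd (k * N) i)

theorem exists_block_eq (r : ℕ) (τ : Fin k → Fin N → Bool) :
    ∃ σ : Fin (k * N + r) → Bool, ∀ j, block σ j = τ j := by
  refine ⟨Fin.append (fun l => τ (finProdFinEquiv.symm l).1 (finProdFinEquiv.symm l).2)
    fun _ => true, fun j => funext fun i => ?_⟩
  rw [block, Fin.append_left, Equiv.symm_apply_apply]

theorem natCast_mul_overlap_eq_sum_block (σ ρ : Fin (k * N + r) → Bool) :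
    ((k * N + r : ℕ) : ℝ) * overlap σ ρ =
      r * overlap (remainder σ) (remainder ρ) +
        ∑ j, N * overlap (block σ j) (block ρ j) := by
  simp only [natCast_mul_overlap, Fin.sum_univ_add, add_comm (∑ _i : Fin r, _)]
  rw [← finProdFinEquiv.sum_comp, Fintype.sum_prod_type]
  rfl

theorem natCast_mul_overlap_pow_le (hM : k * N + r ≠ 0) (q : ℕ) (σ ρ : Fin (k * N + r) → Bool) :
    ((k * N + r : ℕ) : ℝ) * overlap σ ρ ^ (q + 1) ≤
      ∑ j, N * overlap (block σ j) (block ρ j) ^ (q + 1) + ((q + 3) * r +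
        (q + 2) * ∑ j, N * max (-overlap (block σ j) (block ρ j)) 0) := by
  set u : ℝ := overlap (remainder σ) (remainder ρ)
  have hu : |u| ≤ 1 := abs_overlap_le_one _ _
  have hweight : ∑ j : Option (Fin k), j.elim (r : ℝ) (fun _ => (N : ℝ)) = (k * N + r : ℕ) := by
    simp [Fintype.sum_option, add_comm]
  have h := mul_pow_le_sum_mul_pow_add (J := Option (Fin k)) (p := q + 1)
    (w := fun j => j.elim (r : ℝ) fun _ => (N : ℝ))
    (x := fun j => j.elim u fun j => overlap (block σ j) (block ρ j))
    (by rintro (_ | _) <;> simp) (by rw [hweight]; positivity)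
    (by rintro (_ | _); exacts [hu, abs_overlap_le_one _ _]) q.succ_ne_zero (y := overlap σ ρ)
    (by simpa [hweight, Fintype.sum_option] using natCast_mul_overlap_eq_sum_block σ ρ)
  rw [hweight] at h
  simp only [Fintype.sum_option, Option.elim] at h
  have hpow : u ^ (q + 1) ≤ 1 :=
    (le_abs_self _).trans ((abs_pow u _).trans_le (pow_le_one₀ (abs_nonneg u) hu))
  have hmax : max (-u) 0 ≤ 1 := max_le (by linarith [(abs_le.1 hu).1]) zero_le_one
  have hr₁ := mul_le_mul_of_nonneg_left hpow (Nat.cast_nonneg (α := ℝ) r)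
  have hr₂ := mul_le_mul_of_nonneg_left hmax (by positivity : (0 : ℝ) ≤ (q + 2) * r)
  push_cast at h ⊢
  linarith

/-- The amount by which the covariance increments of the full `p`-spin Hamiltonian may fall short
of those of the Hamiltonian with independent blocks. -/
noncomputable def covarianceDefect (q : ℕ) (σ ρ : Fin (k * N + r) → Bool) : ℝ :=
  2 * (k + 1) + (q + 3) * r + (q + 2) * N * ∑ j, max (-overlap (block σ j) (block ρ j)) 0

theorem neg_covarianceDefect_le (hk : k ≠ 0) (hN : N ≠ 0) (q : ℕ)
    (σ ρ : Fin (k * N + r) → Bool) :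
    -covarianceDefect q σ ρ ≤
      (hamiltonianCov (k * N + r) (q + 1) σ σ -
          ∑ j, hamiltonianCov N (q + 1) (block σ j) (block σ j)) -
        (hamiltonianCov (k * N + r) (q + 1) σ ρ -
          ∑ j, hamiltonianCov N (q + 1) (block σ j) (block ρ j)) := by
  have hM : k * N + r ≠ 0 := by positivity
  have hfull := fun ρ => abs_le.1 (abs_hamiltonianCov_sub_le hM q σ ρ)
  set F : ℝ := ((q + 1).factorial : ℝ)
  have hF : 1 ≤ F := Nat.one_le_cast.2 (Nat.factorial_pos _)
  have hblocks (ρ : Fin (k * N + r) → Bool) :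
      |∑ j, hamiltonianCov N (q + 1) (block σ j) (block ρ j) -
        (∑ j, N * overlap (block σ j) (block ρ j) ^ (q + 1)) / F| ≤ k := by
    rw [Finset.sum_div, ← Finset.sum_sub_distrib]
    refine (Finset.abs_sum_le_sum_abs _ _).trans ((Finset.sum_le_sum fun j _ =>
      abs_hamiltonianCov_sub_le hN q (block σ j) (block ρ j)).trans_eq ?_)
    simp
  have hself₁ := (hfull σ).1
  have hself₂ := (abs_le.1 (hblocks σ)).2
  simp only [overlap_self hM, overlap_self hN, one_pow, mul_one, Finset.sum_const,
    Finset.card_univ, Fintype.card_fin, nsmul_eq_mul] at hself₁ hself₂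
  have hdiag : (k * N : ℝ) / F ≤ ((k * N + r : ℕ) : ℝ) / F := by
    gcongr
    push_cast
    exact le_add_of_nonneg_right r.cast_nonneg
  have hpow : ((k * N + r : ℕ) : ℝ) * overlap σ ρ ^ (q + 1) / F ≤
      (∑ j, N * overlap (block σ j) (block ρ j) ^ (q + 1)) / F +
        ((q + 3) * r + (q + 2) * ∑ j, N * max (-overlap (block σ j) (block ρ j)) 0) := by
    refine (div_le_div_of_nonneg_right (natCast_mul_overlap_pow_le hM q σ ρ)
      (zero_le_one.trans hF)).trans ?_
    rw [add_div]
    gcongr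
    exact div_le_self (by positivity) hF
  rw [covarianceDefect, mul_assoc ((q : ℝ) + 2), Finset.mul_sum]
  linarith [(hfull ρ).2, (abs_le.1 (hblocks ρ)).1]

end Blocks

section Superadditivity

variable {k N r p D K : ℕ} {β A : ℝ}

theorem integral_groundStateValue_comp {ι : Type*} [Fintype ι] {n : ℕ} {e : Couplings n p → ι}
    (he : Function.Injective e) :
    ∫ g, groundStateValue n p (fun T => g (e T)) ∂(stdNormal ι) = meanGroundState n p := by
  have hmp := measurePreserving_pi_comp_of_injective (gaussianReal 0 1) he
  rw [meanGroundState, stdNormal, stdNormal, ← hmp.map_eq, integral_map hmp.measurable.aemeasurable]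
  exact (coordLipschitz_groundStateValue n p).continuous.aestronglyMeasurable

theorem integrable_groundStateValue_comp {ι : Type*} [Fintype ι] {n : ℕ} {e : Couplings n p → ι}
    (he : Function.Injective e) :
    Integrable (fun g => groundStateValue n p fun T => g (e T)) (stdNormal ι) :=
  (measurePreserving_pi_comp_of_injective _ he).integrable_comp_of_integrable
    (integrable_groundStateValue n p)

/-- The coefficients of `β` times the extensive Hamiltonian of the whole system, as a Gaussian
field also carrying independent couplings for the blocks. -/
noncomputable def systemCoeff (k N r p : ℕ) (β : ℝ) :
    Couplings (k * N + r) p ⊕ Fin k × Couplings N p → (Fin (k * N + r) → Bool) → ℝ :=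
  Sum.elim (fun T σ => β * hamiltonianCoeff (k * N + r) p T σ) 0

/-- The coefficients of `β` times the sum of the extensive Hamiltonians of `k` independent blocks
of size `N`, in the same Gaussian variables as `systemCoeff`. -/
noncomputable def blocksCoeff (k N r p : ℕ) (β : ℝ) :
    Couplings (k * N + r) p ⊕ Fin k × Couplings N p → (Fin (k * N + r) → Bool) → ℝ :=
  Sum.elim 0 fun i σ => β * hamiltonianCoeff N p i.2 (block σ i.1)

/-- The coefficients of the perturbation acting on the `j`-th block, its degrees scaled by the
grid point `y`. -/
noncomputable def blockPerturbation (A : ℝ) (j : Fin k) (y : Fin D → Fin K) :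
    MonomialIndex D N → (Fin (k * N + r) → Bool) → ℝ :=
  scaleDegrees (fun i σ => monomialCoeff A i (block σ j)) Sigma.fst (gridPoint y)

/-- The coefficients of independent perturbations of all the blocks. -/
noncomputable def perturbation (A : ℝ) (x : Fin k → Fin D → Fin K)
    (i : Fin k × MonomialIndex D N) : (Fin (k * N + r) → Bool) → ℝ :=
  blockPerturbation A i.1 (x i.1) i.2

theorem systemCoeff_mul_blocksCoeff (i : Couplings (k * N + r) p ⊕ Fin k × Couplings N p)
    (σ ρ : Fin (k * N + r) → Bool) :
    systemCoeff k N r p β i σ * blocksCoeff k N r p β i ρ = 0 := by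
  rcases i with _ | _ <;> simp [systemCoeff, blocksCoeff]

theorem sum_systemCoeff_mul (σ ρ : Fin (k * N + r) → Bool) :
    ∑ i, systemCoeff k N r p β i σ * systemCoeff k N r p β i ρ =
      β ^ 2 * hamiltonianCov (k * N + r) p σ ρ := by
  simp only [systemCoeff, Fintype.sum_sum_type, Sum.elim_inl, Sum.elim_inr, Pi.zero_apply,
    mul_zero, Finset.sum_const_zero, add_zero, hamiltonianCov, Finset.mul_sum]
  exact Finset.sum_congr rfl fun T _ => by ring

theorem sum_blocksCoeff_mul (σ ρ : Fin (k * N + r) → Bool) :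
    ∑ i, blocksCoeff k N r p β i σ * blocksCoeff k N r p β i ρ =
      β ^ 2 * ∑ j, hamiltonianCov N p (block σ j) (block ρ j) := by
  simp only [blocksCoeff, Fintype.sum_sum_type, Fintype.sum_prod_type, Sum.elim_inl, Sum.elim_inr,
    Pi.zero_apply, mul_zero, Finset.sum_const_zero, zero_add, hamiltonianCov, Finset.mul_sum]
  exact Finset.sum_congr rfl fun j _ => Finset.sum_congr rfl fun T _ => by ring

theorem sum_perturbation_sq_le (hA : 0 ≤ A) (hN : N ≠ 0) (hDA : D * A ≤ N)
    (x : Fin k → Fin D → Fin K) (σ : Fin (k * N + r) → Bool) :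
    ∑ i : Fin k × MonomialIndex D N, perturbation A x i σ ^ 2 ≤ 4 * ((k * N + r : ℕ) : ℝ) := by
  have hpert := isPerturbation_monomialCoeff hA hN D
  have hblock (j : Fin k) :
      ∑ i : MonomialIndex D N, blockPerturbation A j (x j) i σ ^ 2 ≤ 4 * N :=
    calc ∑ i : MonomialIndex D N, blockPerturbation A j (x j) i σ ^ 2
        ≤ ∑ i : MonomialIndex D N, (2 * (√A * (1 / √N) ^ (i.1 + 1 : ℕ))) ^ 2 :=
          Finset.sum_le_sum fun i _ => sq_le_sq.2 <|
            ((hpert.comp fun σ => block σ j).abs_scaleDegrees_le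
              (fun d => zero_le_one.trans (one_le_gridPoint (x j) d)) (gridPoint_le_two (x j))
              i σ).trans (le_abs_self _)
      _ ≤ 4 * (D * A) := by
          simp only [mul_pow (2 : ℝ), ← Finset.mul_sum]
          linarith [hpert.sum_sq_le]
      _ ≤ 4 * N := by linarith
  rw [Fintype.sum_prod_type]
  calc ∑ j, ∑ i, perturbation A x (j, i) σ ^ 2 ≤ ∑ _j : Fin k, 4 * (N : ℝ) :=
        Finset.sum_le_sum fun j _ => hblock j
    _ = 4 * (k * N) := by simp; ring
    _ ≤ 4 * ((k * N + r : ℕ) : ℝ) := by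
        push_cast
        linarith [(Nat.cast_nonneg r : (0 : ℝ) ≤ r)]

theorem sumElim_eq_add {κ ι S : Type*} (a : κ → S → ℝ) (f : ι → S → ℝ) :
    Sum.elim a f = fun i σ =>
      (Sum.elim a 0 : κ ⊕ ι → S → ℝ) i σ + (Sum.elim 0 f : κ ⊕ ι → S → ℝ) i σ := by
  funext i σ
  rcases i with _ | _ <;> simp

theorem meanFreeEnergy_systemCoeff_le (hβ : 0 ≤ β) {ι : Type*} [Fintype ι]
    {f : ι → (Fin (k * N + r) → Bool) → ℝ}
    (hf : ∀ σ, ∑ i, f i σ ^ 2 ≤ 4 * ((k * N + r : ℕ) : ℝ)) :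
    meanFreeEnergy (fun _ => 0) (Sum.elim (systemCoeff k N r p β) f) ≤
      β * (k * N + r : ℕ) * meanGroundState (k * N + r) p + 3 * (k * N + r : ℕ) := by
  have hinj : Function.Injective fun T : Couplings (k * N + r) p =>
      (.inl (.inl T) : (Couplings (k * N + r) p ⊕ Fin k × Couplings N p) ⊕ ι) :=
    Sum.inl_injective.comp Sum.inl_injective
  have hsplit := meanFreeEnergy_add_le_integral_add (f := Sum.elim 0 f)
    (a := Sum.elim (systemCoeff k N r p β) (0 : ι → (Fin (k * N + r) → Bool) → ℝ))
    ((integrable_groundStateValue_comp hinj).const_mul (β * (k * N + r : ℕ))) (fun g σ => by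
      have h := mul_le_mul_of_nonneg_left
        (sum_hamiltonianCoeff_mul_le (fun T => g (.inl (.inl T))) σ) hβ
      simpa [systemCoeff, Finset.mul_sum, mul_assoc] using h) fun _ => 0
  have hnoise := meanFreeEnergy_zero_le (v := 4 * (k * N + r : ℕ))
    (f := (Sum.elim 0 f :
      (Couplings (k * N + r) p ⊕ Fin k × Couplings N p) ⊕ ι → (Fin (k * N + r) → Bool) → ℝ))
    fun σ => by simpa using hf σ
  have hlog : Real.log (Fintype.card (Fin (k * N + r) → Bool)) ≤ (k * N + r : ℕ) := by
    simpa using mul_le_of_le_one_right (Nat.cast_nonneg (α := ℝ) (k * N + r))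
      (Real.log_two_lt_d9.le.trans (by norm_num))
  rw [integral_const_mul, integral_groundStateValue_comp hinj] at hsplit
  rw [sumElim_eq_add]
  linarith

theorem le_meanFreeEnergy_blocksCoeff (β : ℝ) {ι : Type*} [Fintype ι]
    (f : ι → (Fin (k * N + r) → Bool) → ℝ) :
    β * (k * N) * meanGroundState N p ≤
      meanFreeEnergy (fun _ => 0) (Sum.elim (blocksCoeff k N r p β) f) := by
  have hinj (j : Fin k) : Function.Injective fun T : Couplings N p =>
      (.inl (.inr (j, T)) : (Couplings (k * N + r) p ⊕ Fin k × Couplings N p) ⊕ ι) :=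
    Sum.inl_injective.comp (Sum.inr_injective.comp (Prod.mk_right_injective j))
  have h_int (j : Fin k) := (integrable_groundStateValue_comp (hinj j)).const_mul (β * N)
  have hmean : ∫ g, ∑ j, β * N * groundStateValue N p (fun T => g (.inl (.inr (j, T))))
      ∂(stdNormal ((Couplings (k * N + r) p ⊕ Fin k × Couplings N p) ⊕ ι)) =
        β * (k * N) * meanGroundState N p := by
    rw [integral_finsetSum _ fun j _ => h_int j]
    simp only [integral_const_mul, integral_groundStateValue_comp (hinj _), Finset.sum_const,
      Finset.card_univ, Fintype.card_fin, nsmul_eq_mul]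
    ring
  have horth := meanFreeEnergy_le_add_of_orthogonal (fun _ => 0)
    (a := Sum.elim (blocksCoeff k N r p β) (0 : ι → (Fin (k * N + r) → Bool) → ℝ))
    (f := Sum.elim 0 f) (by rintro (_ | _) <;> simp)
  rw [sumElim_eq_add, ← hmean]
  refine (integral_le_meanFreeEnergy_zero (integrable_finsetSum _ fun j _ => h_int j)
    fun g => ?_).trans horth
  choose τ hτ using fun j : Fin k =>
    exists_sum_hamiltonianCoeff_mul_eq fun T : Couplings N p => g (.inl (.inr (j, T)))
  obtain ⟨σ, hσ⟩ := exists_block_eq r τ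
  refine ⟨σ, le_of_eq ?_⟩
  simp [blocksCoeff, Fintype.sum_prod_type, hσ, mul_assoc, ← hτ, Finset.mul_sum]

theorem sum_quenchedPairAvg_covarianceDefect_le {q : ℕ} {ε : ℝ} (hK : 0 < K)
    (hpos : ∀ (c : (Fin (k * N + r) → Bool) → ℝ) (j : Fin k), ∑ y : Fin D → Fin K,
      quenchedPairAvg c (blockPerturbation A j y)
          (fun σ ρ => max (-overlap (block σ j) (block ρ j)) 0) ≤
        Fintype.card (Fin D → Fin K) * ε)
    (c : (Fin (k * N + r) → Bool) → ℝ)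
    (a : Couplings (k * N + r) p ⊕ Fin k × Couplings N p → (Fin (k * N + r) → Bool) → ℝ) :
    ∑ x : Fin k → Fin D → Fin K,
        quenchedPairAvg c (Sum.elim a (perturbation A x)) (covarianceDefect q) ≤
      Fintype.card (Fin k → Fin D → Fin K) *
        (2 * (k + 1) + (q + 3) * r + (q + 2) * N * (k * ε)) := by
  have : Nonempty (Fin K) := ⟨⟨0, hK⟩⟩
  have hblock (j : Fin k) : ∑ x : Fin k → Fin D → Fin K,
      quenchedPairAvg c (Sum.elim a (perturbation A x))
          (fun σ ρ => max (-overlap (block σ j) (block ρ j)) 0) ≤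
        Fintype.card (Fin k → Fin D → Fin K) * ε :=
    sum_quenchedPairAvg_blocks_le (blockPerturbation A) j (fun c => hpos c j) a c
  have hblocks := Finset.sum_le_sum fun j (_ : j ∈ Finset.univ) => hblock j
  rw [Finset.sum_comm, Finset.sum_const, Finset.card_univ, Fintype.card_fin, nsmul_eq_mul]
    at hblocks
  have hscaled := mul_le_mul_of_nonneg_left hblocks (by positivity : (0 : ℝ) ≤ (q + 2) * N)
  unfold covarianceDefect
  simp only [quenchedPairAvg_add, quenchedPairAvg_const, quenchedPairAvg_const_mul,
    quenchedPairAvg_sum, Finset.sum_add_distrib, Finset.sum_const, Finset.card_univ, nsmul_eq_mul,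
    ← Finset.mul_sum]
  linarith

theorem mul_meanGroundState_le {q : ℕ} {ε : ℝ} (hk : k ≠ 0) (hN : N ≠ 0) (hK : 0 < K)
    (hA : 0 ≤ A) (hDA : D * A ≤ N) (hβ : 0 ≤ β) (hε : 0 ≤ ε)
    (hpos : ∀ (c : (Fin (k * N + r) → Bool) → ℝ) (j : Fin k), ∑ y : Fin D → Fin K,
      quenchedPairAvg c (blockPerturbation A j y)
          (fun σ ρ => max (-overlap (block σ j) (block ρ j)) 0) ≤
        Fintype.card (Fin D → Fin K) * ε) :
    β * (k * N) * meanGroundState N (q + 1) ≤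
      β * (k * N + r : ℕ) * meanGroundState (k * N + r) (q + 1) + 3 * (k * N + r : ℕ) +
        2 * β ^ 2 * (2 * (k + 1) + (q + 3) * r + (q + 2) * N * (k * ε)) := by
  have : Nonempty (Fin K) := ⟨⟨0, hK⟩⟩
  set defect : ℝ := 2 * (k + 1) + (q + 3) * r + (q + 2) * N * (k * ε)
  set X := Fin k → Fin D → Fin K
  have hinterp := sum_meanFreeEnergy_sumElim_le (fun _ => 0)
    (f := fun x : X => perturbation (N := N) (r := r) A x)
    (systemCoeff_mul_blocksCoeff (p := q + 1) (β := β))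
    (k := fun σ ρ => β ^ 2 * covarianceDefect q σ ρ)
    (C := β ^ 2 * (Fintype.card X * defect)) (by positivity)
    (fun σ ρ => by
      simp only [sum_systemCoeff_mul, sum_blocksCoeff_mul]
      linarith [mul_le_mul_of_nonneg_left (neg_covarianceDefect_le hk hN q σ ρ) (sq_nonneg β)])
    fun a => by
      simp only [quenchedPairAvg_const_mul, ← Finset.mul_sum]
      exact mul_le_mul_of_nonneg_left (sum_quenchedPairAvg_covarianceDefect_le hK hpos _ a)
        (sq_nonneg β)
  have hlower := Finset.sum_le_sum fun (x : X) (_ : x ∈ Finset.univ) =>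
    le_meanFreeEnergy_blocksCoeff (N := N) (p := q + 1) β (perturbation (r := r) A x)
  have hupper := Finset.sum_le_sum fun (x : X) (_ : x ∈ Finset.univ) =>
    meanFreeEnergy_systemCoeff_le (p := q + 1) hβ
      (sum_perturbation_sq_le (r := r) hA hN hDA x)
  rw [Finset.sum_const, Finset.card_univ, nsmul_eq_mul] at hlower hupper
  refine le_of_mul_le_mul_left ?_ (Nat.cast_pos.2 Fintype.card_pos : (0 : ℝ) < Fintype.card X)
  linarith

theorem eventually_mul_meanGroundState_le (q : ℕ) {ε : ℝ} (hε : 0 < ε) :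
    ∀ᶠ N : ℕ in atTop, ∀ k r : ℕ, k ≠ 0 → ∀ β : ℝ, 0 ≤ β →
      β * (k * N) * meanGroundState N (q + 1) ≤
        β * (k * N + r : ℕ) * meanGroundState (k * N + r) (q + 1) + 3 * (k * N + r : ℕ) +
          2 * β ^ 2 * (2 * (k + 1) + (q + 3) * r + (q + 2) * N * (k * ε)) := by
  obtain ⟨D, K, hK, hblock⟩ := exists_sum_quenchedPairAvg_max_neg_le.{0, 0} hε
  have hscale : Tendsto (fun N : ℕ => (N : ℝ) / (D + 1)) atTop atTop :=
    tendsto_natCast_atTop_atTop.atTop_div_const (by positivity)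
  filter_upwards [hscale.eventually hblock, eventually_ne_atTop 0] with N hN hN₀ k r hk β hβ
  have hA : (0 : ℝ) ≤ N / (D + 1) := by positivity
  have hDA : D * ((N : ℝ) / (D + 1)) ≤ N := by
    rw [mul_div_left_comm]
    exact mul_le_of_le_one_right N.cast_nonneg (div_le_one_of_le₀ (by linarith) (by positivity))
  exact mul_meanGroundState_le hk hN₀ hK hA hDA hβ hε.le fun c j =>
    hN _ _ _ _ _ _ ((isPerturbation_monomialCoeff hA hN₀ D).comp fun σ => block σ j) c

theorem meanGroundState_le_add {q : ℕ} {ε : ℝ} {M : ℕ} (hβ : 0 < β) (hε : 0 ≤ ε) (hN : N ≠ 0)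
    (hNM : N ≤ M)
    (h : ∀ k r : ℕ, k ≠ 0 → β * (k * N) * meanGroundState N (q + 1) ≤
      β * (k * N + r : ℕ) * meanGroundState (k * N + r) (q + 1) + 3 * (k * N + r : ℕ) +
        2 * β ^ 2 * (2 * (k + 1) + (q + 3) * r + (q + 2) * N * (k * ε))) :
    meanGroundState N (q + 1) ≤ meanGroundState M (q + 1) +
      (3 / β + 8 * β / N + 2 * β * (q + 2) * ε + (2 + 2 * β * (q + 3)) * N / M) := by
  have hN' : (0 : ℝ) < N := by positivity
  have hM' : (0 : ℝ) < M := hN'.trans_le (Nat.cast_le.2 hNM)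
  have hk : M / N ≠ 0 := (Nat.div_pos hNM (Nat.pos_of_ne_zero hN)).ne'
  have hk' : (1 : ℝ) ≤ (M / N : ℕ) := Nat.one_le_cast.2 (Nat.one_le_iff_ne_zero.2 hk)
  have hr : ((M % N : ℕ) : ℝ) ≤ N := Nat.cast_le.2 (Nat.mod_lt M (Nat.pos_of_ne_zero hN)).le
  have hsplit : ((M / N : ℕ) : ℝ) * N + (M % N : ℕ) = M := by exact_mod_cast Nat.div_add_mod' M N
  have hmain := h (M / N) (M % N) hk
  rw [Nat.div_add_mod'] at hmain
  generalize M / N = k at *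
  generalize M % N = r at *
  have hkN : (k : ℝ) * N ≤ M := by linarith [(Nat.cast_nonneg r : (0 : ℝ) ≤ r)]
  have hkM : (k : ℝ) ≤ M / N := (le_div_iff₀ hN').2 hkN
  have hrest : (r : ℝ) * meanGroundState N (q + 1) ≤ N * 2 :=
    mul_le_mul hr (meanGroundState_le_two hN) (meanGroundState_nonneg hN) hN'.le
  have hdefect : 2 * ((k : ℝ) + 1) + (q + 3) * r + (q + 2) * N * (k * ε) ≤
      4 * (M / N) + (q + 3) * N + (q + 2) * ε * M := by
    have h₁ := mul_le_mul_of_nonneg_left hr (by positivity : (0 : ℝ) ≤ q + 3)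
    have h₂ := mul_le_mul_of_nonneg_left hkN (by positivity : (0 : ℝ) ≤ (q + 2) * ε)
    linarith
  refine le_of_mul_le_mul_left ?_ (mul_pos hβ hM')
  calc β * M * meanGroundState N (q + 1)
      = β * (k * N) * meanGroundState N (q + 1) + β * (r * meanGroundState N (q + 1)) := by
        rw [← hsplit]; ring
    _ ≤ β * M * meanGroundState M (q + 1) + 3 * M +
          2 * β ^ 2 * (4 * (M / N) + (q + 3) * N + (q + 2) * ε * M) + β * (N * 2) := by
        gcongr
        exact hmain.trans (by gcongr)
    _ = _ := by field_simp; ring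

theorem eventually_eventually_meanGroundState_sub_le (q : ℕ) {δ : ℝ} (hδ : 0 < δ) :
    ∀ᶠ N in atTop, ∀ᶠ M in atTop,
      meanGroundState N (q + 1) - δ ≤ meanGroundState M (q + 1) := by
  set β : ℝ := 12 / δ with hβdef
  have hβ : 0 < β := by positivity
  set ε : ℝ := δ / (8 * β * (q + 2)) with hεdef
  have hε : 0 < ε := by positivity
  have hsmall (v : ℝ) : ∀ᶠ n : ℕ in atTop, v / n < δ / 4 :=
    (tendsto_const_div_atTop_nhds_zero_nat v).eventually_lt_const (by positivity)
  filter_upwards [eventually_mul_meanGroundState_le q hε, eventually_ne_atTop 0, hsmall (8 * β)]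
    with N hN hN₀ hNβ
  filter_upwards [eventually_ge_atTop N, hsmall ((2 + 2 * β * (q + 3)) * N)] with M hM hMβ
  have hle := meanGroundState_le_add hβ hε.le hN₀ hM fun k r hk => hN k r hk β hβ.le
  have hβδ : 3 / β = δ / 4 := by rw [hβdef]; field_simp; norm_num
  have hεδ : 2 * β * (q + 2) * ε = δ / 4 := by rw [hεdef]; field_simp; norm_num
  linarith

theorem exists_tendsto_meanGroundState (q : ℕ) :
    ∃ η, Tendsto (fun n => meanGroundState n (q + 1)) atTop (𝓝 η) := by
  set u : ℕ → ℝ := fun n => meanGroundState n (q + 1)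
  have habove : IsBoundedUnder (· ≤ ·) atTop u :=
    isBoundedUnder_of_eventually_le <|
      (eventually_ne_atTop 0).mono fun _ hn => meanGroundState_le_two hn
  have hbelow : IsBoundedUnder (· ≥ ·) atTop u :=
    isBoundedUnder_of_eventually_ge <|
      (eventually_ne_atTop 0).mono fun _ hn => meanGroundState_nonneg hn
  refine ⟨liminf u atTop, tendsto_of_le_liminf_of_limsup_le le_rfl ?_ habove hbelow⟩
  refine le_of_forall_pos_le_add fun δ hδ => limsup_le_of_le hbelow.isCoboundedUnder_le ?_
  filter_upwards [eventually_eventually_meanGroundState_sub_le q hδ] with N hN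
  linarith [le_liminf_of_le habove.isCoboundedUnder_ge hN]

theorem measure_abs_groundStateValue_sub_le (n p : ℕ) {t : ℝ} (ht : 0 < t) :
    pSpinMeasure n p {J | t ≤ |groundStateValue n p J - meanGroundState n p|} ≤
      ENNReal.ofReal (1 / n / t ^ 2) := by
  have hlip := coordLipschitz_groundStateValue n p
  refine (meas_ge_le_variance_div_sq hlip.memLp ht).trans (ENNReal.ofReal_le_ofReal ?_)
  gcongr
  exact hlip.variance_stdNormal_le.trans (sum_sq_rpow_neg_half_le n p)

theorem tendsto_measure_abs_groundStateValue_sub {p : ℕ} {η ε : ℝ} (hε : 0 < ε)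
    (hη : Tendsto (fun n => meanGroundState n p) atTop (𝓝 η)) :
    Tendsto (fun n : ℕ => pSpinMeasure n p {J | ε < |groundStateValue n p J - η|})
      atTop (𝓝 0) := by
  have hbound : Tendsto (fun n : ℕ => ENNReal.ofReal (1 / n / (ε / 2) ^ 2)) atTop (𝓝 0) := by
    simpa using ENNReal.tendsto_ofReal
      ((tendsto_one_div_atTop_nhds_zero_nat (𝕜 := ℝ)).div_const ((ε / 2) ^ 2))
  refine tendsto_of_tendsto_of_tendsto_of_le_of_le' tendsto_const_nhds hbound
    (.of_forall fun n => zero_le) ?_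
  filter_upwards [Metric.tendsto_nhds.1 hη (ε / 2) (half_pos hε)] with n hn
  refine (measure_mono fun J hJ => ?_).trans
    (measure_abs_groundStateValue_sub_le n p (half_pos hε))
  have htri := abs_sub_le (groundStateValue n p J) (meanGroundState n p) η
  rw [Real.dist_eq] at hn
  simp only [Set.mem_ofPred_eq] at hJ ⊢
  linarith

end Superadditivity

end PSpin

/-- existence of the deterministic limit of the ground-state value of
the `p`-spin glass, via the Parisi formula: for every `p ≥ 2` there is a constant
`η_{p,OPT}` such that `η_{p,n} → η_{p,OPT}` in probability as `n → ∞`. -/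
theorem ground_state_value_converges_in_probability (p : ℕ) (hp : 2 ≤ p) :
    ∃ η : ℝ, ∀ ε : ℝ, 0 < ε →
      Tendsto
        (fun n : ℕ =>
          pSpinMeasure n p {J | ε < |groundStateValue n p J - η|})
        atTop (𝓝 0) := by
  obtain ⟨q, rfl⟩ := Nat.exists_eq_add_one.2 (Nat.zero_lt_of_lt hp)
  obtain ⟨η, hη⟩ := PSpin.exists_tendsto_meanGroundState q
  exact ⟨η, fun ε hε => PSpin.tendsto_measure_abs_groundStateValue_sub hε hη⟩
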